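/- arXiv:2105.03805 — 9 statements merged into one kernel-verified Lean document; each statement's English description precedes it below -/
import Mathlib

section
/- Let λ ≥ 0, μ₁ ∈ ℝ and let n ≥ 2 be an integer. Then there exists a unique function h that is real-analytic on [0,∞) and satisfies 2r²h(r)h''(r) = (n-1)h(r)(h(r)-1) + r h'(r)(r h'(r) - λr - (n-1)) with h(r) > 0 for all r > 0, together with h(0) = 1 and h'(0) = μ₁. -/
open Set Filter Topology

/-- `h` is a real-analytic solution on `[0,∞)` of
`2r²h h'' = (n-1)h(h-1) + r h'(r h' - λr - (n-1))`, `h > 0` on `(0,∞)`,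
with `h(0) = 1` and `h'(0) = μ₁`. -/
def IsAnalyticSol (n : ℕ) (lam μ₁ : ℝ) (h : ℝ → ℝ) : Prop :=
  AnalyticOn ℝ h (Set.Ici 0) ∧
  (∀ r : ℝ, 0 < r →
    2 * r ^ 2 * h r * deriv (deriv h) r =
      ((n : ℝ) - 1) * h r * (h r - 1) +
        r * deriv h r * (r * deriv h r - lam * r - ((n : ℝ) - 1)) ∧ 0 < h r) ∧
  h 0 = 1 ∧ derivWithin h (Set.Ici 0) 0 = μ₁

set_option linter.unusedSectionVars false

section PS
variable {E : Type*} [NormedAddCommGroup E] [NormedSpace ℝ E]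

lemma ps_summable (a : ℕ → E) (C M x : ℝ) (hC : ∀ n, ‖a n‖ ≤ C * M ^ n) (hM : 0 < M)
    (hx : |x| * M < 1) : Summable (fun n => ‖x ^ n • a n‖) := by
  have h1 : Summable (fun n : ℕ => C * (|x| * M) ^ n) :=
    (summable_geometric_of_lt_one (by positivity) hx).mul_left C
  refine Summable.of_nonneg_of_le (fun n => norm_nonneg _) (fun n => ?_) h1
  rw [norm_smul, norm_pow, Real.norm_eq_abs, mul_pow]
  calc |x| ^ n * ‖a n‖ ≤ |x| ^ n * (C * M ^ n) := by gcongr; exact hC n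
    _ = _ := by ring

variable [CompleteSpace E]

lemma ps_main (a : ℕ → E) (C M : ℝ) (hC : ∀ n, ‖a n‖ ≤ C * M ^ n) (hM : 0 < M) :
    ∃ f f' : ℝ → E, ∀ x, |x| * M < 1 →
      HasSum (fun n => x ^ n • a n) (f x) ∧
      HasSum (fun n : ℕ => x ^ n • ((n + 1 : ℝ) • a (n + 1))) (f' x) ∧
      HasDerivAt f (f' x) x ∧ AnalyticAt ℝ f x := by
  have hC0 : 0 ≤ C := by simpa using (norm_nonneg _).trans (hC 0)
  refine ⟨fun x => ∑' n, x ^ n • a n, fun x => ∑' n : ℕ, x ^ n • ((n + 1 : ℝ) • a (n + 1)), ?_⟩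
  intro x hx
  have hs := ps_summable a C M x hC hM hx
  obtain ⟨ρ, hρ1, hρ2⟩ : ∃ ρ, |x| < ρ ∧ ρ * M < 1 := by
    have : |x| < 1 / M := by rwa [lt_div_iff₀ hM]
    obtain ⟨ρ, h1, h2⟩ := exists_between this
    exact ⟨ρ, h1, by rwa [lt_div_iff₀ hM] at h2⟩
  have hρ : 0 < ρ := (abs_nonneg _).trans_lt hρ1
  have hsu : Summable (fun n : ℕ => C * M * ((n + 1 : ℝ) * (ρ * M) ^ n)) := by
    have h1 := summable_pow_mul_geometric_of_norm_lt_one (R := ℝ) 1 (r := ρ * M)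
      (by rw [Real.norm_eq_abs, abs_of_pos (by positivity)]; exact hρ2)
    have h2 := summable_geometric_of_lt_one (r := ρ * M) (by positivity) hρ2
    refine ((h1.add h2).mul_left (C * M)).congr fun n => ?_
    ring
  have hb : ∀ (n : ℕ) (y : ℝ), |y| ≤ ρ →
      ‖y ^ n • ((n + 1 : ℝ) • a (n + 1))‖ ≤ C * M * ((n + 1 : ℝ) * (ρ * M) ^ n) := by
    intro n y hy
    rw [norm_smul, norm_smul, norm_pow, Real.norm_eq_abs, Real.norm_eq_abs,
      abs_of_nonneg (by positivity : (0 : ℝ) ≤ n + 1)]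
    calc |y| ^ n * ((n + 1) * ‖a (n + 1)‖) ≤ ρ ^ n * ((n + 1) * (C * M ^ (n + 1))) := by
          gcongr; exact hC _
      _ = _ := by ring
  have hs' : Summable (fun n : ℕ => x ^ n • ((n + 1 : ℝ) • a (n + 1))) :=
    Summable.of_norm_bounded hsu (fun n => hb n x hρ1.le)
  refine ⟨hs.of_norm.hasSum, hs'.hasSum, ?_, ?_⟩
  · have hu : Summable (fun n : ℕ => if n = 0 then 0 else
        C * M * (((n - 1 : ℕ) + 1 : ℝ) * (ρ * M) ^ (n - 1))) := by
      rw [← summable_nat_add_iff 1]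
      simpa using hsu
    have key := hasDerivAt_tsum_of_isPreconnected (t := Metric.ball (0 : ℝ) ρ)
      (g := fun n y => y ^ n • a n) (g' := fun n y => ((n : ℝ) * y ^ (n - 1)) • a n)
      (y₀ := x) (y := x) hu Metric.isOpen_ball (convex_ball _ _).isPreconnected
      (fun n y _ => (hasDerivAt_pow n y).smul_const (a n))
      (by
        intro n y hy
        have hy' : |y| ≤ ρ := by simpa using (mem_ball_zero_iff.1 hy).le
        rcases n with _ | n
        · simp
        · have := hb n y hy'
          simp only [smul_smul] at this
          simpa [mul_comm] using this)
      (by simpa using hρ1) hs.of_norm (by simpa using hρ1)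
    convert key using 1
    have h3 : HasSum (fun n : ℕ => (((n + 1 : ℕ) : ℝ) * x ^ (n + 1 - 1)) • a (n + 1))
      (∑' n : ℕ, x ^ n • ((n + 1 : ℝ) • a (n + 1))) := by
      convert hs'.hasSum using 2 with n
      simp [smul_smul, mul_comm]
    have h4 := (hasSum_nat_add_iff (f := fun n : ℕ => ((n : ℝ) * x ^ (n - 1)) • a n) 1).1 h3
    simpa using h4.tsum_eq.symm
  · let p : FormalMultilinearSeries ℝ ℝ E := fun n => ContinuousMultilinearMap.mkPiRing ℝ (Fin n) (a n)
    have hr : ENNReal.ofReal ρ ≤ p.radius := by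
      have := p.le_radius_of_bound (r := ⟨ρ, hρ.le⟩) C (fun n => by
        simp only [p, ContinuousMultilinearMap.norm_mkPiRing]
        calc ‖a n‖ * ρ ^ n ≤ C * M ^ n * ρ ^ n := by gcongr; exact hC n
          _ = C * (ρ * M) ^ n := by ring
          _ ≤ C * 1 := by gcongr; exact pow_le_one₀ (by positivity) hρ2.le
          _ = C := mul_one _)
      convert this
      rw [ENNReal.ofReal]; congr 1; ext; exact Real.coe_toNNReal _ hρ.le
    have hps := (p.hasFPowerSeriesOnBall ((ENNReal.ofReal_pos.2 hρ).trans_le hr)).analyticAt_of_mem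
      (y := x) (by
        refine Metric.eball_subset_eball hr ?_
        rw [Metric.eball_ofReal]; simpa using hρ1)
    convert hps using 1
    ext y
    simp [FormalMultilinearSeries.sum, p]

lemma ps_conv (B : E →L[ℝ] E →L[ℝ] E) (u : ℕ → E) (s : E) (hs : HasSum u s)
    (hn : Summable fun n => ‖u n‖) :
    HasSum (fun n => ∑ ij ∈ Finset.HasAntidiagonal.antidiagonal n, B (u ij.1) (u ij.2)) (B s s) := by
  have hF : Summable (fun p : ℕ × ℕ => B (u p.1) (u p.2)) := by
    have h1 : Summable (fun p : ℕ × ℕ => ‖B‖ * (‖u p.1‖ * ‖u p.2‖)) :=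
      (hn.mul_of_nonneg hn (fun _ => norm_nonneg _) (fun _ => norm_nonneg _)).mul_left _
    refine Summable.of_norm_bounded h1 (fun p => ?_)
    rw [← mul_assoc]; exact B.le_opNorm₂ _ _
  have h2 := hF.hasSum.prod_fiberwise (fun i => (B (u i)).hasSum hs)
  have h3 : HasSum (fun i => B (u i) s) (B s s) := (B.flip s).hasSum hs
  have h4 := hF.hasSum
  rw [h2.unique h3, ← Finset.HasAntidiagonal.sigmaAntidiagonalEquivProd.hasSum_iff] at h4
  have h5 := h4.sigma (fun n => (hasSum_fintype _))
  convert h5 using 2 with n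
  rw [← Finset.sum_coe_sort]
  rfl



noncomputable def recSeq {F : Type*} [Zero F] (Φ : ℕ → (ℕ → F) → F) (n : ℕ) : F :=
  Φ n (fun i => if i < n then recSeq Φ i else 0)
termination_by n

lemma recSeq_eq {F : Type*} [Zero F] (Φ : ℕ → (ℕ → F) → F) (n : ℕ) :
    recSeq Φ n = Φ n (fun i => if i < n then recSeq Φ i else 0) := by
  rw [recSeq]

lemma reg_exists (L : E →L[ℝ] E) (B : E →L[ℝ] E →L[ℝ] E) (v0 : E) :
    ∃ (f : ℝ → E) (δ : ℝ), 0 < δ ∧ f 0 = v0 ∧ ∀ x, |x| < δ →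
      HasDerivAt f (L (f x) + B (f x) (f x)) x ∧ AnalyticAt ℝ f x := by
  obtain ⟨a, ha0, ha⟩ : ∃ a : ℕ → E, a 0 = v0 ∧ ∀ n : ℕ, ((n : ℝ) + 1) • a (n + 1) =
      L (a n) + ∑ ij ∈ Finset.HasAntidiagonal.antidiagonal n, B (a ij.1) (a ij.2) := by
    let Φ : ℕ → (ℕ → E) → E := fun n b => match n with
      | 0 => v0
      | n + 1 => ((n : ℝ) + 1)⁻¹ •
        (L (b n) + ∑ ij ∈ Finset.HasAntidiagonal.antidiagonal n, B (b ij.1) (b ij.2))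
    refine ⟨recSeq Φ, by rw [recSeq_eq], fun n => ?_⟩
    rw [recSeq_eq Φ (n + 1)]
    simp only [Φ]
    rw [smul_inv_smul₀ (by positivity)]
    rw [if_pos (Nat.lt_succ_self n)]
    congr 1
    refine Finset.sum_congr rfl fun ij hij => ?_
    have := Finset.HasAntidiagonal.mem_antidiagonal.1 hij
    rw [if_pos (by omega), if_pos (by omega)]
  set C := ‖v0‖ with hCdef
  set M := ‖L‖ + ‖B‖ * C + 1 with hMdef
  have hC0 : 0 ≤ C := norm_nonneg _
  have hM : 0 < M := by positivity
  have hb : ∀ n, ‖a n‖ ≤ C * M ^ n := by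
    intro n
    induction n using Nat.strong_induction_on with
    | _ n ih =>
      rcases n with _ | n
      · simp [ha0, hCdef]
      · have h1 : ((n : ℝ) + 1) * ‖a (n + 1)‖ ≤ ((n : ℝ) + 1) * (C * M ^ (n + 1)) := by
          calc ((n : ℝ) + 1) * ‖a (n + 1)‖ = ‖((n : ℝ) + 1) • a (n + 1)‖ := by
                rw [norm_smul, Real.norm_eq_abs, abs_of_nonneg (by positivity)]
            _ ≤ ‖L‖ * (C * M ^ n) + ∑ ij ∈ Finset.HasAntidiagonal.antidiagonal n,
                  ‖B‖ * (C * C * M ^ n) := by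
                rw [ha]
                refine (norm_add_le _ _).trans (add_le_add ?_ ?_)
                · refine (L.le_opNorm _).trans ?_
                  gcongr; exact ih n (by omega)
                · refine (norm_sum_le _ _).trans (Finset.sum_le_sum fun ij hij => ?_)
                  have hij' := Finset.HasAntidiagonal.mem_antidiagonal.1 hij
                  refine (B.le_opNorm₂ _ _).trans ?_
                  calc ‖B‖ * ‖a ij.1‖ * ‖a ij.2‖ ≤ ‖B‖ * (C * M ^ ij.1) * (C * M ^ ij.2) := by
                        gcongr
                        · exact ih _ (by omega)
                        · exact ih _ (by omega)
                    _ = ‖B‖ * (C * C * M ^ n) := by rw [← hij', pow_add]; ring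
            _ = ‖L‖ * (C * M ^ n) + ((n : ℝ) + 1) * (‖B‖ * (C * C * M ^ n)) := by
                rw [Finset.sum_const, Finset.Nat.card_antidiagonal]; simp
            _ ≤ ((n : ℝ) + 1) * (‖L‖ * (C * M ^ n)) + ((n : ℝ) + 1) * (‖B‖ * (C * C * M ^ n)) +
                  ((n : ℝ) + 1) * (C * M ^ n) := by
                have : 0 ≤ (n : ℝ) * (‖L‖ * (C * M ^ n)) := by positivity
                have : 0 ≤ ((n : ℝ) + 1) * (C * M ^ n) := by positivity
                linarith
            _ = _ := by rw [hMdef]; ring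
        exact le_of_mul_le_mul_left h1 (by positivity)
  obtain ⟨f, f', hf⟩ := ps_main a C M hb hM
  refine ⟨f, 1 / M, by positivity, ?_, ?_⟩
  · have h0 := (hf 0 (by simp)).1
    have h1 : HasSum (fun n : ℕ => (0 : ℝ) ^ n • a n) (a 0) := by
      convert hasSum_single (f := fun n : ℕ => (0 : ℝ) ^ n • a n) 0 ?_ using 1
      · simp
      · intro n hn; simp [hn]
    rw [h0.unique h1, ha0]
  · intro x hx
    rw [lt_div_iff₀ hM] at hx
    obtain ⟨h1, h2, h3, h4⟩ := hf x hx
    refine ⟨?_, h4⟩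
    convert h3 using 1
    have h5 := ps_conv B _ _ h1 (ps_summable a C M x hb hM hx)
    have h6 := (L.hasSum h1).add h5
    refine h6.unique ?_
    convert h2 using 2 with n
    rw [ha, smul_add, Finset.smul_sum]
    simp only [map_smul]
    congr 1
    refine Finset.sum_congr rfl fun ij hij => ?_
    have hij' := Finset.HasAntidiagonal.mem_antidiagonal.1 hij
    simp [smul_smul, ← pow_add, ← hij', add_comm]

lemma sing_exists [FiniteDimensional ℝ E] (L : E →L[ℝ] E) (B : E →L[ℝ] E →L[ℝ] E) (v1 : E)
    (hv1 : L v1 = v1) (hL : ∀ k : ℕ, 2 ≤ k → ∀ v, L v = (k : ℝ) • v → v = 0) :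
    ∃ (f f' : ℝ → E) (δ : ℝ), 0 < δ ∧ f 0 = 0 ∧ f' 0 = v1 ∧ ∀ x, |x| < δ →
      HasDerivAt f (f' x) x ∧ x • f' x = (L (f x) + B (f x) (f x)) ∧ AnalyticAt ℝ f x := by
  -- resolvent
  have hR : ∃ C : ℝ, 0 < C ∧ ∀ k : ℕ, 2 ≤ k → ∀ w : E, ∃ v : E, (k : ℝ) • v - L v = w ∧
      (k : ℝ) * ‖v‖ ≤ C * ‖w‖ := by
    have h1 : ∀ k : ℕ, 2 ≤ k → ∃ C : ℝ, 0 < C ∧ ∀ w : E, ∃ v : E, (k : ℝ) • v - L v = w ∧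
      (k : ℝ) * ‖v‖ ≤ C * ‖w‖ := by
      intro k hk
      let T : E →ₗ[ℝ] E := (k : ℝ) • LinearMap.id - L.toLinearMap
      have hT : LinearMap.ker T = ⊥ := by
        rw [LinearMap.ker_eq_bot']
        intro v hv
        apply hL k hk
        simp only [T, LinearMap.sub_apply, LinearMap.smul_apply, LinearMap.id_apply] at hv
        exact (sub_eq_zero.1 hv).symm
      obtain ⟨K, hK, hK2⟩ := T.exists_antilipschitzWith hT
      have hsurj : Function.Surjective T := LinearMap.injective_iff_surjective.1
        (LinearMap.ker_eq_bot.1 hT)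
      refine ⟨k * K, by positivity, fun w => ?_⟩
      obtain ⟨v, rfl⟩ := hsurj w
      refine ⟨v, rfl, ?_⟩
      have := hK2.le_mul_dist v 0
      rw [dist_zero_right, map_zero, dist_zero_right] at this
      rw [mul_assoc]; gcongr
    choose! C hC0 hC using h1
    obtain ⟨N, hN⟩ := exists_nat_gt (2 * ‖L‖)
    refine ⟨2 + ∑ k ∈ Finset.range N, |C k|, by positivity, fun k hk w => ?_⟩
    obtain ⟨v, hv, hv2⟩ := hC k hk w
    refine ⟨v, hv, ?_⟩
    by_cases hkN : k < N
    · refine hv2.trans ?_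
      gcongr
      have := Finset.single_le_sum (f := fun k => |C k|) (fun i _ => abs_nonneg _)
        (Finset.mem_range.2 hkN)
      have h2 := le_abs_self (C k)
      linarith
    · have hkN' : (N : ℝ) ≤ k := by exact_mod_cast not_lt.1 hkN
      have h3 : (k : ℝ) * ‖v‖ ≤ ‖w‖ + ‖L‖ * ‖v‖ := by
        calc (k : ℝ) * ‖v‖ = ‖w + L v‖ := by
              rw [← hv, sub_add_cancel, norm_smul, Real.norm_natCast]
          _ ≤ ‖w‖ + ‖L v‖ := norm_add_le _ _
          _ ≤ _ := by gcongr; exact L.le_opNorm v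
      have h4 : 0 ≤ (∑ k ∈ Finset.range N, |C k|) * ‖w‖ := by positivity
      have h5 : 2 * ‖L‖ * ‖v‖ ≤ k * ‖v‖ := by gcongr; linarith
      linarith
  obtain ⟨C, hC0, hC⟩ := hR
  choose! R hR1 hR2 using hC
  obtain ⟨a, ha0, ha1, ha⟩ : ∃ a : ℕ → E, a 0 = 0 ∧ a 1 = v1 ∧ ∀ n : ℕ, 2 ≤ n → a n =
      R n (∑ ij ∈ Finset.HasAntidiagonal.antidiagonal n, B (a ij.1) (a ij.2)) := by
    let Φ : ℕ → (ℕ → E) → E := fun n b => if n = 0 then 0 else if n = 1 then v1 else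
        R n (∑ ij ∈ Finset.HasAntidiagonal.antidiagonal n, B (b ij.1) (b ij.2))
    have h0 : recSeq Φ 0 = 0 := by rw [recSeq_eq]; simp [Φ]
    refine ⟨recSeq Φ, h0, by rw [recSeq_eq]; simp [Φ], fun n hn => ?_⟩
    rw [recSeq_eq Φ n]
    simp only [Φ]
    rw [if_neg (by omega), if_neg (by omega)]
    congr 1
    refine Finset.sum_congr rfl fun ij hij => ?_
    have hij' := Finset.HasAntidiagonal.mem_antidiagonal.1 hij
    by_cases h1 : ij.1 = 0
    · rw [h1, if_pos (by omega)]; change B (recSeq Φ 0) _ = B (recSeq Φ 0) _; simp [h0]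
    by_cases h2 : ij.2 = 0
    · rw [h2, if_pos (c := 0 < n) (by omega)]
      change B _ (recSeq Φ 0) = B _ (recSeq Φ 0); simp [h0]
    rw [if_pos (by omega), if_pos (by omega)]
  have hrec : ∀ n : ℕ, (n : ℝ) • a n =
      L (a n) + ∑ ij ∈ Finset.HasAntidiagonal.antidiagonal n, B (a ij.1) (a ij.2) := by
    intro n
    by_cases hn : 2 ≤ n
    · have := hR1 n hn (∑ ij ∈ Finset.HasAntidiagonal.antidiagonal n, B (a ij.1) (a ij.2))
      rw [← ha n hn] at this
      rw [← this]; abel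
    · obtain rfl | rfl : n = 0 ∨ n = 1 := by omega
      · simp [ha0]
      · simp [Finset.Nat.antidiagonal_succ, ha0, ha1, hv1]
  set c := 1 / (2 * C * (‖B‖ + 1)) with hc
  have hc0 : 0 < c := by positivity
  set M := ‖v1‖ / c + 1 with hMdef
  have hM : 0 < M := by positivity
  have hb : ∀ n, ‖a n‖ ≤ c * M ^ n := by
    intro n
    induction n using Nat.strong_induction_on with
    | _ n ih =>
      by_cases hn : 2 ≤ n
      · have hn0 : (2 : ℝ) ≤ n := by exact_mod_cast hn
        have h1 : (n : ℝ) * ‖a n‖ ≤ n * (c * M ^ n) := by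
          calc (n : ℝ) * ‖a n‖ ≤ C * ‖∑ ij ∈ Finset.HasAntidiagonal.antidiagonal n,
                B (a ij.1) (a ij.2)‖ := by
                conv_lhs => rw [ha n hn]
                exact hR2 n hn _
            _ ≤ C * ∑ ij ∈ Finset.HasAntidiagonal.antidiagonal n, ‖B‖ * (c * c * M ^ n) := by
                gcongr
                refine (norm_sum_le _ _).trans (Finset.sum_le_sum fun ij hij => ?_)
                have hij' := Finset.HasAntidiagonal.mem_antidiagonal.1 hij
                by_cases h1 : ij.1 = 0
                · rw [h1, ha0]; simp; positivity
                by_cases h2 : ij.2 = 0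
                · rw [h2, ha0]; simp; positivity
                refine (B.le_opNorm₂ _ _).trans ?_
                calc ‖B‖ * ‖a ij.1‖ * ‖a ij.2‖ ≤ ‖B‖ * (c * M ^ ij.1) * (c * M ^ ij.2) := by
                      gcongr
                      · exact ih _ (by omega)
                      · exact ih _ (by omega)
                  _ = ‖B‖ * (c * c * M ^ n) := by rw [← hij', pow_add]; ring
            _ = ((n : ℝ) + 1) * (C * ‖B‖ * c) * (c * M ^ n) := by
                rw [Finset.sum_const, Finset.Nat.card_antidiagonal]; simp; ring
            _ ≤ ((n : ℝ) + 1) * (1 / 2) * (c * M ^ n) := by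
                gcongr
                rw [hc, mul_one_div, div_le_div_iff₀ (by positivity) (by positivity)]
                nlinarith [norm_nonneg B]
            _ ≤ n * (c * M ^ n) := by gcongr; linarith
        exact le_of_mul_le_mul_left h1 (by positivity)
      · obtain rfl | rfl : n = 0 ∨ n = 1 := by omega
        · simp [ha0, hc0.le]
        · rw [ha1, hMdef, pow_one, mul_add, mul_div_cancel₀ _ hc0.ne']; linarith
  obtain ⟨f, f', hf⟩ := ps_main a c M hb hM
  have hzero : ∀ b : ℕ → E, HasSum (fun n : ℕ => (0 : ℝ) ^ n • b n) (b 0) := by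
    intro b
    convert hasSum_single (f := fun n : ℕ => (0 : ℝ) ^ n • b n) 0 ?_ using 1
    · simp
    · intro n hn; simp [hn]
  refine ⟨f, f', 1 / M, by positivity, ?_, ?_, ?_⟩
  · rw [(hf 0 (by simp)).1.unique (hzero a), ha0]
  · rw [(hf 0 (by simp)).2.1.unique (hzero fun n : ℕ => ((n + 1 : ℝ) • a (n + 1)))]
    simp [ha1]
  · intro x hx
    rw [lt_div_iff₀ hM] at hx
    obtain ⟨h1, h2, h3, h4⟩ := hf x hx
    refine ⟨h3, ?_, h4⟩
    have h5 := ps_conv B _ _ h1 (ps_summable a c M x hb hM hx)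
    have h6 := (L.hasSum h1).add h5
    have h7 : HasSum (fun n : ℕ => x ^ n • ((n : ℝ) • a n)) (x • f' x) := by
      rw [← hasSum_nat_add_iff' 1]
      simp only [Finset.range_one, Finset.sum_singleton, Nat.cast_zero, zero_smul, smul_zero,
        sub_zero]
      convert h2.const_smul x using 2 with n
      rw [pow_succ']
      simp [smul_smul, mul_assoc]
    refine h7.unique ?_
    convert h6 using 2 with n
    rw [hrec, smul_add, Finset.smul_sum]
    simp only [map_smul]
    congr 1
    refine Finset.sum_congr rfl fun ij hij => ?_
    have hij' := Finset.HasAntidiagonal.mem_antidiagonal.1 hij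
    simp [smul_smul, ← pow_add, ← hij', add_comm]

lemma ode_unique (L : E →L[ℝ] E) (B : E →L[ℝ] E →L[ℝ] E) (u v : ℝ → E) (a b : ℝ)
    (hu : ContinuousOn u (Icc a b)) (hv : ContinuousOn v (Icc a b))
    (hu' : ∀ t ∈ Ico a b, HasDerivWithinAt u (L (u t) + B (u t) (u t)) (Ici t) t)
    (hv' : ∀ t ∈ Ico a b, HasDerivWithinAt v (L (v t) + B (v t) (v t)) (Ici t) t)
    (h0 : u a = v a) : EqOn u v (Icc a b) := by
  obtain ⟨R1, hR1⟩ := (isCompact_Icc.image_of_continuousOn hu).isBounded.exists_norm_le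
  obtain ⟨R2, hR2⟩ := (isCompact_Icc.image_of_continuousOn hv).isBounded.exists_norm_le
  set R := max 0 (max R1 R2) with hRd
  have hR : 0 ≤ R := le_max_left _ _
  have hLip : ∀ t ∈ Ico a b, LipschitzOnWith (Real.toNNReal (‖L‖ + 2 * ‖B‖ * R))
      (fun x : E => L x + B x x) (Metric.closedBall 0 R) := by
    intro t _
    apply LipschitzOnWith.of_dist_le_mul
    intro x hx y hy
    rw [mem_closedBall_zero_iff] at hx hy
    rw [Real.coe_toNNReal _ (by positivity), dist_eq_norm, dist_eq_norm]
    have : L x + B x x - (L y + B y y) = L (x - y) + B (x - y) x + B y (x - y) := by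
      simp only [map_sub, sub_apply]; abel
    rw [this]
    calc _ ≤ ‖L (x - y)‖ + ‖B (x - y) x‖ + ‖B y (x - y)‖ := norm_add₃_le
      _ ≤ ‖L‖ * ‖x - y‖ + ‖B‖ * ‖x - y‖ * R + ‖B‖ * R * ‖x - y‖ := by
        gcongr
        · exact L.le_opNorm _
        · exact (B.le_opNorm₂ _ _).trans (by gcongr)
        · exact (B.le_opNorm₂ _ _).trans (by gcongr)
      _ = _ := by ring
  refine ODE_solution_unique_of_mem_Icc_right (v := fun _ x => L x + B x x)
    (s := fun _ => Metric.closedBall 0 R) hLip hu hu' ?_ hv hv' ?_ h0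
  · intro t ht
    rw [mem_closedBall_zero_iff]
    exact (hR1 _ (mem_image_of_mem _ (Ico_subset_Icc_self ht))).trans
      ((le_max_left _ _).trans (le_max_right _ _))
  · intro t ht
    rw [mem_closedBall_zero_iff]
    exact (hR2 _ (mem_image_of_mem _ (Ico_subset_Icc_self ht))).trans
      ((le_max_right _ _).trans (le_max_right _ _))

lemma ode_analytic (L : E →L[ℝ] E) (B : E →L[ℝ] E →L[ℝ] E) (u : ℝ → E)
    (hu : ∀ t, HasDerivAt u (L (u t) + B (u t) (u t)) t) (t0 : ℝ) : AnalyticAt ℝ u t0 := by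
  obtain ⟨f, δ, hδ, hf0, hf⟩ := reg_exists L B (u t0)
  -- shift
  have hfan : AnalyticAt ℝ (fun t => f (t - t0)) t0 := by
    have h1 : AnalyticAt ℝ f (t0 - t0) := (hf _ (by simpa using hδ)).2
    exact AnalyticAt.fun_comp h1 (by fun_prop)
  have hfd : ∀ t, |t - t0| < δ → HasDerivAt (fun t => f (t - t0))
      (L (f (t - t0)) + B (f (t - t0)) (f (t - t0))) t := by
    intro t ht
    exact (hf _ ht).1.comp_sub_const t t0
  -- uniqueness in a neighbourhood
  refine hfan.congr ?_
  have hcd : ContDiff ℝ 1 (fun x : E => L x + B x x) := by fun_prop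
  obtain ⟨K, s, hs, hK⟩ := (hcd.contDiffAt (x := u t0)).exists_lipschitzOnWith
  have := ODE_solution_unique_of_eventually (v := fun _ x => L x + B x x)
    (s := fun _ => s) (t₀ := t0) (K := K) (f := fun t => f (t - t0)) (g := u)
    (Eventually.of_forall fun _ => hK) ?_ ?_ (by simp [hf0])
  · exact this
  · have h1 : ∀ᶠ t in 𝓝 t0, |t - t0| < δ := by
      have := Metric.ball_mem_nhds t0 hδ
      filter_upwards [this] with t ht
      simpa [Real.dist_eq] using ht
    have h2 := hfan.continuousAt.preimage_mem_nhds (t := s) (by simpa [hf0] using hs)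
    filter_upwards [h1, h2] with t ht ht2
    exact ⟨hfd t ht, ht2⟩
  · have h2 := (hu t0).continuousAt.preimage_mem_nhds (t := s) hs
    filter_upwards [h2] with t ht2
    exact ⟨hu t, ht2⟩
end PS


/-- clamp -/
noncomputable def clampR (a b x : ℝ) : ℝ := max a (min b x)

lemma clampR_lip (a b x y : ℝ) : |clampR a b x - clampR a b y| ≤ |x - y| := by
  unfold clampR
  refine (abs_max_sub_max_le_max _ _ _ _).trans ?_
  simp only [sub_self, abs_zero]
  refine max_le (abs_nonneg _) ((abs_min_sub_min_le_max _ _ _ _).trans ?_)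
  simp

lemma clamp_exists (m lam t0 T y0 z0 ε Y Z : ℝ) (hm : 0 < m) (hlam : 0 ≤ lam) (hT : t0 ≤ T)
    (hε : 0 < ε) (hY : ε ≤ Y) (hZ : 0 ≤ Z) :
    ∃ y z : ℝ → ℝ, y t0 = y0 ∧ z t0 = z0 ∧ ∀ t ∈ Icc t0 T,
      HasDerivWithinAt y (clampR (-Z) Z (z t) + (lam * Real.exp t + m) / 2 * (clampR ε Y (y t))⁻¹)
        (Icc t0 T) t ∧
      HasDerivWithinAt z (clampR (-Z) Z (z t) + m / 4 * (clampR ε Y (y t) + (clampR ε Y (y t))⁻¹))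
        (Icc t0 T) t := by
  have hcy : ∀ x, ε ≤ clampR ε Y x ∧ clampR ε Y x ≤ Y := fun x =>
    ⟨le_max_left _ _, max_le hY (min_le_left _ _)⟩
  have hcz : ∀ x, |clampR (-Z) Z x| ≤ Z := fun x =>
    abs_le.2 ⟨le_max_left _ _, max_le (by linarith) (min_le_left _ _)⟩
  set A := (lam * Real.exp T + m) / 2 with hA
  have hA0 : 0 < A := by positivity
  let f : ℝ → ℝ × ℝ → ℝ × ℝ := fun t p =>
    (clampR (-Z) Z p.2 + (lam * Real.exp t + m) / 2 * (clampR ε Y p.1)⁻¹,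
     clampR (-Z) Z p.2 + m / 4 * (clampR ε Y p.1 + (clampR ε Y p.1)⁻¹))
  have hAt : ∀ t ∈ Icc t0 T, 0 ≤ (lam * Real.exp t + m) / 2 ∧ (lam * Real.exp t + m) / 2 ≤ A := by
    intro t ht
    refine ⟨by positivity, ?_⟩
    rw [hA]; gcongr; exact ht.2
  have hinv : ∀ x, 0 ≤ (clampR ε Y x)⁻¹ ∧ (clampR ε Y x)⁻¹ ≤ ε⁻¹ := fun x =>
    ⟨inv_nonneg.2 (hε.le.trans (hcy x).1), inv_anti₀ hε (hcy x).1⟩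
  have hinvlip : ∀ x x', |(clampR ε Y x)⁻¹ - (clampR ε Y x')⁻¹| ≤ ε⁻¹ * ε⁻¹ * |x - x'| := by
    intro x x'
    have h1 := (hε.trans_le (hcy x).1)
    have h2 := (hε.trans_le (hcy x').1)
    have : (clampR ε Y x)⁻¹ - (clampR ε Y x')⁻¹ =
      (clampR ε Y x)⁻¹ * (clampR ε Y x')⁻¹ * (clampR ε Y x' - clampR ε Y x) := by
      field_simp
    rw [this, abs_mul, abs_mul, abs_of_nonneg (hinv x).1, abs_of_nonneg (hinv x').1]
    have h5 : |clampR ε Y x' - clampR ε Y x| ≤ |x - x'| := by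
      rw [abs_sub_comm x x']; exact clampR_lip _ _ _ _
    exact mul_le_mul (mul_le_mul (hinv x).2 (hinv x').2 (hinv x').1 (by positivity)) h5
      (abs_nonneg _) (by positivity)
  set K : ℝ := 1 + (A + m) * (1 + ε⁻¹ * ε⁻¹) with hK
  have hK0 : 0 ≤ K := by positivity
  set Lc : ℝ := Z + (A + m) * (Y + ε⁻¹) with hLc
  have hY0 : 0 < Y := hε.trans_le hY
  have hL0 : 0 ≤ Lc := by positivity
  have hPL : IsPicardLindelof f (tmin := t0) (tmax := T) ⟨t0, left_mem_Icc.2 hT⟩ (y0, z0)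
      (Real.toNNReal (Lc * (T - t0))) 0 (Real.toNNReal Lc) (Real.toNNReal K) := by
    refine ⟨?_, ?_, ?_, ?_⟩
    · intro t ht
      apply LipschitzOnWith.of_dist_le_mul
      rintro ⟨x, w⟩ - ⟨x', w'⟩ -
      rw [Real.coe_toNNReal _ hK0]
      set d := dist (x, w) (x', w') with hd
      have hdx : |x - x'| ≤ d := by rw [hd, Prod.dist_eq]; exact le_max_left _ _
      have hdw : |w - w'| ≤ d := by rw [hd, Prod.dist_eq]; exact le_max_right _ _
      have h1 : |clampR (-Z) Z w - clampR (-Z) Z w'| ≤ d := (clampR_lip _ _ _ _).trans hdw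
      have h2 : |clampR ε Y x - clampR ε Y x'| ≤ d := (clampR_lip _ _ _ _).trans hdx
      have h3 : |(clampR ε Y x)⁻¹ - (clampR ε Y x')⁻¹| ≤ ε⁻¹ * ε⁻¹ * d :=
        (hinvlip _ _).trans (by gcongr)
      have hd0 : 0 ≤ d := dist_nonneg
      have he0 : 0 ≤ ε⁻¹ * ε⁻¹ * d := by positivity
      obtain ⟨ht1, ht2⟩ := hAt t ht
      rw [Prod.dist_eq]
      apply max_le
      · simp only [f, Real.dist_eq]
        set At := (lam * Real.exp t + m) / 2
        have : clampR (-Z) Z w + At * (clampR ε Y x)⁻¹ -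
            (clampR (-Z) Z w' + At * (clampR ε Y x')⁻¹) =
            (clampR (-Z) Z w - clampR (-Z) Z w') +
              At * ((clampR ε Y x)⁻¹ - (clampR ε Y x')⁻¹) := by ring
        rw [this]
        refine (abs_add_le _ _).trans ?_
        rw [abs_mul, abs_of_nonneg ht1]
        calc _ ≤ d + A * (ε⁻¹ * ε⁻¹ * d) := by gcongr
          _ ≤ K * d := by
            have e1 : 0 ≤ A * d := by positivity
            have e2 : 0 ≤ m * d := by positivity
            have e3 : 0 ≤ m * (ε⁻¹ * ε⁻¹ * d) := by positivity
            rw [hK]; linarith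
      · simp only [f, Real.dist_eq]
        have : clampR (-Z) Z w + m / 4 * (clampR ε Y x + (clampR ε Y x)⁻¹) -
            (clampR (-Z) Z w' + m / 4 * (clampR ε Y x' + (clampR ε Y x')⁻¹)) =
            (clampR (-Z) Z w - clampR (-Z) Z w') + m / 4 * ((clampR ε Y x - clampR ε Y x') +
              ((clampR ε Y x)⁻¹ - (clampR ε Y x')⁻¹)) := by ring
        rw [this]
        refine (abs_add_le _ _).trans ?_
        rw [abs_mul, abs_of_nonneg (by positivity : 0 ≤ m / 4)]
        calc _ ≤ d + m / 4 * (d + (ε⁻¹ * ε⁻¹ * d)) := by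
              gcongr; exact (abs_add_le _ _).trans (add_le_add h2 h3)
          _ ≤ K * d := by
            have e1 : 0 ≤ A * d := by positivity
            have e2 : 0 ≤ m * d := by positivity
            have e3 : 0 ≤ m * (ε⁻¹ * ε⁻¹ * d) := by positivity
            have e4 : 0 ≤ A * (ε⁻¹ * ε⁻¹ * d) := by positivity
            rw [hK]; linarith
    · intro p _
      simp only [f]
      fun_prop
    · rintro t ht ⟨x, w⟩ -
      rw [Real.coe_toNNReal _ hL0, Prod.norm_def]
      obtain ⟨ht1, ht2⟩ := hAt t ht
      have e0 : 0 < ε⁻¹ := by positivity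
      have e1 : 0 ≤ A * Y := by positivity
      have e2 : 0 ≤ m * Y := by positivity
      have e3 : 0 ≤ m * ε⁻¹ := by positivity
      have e4 : 0 ≤ A * ε⁻¹ := by positivity
      apply max_le
      · simp only [f, Real.norm_eq_abs]
        refine (abs_add_le _ _).trans ?_
        rw [abs_mul, abs_of_nonneg ht1, abs_of_nonneg (hinv x).1]
        calc _ ≤ Z + A * ε⁻¹ := by
              gcongr
              · exact hcz w
              · exact (hinv x).1
              · exact (hcy x).1
          _ ≤ _ := by rw [hLc]; linarith
      · simp only [f, Real.norm_eq_abs]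
        refine (abs_add_le _ _).trans ?_
        rw [abs_mul, abs_of_nonneg (by positivity : 0 ≤ m / 4),
          abs_of_nonneg (add_nonneg (hε.le.trans (hcy x).1) (hinv x).1)]
        calc _ ≤ Z + m / 4 * (Y + ε⁻¹) := by
              gcongr
              · exact hcz w
              · exact (hcy x).2
              · exact (hcy x).1
          _ ≤ _ := by rw [hLc]; linarith
    · have : 0 ≤ T - t0 := by linarith
      rw [Real.coe_toNNReal _ hL0, Real.coe_toNNReal _ (by positivity)]
      simp [this]
  obtain ⟨α, hα0, hα⟩ := hPL.exists_eq_forall_mem_Icc_hasDerivWithinAt₀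
  refine ⟨fun t => (α t).1, fun t => (α t).2, by simp [hα0], by simp [hα0], fun t ht => ?_⟩
  have := hα t ht
  exact ⟨this.fst, this.snd⟩

lemma clampR_id {a b x : ℝ} (h1 : a ≤ x) (h2 : x ≤ b) : clampR a b x = x := by
  simp [clampR, h1, h2]

lemma pl_exists (m lam t0 T y0 z0 : ℝ) (hm : 0 < m) (hlam : 0 ≤ lam) (hT : t0 ≤ T)
    (hy0 : 0 < y0) :
    ∃ y z : ℝ → ℝ, y t0 = y0 ∧ z t0 = z0 ∧ ∀ t ∈ Icc t0 T, 0 < y t ∧ 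
      HasDerivWithinAt y (z t + (lam * Real.exp t + m) / 2 * (y t)⁻¹) (Icc t0 T) t ∧
      HasDerivWithinAt z (z t + m / 4 * (y t + (y t)⁻¹)) (Icc t0 T) t := by
  set c := (|z0| + 1) * Real.exp (T - t0) with hc
  have hc0 : 0 < c := by positivity
  set ε := min (y0 / 2) (m / (4 * c)) with hε
  have hε0 : 0 < ε := by positivity
  have hεy : ε < y0 := (min_le_left _ _).trans_lt (by linarith)
  have hεc : c < m / 2 * ε⁻¹ := by
    have h1 : ε ≤ m / (4 * c) := min_le_right _ _
    rw [le_div_iff₀ (by positivity)] at h1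
    rw [← div_eq_mul_inv, lt_div_iff₀ hε0]
    linarith
  set A := (lam * Real.exp T + m) / 2 with hA
  have hA0 : 0 < A := by positivity
  set K := 2 + m with hK
  set D := |y0 + z0| + K * c + A * ε⁻¹ + m * ε⁻¹ + 1 with hD
  have hKp : 0 < K := by positivity
  have hDp : 0 < D := by positivity
  set R := D * Real.exp ((K + 1) * (T - t0)) with hR
  have hRp : 0 < R := by positivity
  obtain ⟨y, z, hy, hz, hyz⟩ := clamp_exists m lam t0 T y0 z0 ε (R + c + ε) (R + c) hm hlam hT hε0
    (by linarith) (by linarith)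
  set Y := R + c + ε with hY
  set Z := R + c with hZ
  have hcy : ∀ x, ε ≤ clampR ε Y x ∧ clampR ε Y x ≤ Y := fun x =>
    ⟨le_max_left _ _, max_le (by linarith) (min_le_left _ _)⟩
  have hinv : ∀ x, 0 < (clampR ε Y x)⁻¹ ∧ (clampR ε Y x)⁻¹ ≤ ε⁻¹ := fun x =>
    ⟨inv_pos.2 (hε0.trans_le (hcy x).1), inv_anti₀ hε0 (hcy x).1⟩
  have hcont_y : ContinuousOn y (Icc t0 T) := fun t ht => (hyz t ht).1.continuousWithinAt
  have hcont_z : ContinuousOn z (Icc t0 T) := fun t ht => (hyz t ht).2.continuousWithinAt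
  have hyd : ∀ t ∈ Ico t0 T, HasDerivWithinAt y _ (Ici t) t := fun t ht =>
    (hyz t (Ico_subset_Icc_self ht)).1.mono_of_mem_nhdsWithin (Icc_mem_nhdsGE_of_mem ht)
  have hzd : ∀ t ∈ Ico t0 T, HasDerivWithinAt z _ (Ici t) t := fun t ht =>
    (hyz t (Ico_subset_Icc_self ht)).2.mono_of_mem_nhdsWithin (Icc_mem_nhdsGE_of_mem ht)
  -- lower bound on z
  have hz1 : ∀ t ∈ Icc t0 T, -c ≤ z t := by
    have key : ∀ ⦃t⦄, t ∈ Icc t0 T → -z t ≤ (|z0| + 1) * Real.exp (t - t0) := by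
      refine image_le_of_deriv_right_lt_deriv_boundary (f := fun t => -z t)
        (B' := fun t => (|z0| + 1) * Real.exp (t - t0)) hcont_z.neg
        (fun t ht => (hzd t ht).neg) ?_ ?_ ?_
      · simp only [hz, sub_self, Real.exp_zero]
        have := neg_abs_le z0
        linarith
      · intro t
        have h1 : HasDerivAt (fun t : ℝ => t - t0) 1 t := (hasDerivAt_id t).sub_const t0
        simpa using h1.exp.const_mul (|z0| + 1)
      · intro t ht hte
        have hneg : z t < 0 := by
          have : 0 < (|z0| + 1) * Real.exp (t - t0) := by positivity
          linarith
        have h1 : z t ≤ clampR (-Z) Z (z t) := by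
          refine le_max_of_le_right (le_min ?_ le_rfl); linarith
        have h2 : 0 < m / 4 * (clampR ε Y (y t) + (clampR ε Y (y t))⁻¹) := by
          have := (hcy (y t)).1; have := (hinv (y t)).1
          have : 0 < clampR ε Y (y t) := by linarith
          positivity
        linarith
    intro t ht
    have h1 := key ht
    have h2 : (|z0| + 1) * Real.exp (t - t0) ≤ c := by
      rw [hc]; gcongr; exact ht.2
    linarith
  have hzc : ∀ t ∈ Icc t0 T, -c ≤ clampR (-Z) Z (z t) := fun t ht =>
    le_max_of_le_right (le_min (by linarith) (hz1 t ht))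
  have hy1 : ∀ t ∈ Icc t0 T, ε ≤ y t := by
    have key : ∀ ⦃t⦄, t ∈ Icc t0 T → -y t ≤ -ε := by
      refine image_le_of_deriv_right_lt_deriv_boundary (f := fun t => -y t)
        (B' := fun t => 0) (B := fun _ => -ε) hcont_y.neg
        (fun t ht => (hyd t ht).neg) ?_ ?_ ?_
      · simp only [hy]; linarith
      · intro t; exact hasDerivAt_const _ _
      · intro t ht hte
        have hte' : y t = ε := by simpa using hte
        rw [hte', clampR_id le_rfl (by linarith)]
        have h1 := hzc t (Ico_subset_Icc_self ht)
        have h2 : m / 2 * ε⁻¹ ≤ (lam * Real.exp t + m) / 2 * ε⁻¹ := by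
          gcongr
          have : 0 ≤ lam * Real.exp t := by positivity
          linarith
        linarith
    intro t ht
    have := key ht
    linarith
  have hyz1 : ∀ t ∈ Icc t0 T, y t + z t ≤ R := by
    have key : ∀ ⦃t⦄, t ∈ Icc t0 T → y t + z t ≤ D * Real.exp ((K + 1) * (t - t0)) := by
      refine image_le_of_deriv_right_lt_deriv_boundary (f := fun t => y t + z t)
        (B' := fun t => D * (Real.exp ((K + 1) * (t - t0)) * (K + 1))) (hcont_y.add hcont_z)
        (fun t ht => (hyd t ht).add (hzd t ht)) ?_ ?_ ?_
      · simp only [hy, hz, sub_self, mul_zero, Real.exp_zero]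
        have := le_abs_self (y0 + z0)
        have : 0 ≤ K * c + A * ε⁻¹ + m * ε⁻¹ := by positivity
        linarith
      · intro t
        have h1 : HasDerivAt (fun t : ℝ => (K + 1) * (t - t0)) (K + 1) t := by
          simpa using ((hasDerivAt_id t).sub_const t0).const_mul (K + 1)
        exact h1.exp.const_mul D
      · intro t ht hte
        have ht' := Ico_subset_Icc_self ht
        have h1 : clampR (-Z) Z (z t) ≤ z t := max_le (by linarith [hz1 t ht']) (min_le_right _ _)
        have h2 : clampR ε Y (y t) ≤ y t := max_le (hy1 t ht') (min_le_right _ _)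
        have h3 := hinv (y t)
        have h4 : (lam * Real.exp t + m) / 2 * (clampR ε Y (y t))⁻¹ ≤ A * ε⁻¹ := by
          have : (lam * Real.exp t + m) / 2 ≤ A := by rw [hA]; gcongr; exact ht.2.le
          exact mul_le_mul this h3.2 h3.1.le hA0.le
        have h5 : m / 4 * (clampR ε Y (y t) + (clampR ε Y (y t))⁻¹) ≤ m / 4 * (y t + ε⁻¹) := by
          gcongr; exact (hcy _).1
        have h6 := hz1 t ht'
        have h7 := hy1 t ht'
        have h8 : D ≤ y t + z t := by
          rw [hte]
          refine le_mul_of_one_le_right hDp.le (Real.one_le_exp ?_)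
          have : 0 ≤ t - t0 := by linarith [ht.1]
          positivity
        have h9 : D * (Real.exp ((K + 1) * (t - t0)) * (K + 1)) = (K + 1) * (y t + z t) := by
          rw [hte]; ring
        rw [h9]
        have h10 : 0 ≤ m * (z t + c) := mul_nonneg hm.le (by linarith)
        have h11 : 0 < y t := by linarith
        have h12 : 0 < m * y t := by positivity
        have h13 : 0 < m * ε⁻¹ := by positivity
        have h14 := abs_nonneg (y0 + z0)
        have h15 : K * (y t + z t) = 2 * y t + 2 * z t + m * y t + m * z t := by rw [hK]; ring
        have h16 : K * c = 2 * c + m * c := by rw [hK]; ring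
        linarith
    intro t ht
    refine (key ht).trans ?_
    rw [hR]; gcongr; exact ht.2
  refine ⟨y, z, hy, hz, fun t ht => ?_⟩
  have h1 := hz1 t ht
  have h2 := hy1 t ht
  have h3 := hyz1 t ht
  have e1 : clampR ε Y (y t) = y t := clampR_id h2 (by linarith)
  have e2 : clampR (-Z) Z (z t) = z t := clampR_id (by linarith) (by linarith)
  have := hyz t ht
  rw [e1, e2] at this
  exact ⟨by linarith, this⟩

/-- linear part -/
noncomputable def sysL (m : ℝ) : (ℝ × ℝ × ℝ) →L[ℝ] (ℝ × ℝ × ℝ) :=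
  LinearMap.toContinuousLinearMap
    { toFun := fun v => (-2 * v.2.2, v.2.1, (1 - m / 2) * v.2.2 - m / 4 * v.1)
      map_add' := by
        intro x y; ext <;> simp <;> ring
      map_smul' := by
        intro c x; ext <;> simp <;> ring }

/-- quadratic part -/
noncomputable def sysB (m lam : ℝ) :
    (ℝ × ℝ × ℝ) →L[ℝ] (ℝ × ℝ × ℝ) →L[ℝ] (ℝ × ℝ × ℝ) :=
  LinearMap.toContinuousBilinearMap
    (LinearMap.mk₂ ℝ (fun v w : ℝ × ℝ × ℝ => ((-2 * v.1 * w.2.2, -2 * v.2.1 * w.2.2,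
        -(v.2.2 * w.2.2) - (lam * v.2.1 + m * v.1) / 2 * w.2.2) : ℝ × ℝ × ℝ))
      (by intro x y z; ext <;> simp <;> ring)
      (by intro c x y; ext <;> simp <;> ring)
      (by intro x y z; ext <;> simp <;> ring)
      (by intro c x y; ext <;> simp <;> ring))

lemma sysL_apply (m : ℝ) (v : ℝ × ℝ × ℝ) :
    sysL m v = (-2 * v.2.2, v.2.1, (1 - m / 2) * v.2.2 - m / 4 * v.1) := rfl

lemma sysB_apply (m lam : ℝ) (v w : ℝ × ℝ × ℝ) :
    sysB m lam v w = (-2 * v.1 * w.2.2, -2 * v.2.1 * w.2.2,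
        -(v.2.2 * w.2.2) - (lam * v.2.1 + m * v.1) / 2 * w.2.2) := rfl

/-- the vector field -/
noncomputable def sysG (m lam : ℝ) (v : ℝ × ℝ × ℝ) : ℝ × ℝ × ℝ := sysL m v + sysB m lam v v

lemma sysG_apply (m lam : ℝ) (v : ℝ × ℝ × ℝ) :
    sysG m lam v = (-2 * (1 + v.1) * v.2.2, v.2.1 - 2 * v.2.1 * v.2.2,
      v.2.2 - v.2.2 ^ 2 - m / 4 * v.1 - v.2.2 * (lam * v.2.1 + m * (1 + v.1)) / 2) := by
  rw [sysG, sysL_apply, sysB_apply]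
  ext <;> simp <;> ring

lemma hd1 {f : ℝ → ℝ × ℝ × ℝ} {v : ℝ × ℝ × ℝ} {x : ℝ} (h : HasDerivAt f v x) :
    HasDerivAt (fun x => (f x).1) v.1 x :=
  (ContinuousLinearMap.fst ℝ ℝ (ℝ × ℝ)).hasFDerivAt.comp_hasDerivAt x h

lemma hd2 {f : ℝ → ℝ × ℝ × ℝ} {v : ℝ × ℝ × ℝ} {x : ℝ} (h : HasDerivAt f v x) :
    HasDerivAt (fun x => (f x).2.1) v.2.1 x :=
  ((ContinuousLinearMap.fst ℝ ℝ ℝ).comp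
    (ContinuousLinearMap.snd ℝ ℝ (ℝ × ℝ))).hasFDerivAt.comp_hasDerivAt x h

lemma hd3 {f : ℝ → ℝ × ℝ × ℝ} {v : ℝ × ℝ × ℝ} {x : ℝ} (h : HasDerivAt f v x) :
    HasDerivAt (fun x => (f x).2.2) v.2.2 x :=
  ((ContinuousLinearMap.snd ℝ ℝ ℝ).comp
    (ContinuousLinearMap.snd ℝ ℝ (ℝ × ℝ))).hasFDerivAt.comp_hasDerivAt x h

lemma sing_sol (m lam μ : ℝ) (hm : 0 < m) :
    ∃ (f : ℝ → ℝ × ℝ × ℝ) (x0 : ℝ), 0 < x0 ∧ f 0 = 0 ∧ HasDerivAt f (-μ, 1, μ / 2) 0 ∧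
      AnalyticAt ℝ f 0 ∧ ∀ t < Real.log x0,
        HasDerivAt (fun t => f (Real.exp t)) (sysG m lam (f (Real.exp t))) t ∧
        0 < 1 + (f (Real.exp t)).1 ∧
        (f (Real.exp t)).2.1 = Real.exp t * (1 + (f (Real.exp t)).1) := by
  obtain ⟨f, f', δ, hδ, hf0, hf1, hf⟩ := sing_exists (sysL m) (sysB m lam) (-μ, 1, μ / 2)
    (by rw [sysL_apply]; ext <;> simp <;> ring)
    (by
      intro k hk v hv
      have hk2 : (2 : ℝ) ≤ k := by exact_mod_cast hk
      rw [sysL_apply] at hv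
      obtain ⟨S, σ, p⟩ := v
      simp only [Prod.smul_mk, smul_eq_mul, Prod.mk.injEq] at hv
      obtain ⟨h1, h2, h3⟩ := hv
      have hσ : σ = 0 := by
        have : ((k : ℝ) - 1) * σ = 0 := by linarith
        rcases mul_eq_zero.1 this with h | h
        · linarith
        · exact h
      have hS : S = 0 := by
        have : (((k : ℝ) - 1) * (k + m / 2)) * S = 0 := by
          linear_combination (-(k : ℝ) + 1 - m / 2) * h1 + 2 * h3
        rcases mul_eq_zero.1 this with h | h
        · rcases mul_eq_zero.1 h with h | h
          · linarith
          · linarith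
        · exact h
      have hp : p = 0 := by rw [hS] at h1; linarith
      rw [hσ, hS, hp]; rfl)
  have hd0 := (hf 0 (by simpa using hδ)).1
  rw [hf1] at hd0
  have han := (hf 0 (by simpa using hδ)).2.2
  have hS0 : ∀ᶠ x in 𝓝 (0 : ℝ), 0 < 1 + (f x).1 := by
    have hc : ContinuousAt (fun x => 1 + (f x).1) 0 := by
      have := han.continuousAt
      fun_prop
    have h0 : (0 : ℝ) < 1 + (f 0).1 := by rw [hf0]; simp
    exact hc.eventually (lt_mem_nhds h0)
  obtain ⟨δ', hδ', hball⟩ := Metric.eventually_nhds_iff.1 hS0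
  set x0 := min δ δ' with hx0
  have hx0p : 0 < x0 := lt_min hδ hδ'
  have hG : ∀ x ∈ Ioo 0 x0, HasDerivAt f (x⁻¹ • sysG m lam (f x)) x ∧ 0 < 1 + (f x).1 := by
    intro x hx
    have hxa : |x| = x := abs_of_pos hx.1
    obtain ⟨h1, h2, -⟩ := hf x (by rw [hxa]; exact hx.2.trans_le (min_le_left _ _))
    refine ⟨?_, hball (by rw [Real.dist_eq, sub_zero, hxa]; exact hx.2.trans_le (min_le_right _ _))⟩
    rw [sysG, ← h2, smul_smul, inv_mul_cancel₀ hx.1.ne', one_smul]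
    exact h1
  have hratio : ∀ x ∈ Ioo 0 x0, (f x).2.1 = x * (1 + (f x).1) := by
    have hder : ∀ x ∈ Ioo 0 x0, HasDerivAt (fun x => (f x).2.1 / (x * (1 + (f x).1))) 0 x := by
      intro x hx
      obtain ⟨h1, h2⟩ := hG x hx
      rw [sysG_apply] at h1
      have hS := hd1 h1
      have hσ := hd2 h1
      have hx' := hx.1
      have := hσ.div ((hasDerivAt_id x).mul (hS.const_add 1)) (by simp; constructor <;> linarith)
      refine HasDerivAt.congr_deriv this ?_
      simp only [Prod.smul_mk, smul_eq_mul, Pi.mul_apply, id]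
      field_simp
      ring
    have hopen : IsOpen (Ioo 0 x0) := isOpen_Ioo
    obtain ⟨C, hC⟩ := hopen.exists_is_const_of_deriv_eq_zero isPreconnected_Ioo
      (fun x hx => (hder x hx).differentiableAt.differentiableWithinAt)
      (fun x hx => (hder x hx).deriv)
    have hlim : Tendsto (fun x => (f x).2.1 / (x * (1 + (f x).1))) (𝓝[>] 0) (𝓝 1) := by
      have h1 := hd2 hd0
      rw [hasDerivAt_iff_tendsto_slope] at h1
      have h2 : Tendsto (slope (fun x => (f x).2.1) 0) (𝓝[>] 0) (𝓝 1) :=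
        h1.mono_left (nhdsWithin_mono _ (fun x hx => ne_of_gt hx))
      have h3 : Tendsto (fun x => 1 + (f x).1) (𝓝[>] 0) (𝓝 1) := by
        have hc : ContinuousAt (fun x => 1 + (f x).1) 0 := by
          have := han.continuousAt
          fun_prop
        have := hc.tendsto
        rw [hf0] at this
        simpa using this.mono_left nhdsWithin_le_nhds
      have h4 := h2.div h3 one_ne_zero
      rw [div_one] at h4
      refine h4.congr fun x => ?_
      simp [slope_def_field, hf0, div_div]
    have hC1 : C = 1 := by
      refine tendsto_nhds_unique (f := fun _ : ℝ => C) (l := 𝓝[>] (0 : ℝ)) tendsto_const_nhds (hlim.congr' ?_)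
      filter_upwards [Ioo_mem_nhdsGT hx0p] with x hx
      exact hC x hx
    intro x hx
    have h1 := hC x hx
    have h2 := (hG x hx).2
    have h3 := hx.1
    rw [hC1, div_eq_one_iff_eq (by positivity)] at h1
    exact h1
  refine ⟨f, x0, hx0p, hf0, hd0, han, fun t ht => ?_⟩
  have hx : Real.exp t ∈ Ioo 0 x0 := ⟨Real.exp_pos t, by rwa [Real.lt_log_iff_exp_lt hx0p] at ht⟩
  obtain ⟨h1, h2⟩ := hG _ hx
  refine ⟨?_, h2, hratio _ hx⟩
  have h3 := h1.scomp t (Real.hasDerivAt_exp t)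
  rw [smul_smul, mul_inv_cancel₀ (Real.exp_pos t).ne', one_smul] at h3
  exact h3

lemma pl_vec (m lam t0 T : ℝ) (hm : 0 < m) (hlam : 0 ≤ lam) (hT : t0 ≤ T) (w0 : ℝ × ℝ × ℝ)
    (hw1 : 0 < 1 + w0.1) (hw2 : w0.2.1 = Real.exp t0 * (1 + w0.1)) :
    ∃ V : ℝ → ℝ × ℝ × ℝ, V t0 = w0 ∧ ∀ t ∈ Icc t0 T,
      HasDerivWithinAt V (sysG m lam (V t)) (Icc t0 T) t ∧ 0 < 1 + (V t).1 ∧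
      (V t).2.1 = Real.exp t * (1 + (V t).1) := by
  set y0 := (Real.sqrt (1 + w0.1))⁻¹ with hy0
  have hsq : 0 < Real.sqrt (1 + w0.1) := Real.sqrt_pos.2 hw1
  have hy0p : 0 < y0 := inv_pos.2 hsq
  have hy2 : y0⁻¹ ^ 2 = 1 + w0.1 := by rw [hy0, inv_inv, Real.sq_sqrt hw1.le]
  obtain ⟨y, z, hy, hz, hyz⟩ := pl_exists m lam t0 T y0
    (y0 * (w0.2.2 - (lam * Real.exp t0 + m) / 2 * y0⁻¹ ^ 2)) hm hlam hT hy0p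
  refine ⟨fun t => ((y t)⁻¹ ^ 2 - 1, Real.exp t * (y t)⁻¹ ^ 2,
    z t * (y t)⁻¹ + (lam * Real.exp t + m) / 2 * (y t)⁻¹ ^ 2), ?_, ?_⟩
  · simp only [hy, hz, hy2]
    ext
    · simp
    · simp [hw2]
    · simp only
      field_simp
      ring
  · intro t ht
    obtain ⟨hyp, hdy, hdz⟩ := hyz t ht
    refine ⟨?_, by simp; positivity, by simp⟩
    have hi := hdy.inv hyp.ne'
    have he : HasDerivWithinAt Real.exp (Real.exp t) (Icc t0 T) t :=
      (Real.hasDerivAt_exp t).hasDerivWithinAt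
    have hi2 := hi.pow 2
    have h1 := (hi2.sub_const 1).prodMk ((he.mul hi2).prodMk
      ((hdz.mul hi).add ((((he.const_mul lam).add_const m).div_const 2).mul hi2)))
    refine h1.congr_deriv ?_
    rw [sysG_apply]
    ext
    · simp; field_simp; ring
    · simp; field_simp; ring
    · simp; field_simp; ring

lemma global_sol (m lam : ℝ) (hm : 0 < m) (hlam : 0 ≤ lam) (u : ℝ → ℝ × ℝ × ℝ) (t1 : ℝ)
    (hu : ∀ t < t1, HasDerivAt u (sysG m lam (u t)) t ∧ 0 < 1 + (u t).1 ∧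
      (u t).2.1 = Real.exp t * (1 + (u t).1)) :
    ∃ U : ℝ → ℝ × ℝ × ℝ, (∀ t, HasDerivAt U (sysG m lam (U t)) t ∧ 0 < 1 + (U t).1 ∧
      (U t).2.1 = Real.exp t * (1 + (U t).1)) ∧ ∀ t < t1 - 1, U t = u t := by
  set t0 := t1 - 1 with ht0
  obtain ⟨-, hw1, hw2⟩ := hu t0 (by linarith)
  have hV := fun T (hT : t0 ≤ T) => pl_vec m lam t0 T hm hlam hT (u t0) hw1 hw2
  choose! V hV0 hV using hV
  have hVc : ∀ T, t0 ≤ T → ContinuousOn (V T) (Icc t0 T) := fun T hT t ht =>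
    (hV T hT t ht).1.continuousWithinAt
  have hVd : ∀ T, t0 ≤ T → ∀ t ∈ Ico t0 T,
      HasDerivWithinAt (V T) (sysG m lam (V T t)) (Ici t) t := fun T hT t ht =>
    (hV T hT t (Ico_subset_Icc_self ht)).1.mono_of_mem_nhdsWithin (Icc_mem_nhdsGE_of_mem ht)
  have hVV : ∀ T T' t, t0 ≤ t → t ≤ T → t ≤ T' → V T t = V T' t := by
    intro T T' t h1 h2 h3
    refine ode_unique (sysL m) (sysB m lam) (V T) (V T') t0 t
      ((hVc T (by linarith)).mono (Icc_subset_Icc_right h2))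
      ((hVc T' (by linarith)).mono (Icc_subset_Icc_right h3))
      (fun s hs => hVd T (by linarith) s ⟨hs.1, hs.2.trans_le h2⟩)
      (fun s hs => hVd T' (by linarith) s ⟨hs.1, hs.2.trans_le h3⟩)
      (by rw [hV0 _ (by linarith), hV0 _ (by linarith)]) (right_mem_Icc.2 h1)
  have hVu : ∀ T t, t0 ≤ t → t ≤ T → t < t1 → V T t = u t := by
    intro T t h1 h2 h3
    refine ode_unique (sysL m) (sysB m lam) (V T) u t0 t
      ((hVc T (by linarith)).mono (Icc_subset_Icc_right h2))
      (fun s hs => (hu s (hs.2.trans_lt h3)).1.continuousAt.continuousWithinAt)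
      (fun s hs => hVd T (by linarith) s ⟨hs.1, hs.2.trans_le h2⟩)
      (fun s hs => (hu s (hs.2.trans h3)).1.hasDerivWithinAt)
      (by rw [hV0 _ (by linarith)]) (right_mem_Icc.2 h1)
  let U : ℝ → ℝ × ℝ × ℝ := fun t => if t ≤ t0 then u t else V (t + 1) t
  have hUu : ∀ t < t1, U t = u t := by
    intro t ht
    by_cases h : t ≤ t0
    · simp [U, h]
    · simp only [U, h, if_false]
      exact hVu _ _ (by linarith) (by linarith) ht
  have hUV : ∀ T t, t0 < t → t ≤ T → U t = V T t := by
    intro T t h1 h2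
    simp only [U, not_le.2 h1, if_false]
    exact hVV _ _ _ h1.le (by linarith) h2
  refine ⟨U, fun t => ?_, fun t ht => hUu t (by linarith)⟩
  by_cases h : t < t1
  · rw [hUu t h]
    refine ⟨(hu t h).1.congr_of_eventuallyEq ?_, (hu t h).2⟩
    filter_upwards [Iio_mem_nhds h] with s hs
    exact hUu s hs
  · have h1 : t0 < t := by linarith
    obtain ⟨h2, h3⟩ := hV (t + 1) (by linarith) t ⟨h1.le, by linarith⟩
    rw [hUV (t + 1) t h1 (by linarith)]
    refine ⟨?_, h3⟩
    have h4 := h2.hasDerivAt (Icc_mem_nhds h1 (by linarith))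
    refine h4.congr_of_eventuallyEq ?_
    filter_upwards [Ioo_mem_nhds h1 (by linarith : t < t + 1)] with s hs
    exact hUV _ _ hs.1 hs.2.le

lemma exists_sol (n : ℕ) (lam μ₁ : ℝ) (hlam : 0 ≤ lam) (hn2 : 2 ≤ n) :
    ∃ h : ℝ → ℝ, IsAnalyticSol n lam μ₁ h := by
  set m : ℝ := (n : ℝ) - 1 with hmdef
  have hm : 0 < m := by
    have : (2 : ℝ) ≤ n := by exact_mod_cast hn2
    rw [hmdef]; linarith
  obtain ⟨f, x0, hx0, hf0, hfd, hfa, hf⟩ := sing_sol m lam μ₁ hm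
  obtain ⟨U, hU, hUf⟩ := global_sol m lam hm hlam (fun t => f (Real.exp t)) (Real.log x0) hf
  have hUa : ∀ t, AnalyticAt ℝ U t := ode_analytic (sysL m) (sysB m lam) U (fun t => (hU t).1)
  let W : ℝ → ℝ × ℝ × ℝ := fun r => if r ≤ 0 then f r else U (Real.log r)
  have hW0 : W =ᶠ[𝓝 0] f := by
    filter_upwards [Iio_mem_nhds (Real.exp_pos (Real.log x0 - 1))] with r hr
    by_cases h : r ≤ 0
    · simp [W, h]
    · simp only [W, h, if_false]
      have hr0 : 0 < r := not_le.1 h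
      rw [hUf _ (by rwa [Real.log_lt_iff_lt_exp hr0]), Real.exp_log hr0]
  have hWr : ∀ r, 0 < r → W =ᶠ[𝓝 r] fun r => U (Real.log r) := by
    intro r hr
    filter_upwards [Ioi_mem_nhds hr] with s hs
    have hs2 : 0 < s := hs
    simp [W, not_le.2 hs2]
  have hWval : ∀ r, 0 < r → W r = U (Real.log r) := fun r hr => (hWr r hr).self_of_nhds
  have hpos : ∀ r, 0 < r → 0 < 1 + (W r).1 := fun r hr => by
    rw [hWval r hr]; exact (hU _).2.1
  have hσ : ∀ r, 0 < r → (W r).2.1 = r * (1 + (W r).1) := fun r hr => by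
    rw [hWval r hr, (hU _).2.2, Real.exp_log hr]
  have hWd : ∀ r, 0 < r → HasDerivAt W (r⁻¹ • sysG m lam (W r)) r := by
    intro r hr
    rw [hWval r hr]
    exact ((hU (Real.log r)).1.scomp r (Real.hasDerivAt_log hr.ne')).congr_of_eventuallyEq (hWr r hr)
  have hWa : ∀ r, 0 ≤ r → AnalyticAt ℝ W r := by
    intro r hr
    rcases hr.eq_or_lt with rfl | hr
    · exact hfa.congr hW0.symm
    · exact ((hUa (Real.log r)).fun_comp (analyticAt_log hr)).congr (hWr r hr).symm
  have hW00 : W 0 = 0 := by rw [hW0.self_of_nhds, hf0]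
  have hpos' : ∀ r, 0 ≤ r → 0 < 1 + (W r).1 := by
    intro r hr
    rcases hr.eq_or_lt with rfl | hr
    · rw [hW00]; simp
    · exact hpos r hr
  let h : ℝ → ℝ := fun r => (1 + (W r).1)⁻¹
  have hhd : ∀ r, 0 < r → HasDerivAt h (2 * (W r).2.2 * h r * r⁻¹) r := by
    intro r hr
    have h1 := hWd r hr
    rw [sysG_apply] at h1
    have hS := hd1 h1
    have hp := hpos r hr
    have h2 := (hS.const_add 1).inv hp.ne'
    refine h2.congr_deriv ?_
    simp [h]
    field_simp
  refine ⟨h, ?_, ?_, ?_, ?_⟩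
  · intro r hr
    have h1 : AnalyticAt ℝ (fun r => 1 + (W r).1) r :=
      analyticAt_const.add (analyticAt_fst.fun_comp (hWa r hr))
    exact (h1.inv (hpos' r hr).ne').analyticWithinAt
  · intro r hr
    have hp := hpos r hr
    refine ⟨?_, inv_pos.2 hp⟩
    have h1 := hWd r hr
    rw [sysG_apply] at h1
    have hpp := hd3 h1
    have h2 := (((hpp.const_mul 2).mul (hhd r hr)).mul (hasDerivAt_inv hr.ne'))
    have hev : deriv h =ᶠ[𝓝 r] fun s => 2 * (W s).2.2 * h s * s⁻¹ := by
      filter_upwards [Ioi_mem_nhds hr] with s hs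
      exact (hhd s hs).deriv
    have hdd := h2.congr_of_eventuallyEq hev
    rw [hdd.deriv, (hhd r hr).deriv, ← hmdef]
    simp [h, hσ r hr]
    field_simp
    ring
  · simp [h, hW00]
  · have h1 := hd1 (hfd.congr_of_eventuallyEq hW0)
    have h2 := (h1.const_add 1).inv (by rw [hW00]; simp)
    have h3 : HasDerivWithinAt h μ₁ (Ici 0) 0 := by
      refine h2.hasDerivWithinAt.congr_deriv ?_
      simp [hW00]
    exact h3.derivWithin (uniqueDiffOn_Ici 0 0 self_mem_Ici)

lemma hasDerivAt_pow_div (k : ℕ) (r : ℝ) (hr : r ≠ 0) :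
    HasDerivAt (fun r : ℝ => r ^ k) (k * r ^ k / r) r := by
  refine (hasDerivAt_pow k r).congr_deriv ?_
  rcases k with _ | k
  · simp
  · simp only [Nat.add_sub_cancel, pow_succ]
    field_simp

lemma local_unique (m lam : ℝ) (hm : 0 < m) (G H : ℝ → ℝ) (hG : AnalyticAt ℝ G 0)
    (hH : AnalyticAt ℝ H 0) (hG0 : G 0 = 1) (hH0 : H 0 = 1) (hd : deriv G 0 = deriv H 0)
    (eG : ∀ᶠ r in 𝓝[>] (0 : ℝ), 2 * r ^ 2 * G r * deriv (deriv G) r =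
      m * G r * (G r - 1) + r * deriv G r * (r * deriv G r - lam * r - m))
    (eH : ∀ᶠ r in 𝓝[>] (0 : ℝ), 2 * r ^ 2 * H r * deriv (deriv H) r =
      m * H r * (H r - 1) + r * deriv H r * (r * deriv H r - lam * r - m)) :
    ∀ᶠ r in 𝓝 (0 : ℝ), G r - H r = 0 := by
  by_contra hne
  have hW : AnalyticAt ℝ (fun r => G r - H r) 0 := hG.sub hH
  obtain ⟨k, u, hu, hu0, hWu⟩ := hW.exists_eventuallyEq_pow_smul_nonzero_iff.2 hne
  simp only [sub_zero, smul_eq_mul] at hWu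
  have hWu' : (fun r => G r - H r) =ᶠ[𝓝 0] fun r => r ^ k * u r := hWu
  -- exclude the simple zero
  have hk1 : k ≠ 1 := by
    rintro rfl
    have h1 : HasDerivAt (fun r => G r - H r) (deriv G 0 - deriv H 0) 0 :=
      hG.differentiableAt.hasDerivAt.sub hH.differentiableAt.hasDerivAt
    have h2 : HasDerivAt (fun r : ℝ => r ^ 1 * u r) (1 * u 0 + 0 * deriv u 0) 0 := by
      simp only [pow_one]
      exact (hasDerivAt_id (0 : ℝ)).mul hu.differentiableAt.hasDerivAt
    have h3 := h1.unique (h2.congr_of_eventuallyEq hWu')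
    apply hu0
    linarith
  have ev1 : ∀ᶠ r in 𝓝 (0 : ℝ), ∀ᶠ s in 𝓝 r, G s - H s = s ^ k * u s :=
    eventually_eventually_nhds.2 hWu
  have hd1' : ∀ᶠ r in 𝓝 (0 : ℝ), r ≠ 0 →
      deriv G r - deriv H r = r ^ k * ((k * u r + r * deriv u r) / r) := by
    filter_upwards [ev1, hu.eventually_analyticAt, hG.eventually_analyticAt,
      hH.eventually_analyticAt] with r h1 h2 h3 h4 hr
    have h5 : HasDerivAt (fun r => G r - H r) (deriv G r - deriv H r) r :=
      h3.differentiableAt.hasDerivAt.sub h4.differentiableAt.hasDerivAt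
    have h6 := ((hasDerivAt_pow_div k r hr).mul h2.differentiableAt.hasDerivAt).congr_of_eventuallyEq h1
    rw [h5.unique h6]
    field_simp
  have hd2' : ∀ᶠ r in 𝓝 (0 : ℝ), r ≠ 0 →
      deriv (deriv G) r - deriv (deriv H) r = r ^ k * ((k * (k - 1) * u r + 2 * k * r * deriv u r
        + r ^ 2 * deriv (deriv u) r) / r ^ 2) := by
    filter_upwards [eventually_eventually_nhds.2 hd1', hu.eventually_analyticAt,
      hG.eventually_analyticAt, hH.eventually_analyticAt] with r h1 h2 h3 h4 hr
    have h5 : HasDerivAt (fun r => deriv G r - deriv H r) (deriv (deriv G) r - deriv (deriv H) r) r :=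
      h3.deriv.differentiableAt.hasDerivAt.sub h4.deriv.differentiableAt.hasDerivAt
    have h6 := (hasDerivAt_pow_div k r hr).mul
      (((h2.differentiableAt.hasDerivAt.const_mul (k : ℝ)).add
        ((hasDerivAt_id r).mul h2.deriv.differentiableAt.hasDerivAt)).div (hasDerivAt_id r) hr)
    have h7 : (fun r => deriv G r - deriv H r) =ᶠ[𝓝 r]
        fun r => r ^ k * ((k * u r + r * deriv u r) / r) := by
      filter_upwards [h1, isOpen_ne.mem_nhds hr] with s hs hs'
      exact hs hs'
    rw [h5.unique (h6.congr_of_eventuallyEq h7)]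
    simp
    field_simp
    ring
  let F : ℝ → ℝ := fun r => 2 * (G r * (k * (k - 1) * u r + 2 * k * r * deriv u r
      + r ^ 2 * deriv (deriv u) r) + u r * r ^ 2 * deriv (deriv H) r)
    - m * u r * (G r + H r - 1)
    - (k * u r + r * deriv u r) * (r * (deriv G r + deriv H r) - lam * r - m)
  have hFc : ContinuousAt F 0 := by
    have c1 := hG.continuousAt
    have c2 := hH.continuousAt
    have c3 := hG.deriv.continuousAt
    have c4 := hH.deriv.continuousAt
    have c5 := hH.deriv.deriv.continuousAt
    have c6 := hu.continuousAt
    have c7 := hu.deriv.continuousAt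
    have c8 := hu.deriv.deriv.continuousAt
    fun_prop
  have hF0 : ∀ᶠ r in 𝓝[>] (0 : ℝ), F r = 0 := by
    filter_upwards [eG, eH, hWu.filter_mono nhdsWithin_le_nhds,
      hd1'.filter_mono nhdsWithin_le_nhds, hd2'.filter_mono nhdsWithin_le_nhds,
      self_mem_nhdsWithin] with r h1 h2 h3 h4 h5 hr
    have hr0 : r ≠ 0 := ne_of_gt hr
    have h4 := h4 hr0
    have h5 := h5 hr0
    have h6 : r * (deriv G r - deriv H r) = r ^ k * (k * u r + r * deriv u r) := by
      rw [h4]; field_simp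
    have h7 : r ^ 2 * (deriv (deriv G) r - deriv (deriv H) r) =
        r ^ k * (k * (k - 1) * u r + 2 * k * r * deriv u r + r ^ 2 * deriv (deriv u) r) := by
      rw [h5]; field_simp
    have hk0 : r ^ k ≠ 0 := pow_ne_zero _ hr0
    have h8 : r ^ k * F r = 0 := by
      simp only [F]
      linear_combination h1 - h2 - 2 * G r * h7 - (2 * r ^ 2 * deriv (deriv H) r
        - m * (G r + H r - 1)) * h3 + (r * (deriv G r + deriv H r) - lam * r - m) * h6
    exact (mul_eq_zero.1 h8).resolve_left hk0
  have hF00 : F 0 = 0 :=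
    tendsto_nhds_unique (hFc.tendsto.mono_left nhdsWithin_le_nhds)
      (tendsto_const_nhds.congr' (hF0.mono fun r hr => hr.symm))
  have h9 : ((k : ℝ) - 1) * (2 * k + m) * u 0 = 0 := by
    simp only [F, hG0, hH0] at hF00
    linear_combination hF00
  rcases mul_eq_zero.1 h9 with h | h
  · rcases mul_eq_zero.1 h with h | h
    · apply hk1
      have : (k : ℝ) = 1 := by linarith
      exact_mod_cast this
    · have : (0 : ℝ) ≤ k := Nat.cast_nonneg k
      linarith
  · exact hu0 h

lemma sol_ext (n : ℕ) (lam μ₁ : ℝ) (h : ℝ → ℝ) (hh : IsAnalyticSol n lam μ₁ h) :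
    ∃ H : ℝ → ℝ, AnalyticAt ℝ H 0 ∧ H 0 = 1 ∧ deriv H 0 = μ₁ ∧
      (∀ᶠ r in 𝓝[>] (0 : ℝ), h r = H r) ∧
      ∀ᶠ r in 𝓝[>] (0 : ℝ), 2 * r ^ 2 * H r * deriv (deriv H) r =
        ((n : ℝ) - 1) * H r * (H r - 1) +
          r * deriv H r * (r * deriv H r - lam * r - ((n : ℝ) - 1)) := by
  obtain ⟨ha, he, h0, h1⟩ := hh
  obtain ⟨H, hH, hHa⟩ := analyticWithinAt_iff_exists_analyticAt.1 (ha 0 self_mem_Ici)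
  rw [insert_eq_of_mem self_mem_Ici] at hH
  have hHr : ∀ᶠ r in 𝓝[>] (0 : ℝ), h r = H r :=
    hH.filter_mono (nhdsWithin_mono _ Ioi_subset_Ici_self)
  have hval : h 0 = H 0 := hH.self_of_nhdsWithin self_mem_Ici
  refine ⟨H, hHa, by rw [← hval, h0], ?_, hHr, ?_⟩
  · rw [← h1, hH.derivWithin_eq hval]
    exact (hHa.differentiableAt.derivWithin (uniqueDiffOn_Ici 0 0 self_mem_Ici)).symm
  · have h2 : ∀ᶠ r in 𝓝[>] (0 : ℝ), h =ᶠ[𝓝 r] H := by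
      have := eventually_eventually_nhdsWithin.2 hHr
      filter_upwards [this, self_mem_nhdsWithin] with r hr hr0
      rwa [IsOpen.nhdsWithin_eq isOpen_Ioi hr0] at hr
    filter_upwards [h2, self_mem_nhdsWithin] with r hr hr0
    have := (he r hr0).1
    rw [hr.self_of_nhds, hr.deriv_eq, hr.deriv.deriv_eq] at this
    exact this

lemma sol_unique (n : ℕ) (lam μ₁ : ℝ) (hn2 : 2 ≤ n) (g h : ℝ → ℝ)
    (hg : IsAnalyticSol n lam μ₁ g) (hh : IsAnalyticSol n lam μ₁ h) :
    EqOn g h (Ici 0) := by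
  have hm : (0 : ℝ) < (n : ℝ) - 1 := by
    have : (2 : ℝ) ≤ n := by exact_mod_cast hn2
    linarith
  obtain ⟨G, hGa, hG0, hG1, hgG, eG⟩ := sol_ext n lam μ₁ g hg
  obtain ⟨H, hHa, hH0, hH1, hhH, eH⟩ := sol_ext n lam μ₁ h hh
  have key := local_unique _ lam hm G H hGa hHa hG0 hH0 (by rw [hG1, hH1]) eG eH
  have hev : ∀ᶠ r in 𝓝[>] (0 : ℝ), g r = h r := by
    filter_upwards [hgG, hhH, key.filter_mono nhdsWithin_le_nhds] with r h1 h2 h3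
    rw [h1, h2]; linarith
  have hev2 : ∀ᶠ r in 𝓝[>] (0 : ℝ), g =ᶠ[𝓝 r] h := by
    filter_upwards [eventually_eventually_nhdsWithin.2 hev, self_mem_nhdsWithin] with r hr hr0
    rwa [IsOpen.nhdsWithin_eq isOpen_Ioi hr0] at hr
  obtain ⟨r0, hr0, hr0p⟩ := (hev2.and self_mem_nhdsWithin).exists
  have hnhd : ∀ f : ℝ → ℝ, AnalyticOn ℝ f (Ici 0) → AnalyticOnNhd ℝ f (Ioi 0) := by
    intro f hf
    rw [← isOpen_Ioi.analyticOn_iff_analyticOnNhd]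
    exact hf.mono Ioi_subset_Ici_self
  have hI := (hnhd g hg.1).eqOn_of_preconnected_of_eventuallyEq (hnhd h hh.1)
    isPreconnected_Ioi hr0p hr0
  intro r hr
  have hr' : (0 : ℝ) ≤ r := hr
  rcases hr'.eq_or_lt with rfl | hr''
  · rw [hg.2.2.1, hh.2.2.1]
  · exact hI hr''

theorem existence_uniqueness_analytic (lam μ₁ : ℝ) (n : ℕ) (hlam : 0 ≤ lam)
    (hn2 : 2 ≤ n) :
    ∃ h : ℝ → ℝ, IsAnalyticSol n lam μ₁ h ∧
      ∀ g : ℝ → ℝ, IsAnalyticSol n lam μ₁ g → Set.EqOn g h (Set.Ici 0) := by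
  obtain ⟨h, hh⟩ := exists_sol n lam μ₁ hlam hn2
  exact ⟨h, hh, fun g hg => sol_unique n lam μ₁ hn2 g h hg hh⟩
end

section
/- Let μ₁ < 0 and let n ≥ 2 be an integer. Suppose h ∈ C²((0,∞)) ∩ C¹([0,∞)) is a solution of the steady equation 2r²h(r)h''(r) = (n-1)h(r)(h(r)-1) + r h'(r)(r h'(r) - (n-1)), h(r) > 0 for r > 0, with h(0) = 1 and h'(0) = μ₁. Then h(r) → 0 as r → ∞. -/
open Set Filter Topology

/-- `h` is a solution of the steady equation
`2r²h h'' = (n-1)h(h-1) + r h'(r h' - (n-1))`, `h > 0` on `(0,∞)`,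
with `h ∈ C²((0,∞)) ∩ C¹([0,∞))`, `h(0) = 1` and `h'(0) = μ₁`. -/
def IsSteadySol (n : ℕ) (μ₁ : ℝ) (h : ℝ → ℝ) : Prop :=
  ContDiffOn ℝ 2 h (Set.Ioi 0) ∧ ContDiffOn ℝ 1 h (Set.Ici 0) ∧
  (∀ r : ℝ, 0 < r →
    2 * r ^ 2 * h r * deriv (deriv h) r =
      ((n : ℝ) - 1) * h r * (h r - 1) +
        r * deriv h r * (r * deriv h r - ((n : ℝ) - 1)) ∧ 0 < h r) ∧
  h 0 = 1 ∧ derivWithin h (Set.Ici 0) 0 = μ₁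

lemma log_unbdd (f : ℝ → ℝ) (a κ M : ℝ) (ha : 0 < a) (hκ : 0 < κ)
    (hd : ∀ r, a ≤ r → DifferentiableAt ℝ f r)
    (hf : ∀ r, a ≤ r → r * deriv f r ≤ -κ) : ∃ r, a ≤ r ∧ f r < M := by
  have hanti : AntitoneOn (fun r => f r + κ * Real.log r) (Set.Ici a) := by
    have hdd : ∀ r, a ≤ r → HasDerivAt (fun r => f r + κ * Real.log r)
        (deriv f r + κ * r⁻¹) r := fun r hr =>
      (hd r hr).hasDerivAt.add ((Real.hasDerivAt_log (by linarith)).const_mul κ)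
    apply antitoneOn_of_deriv_nonpos (convex_Ici a)
    · intro r hr
      exact (hdd r hr).continuousAt.continuousWithinAt
    · intro r hr
      rw [interior_Ici] at hr
      exact (hdd r (le_of_lt hr)).differentiableAt.differentiableWithinAt
    · intro r hr
      rw [interior_Ici] at hr
      have hr' : a < r := hr
      rw [(hdd r hr'.le).deriv]
      have h0 : 0 < r := by linarith
      have h1 := hf r hr'.le
      have : deriv f r + κ * r⁻¹ = (r * deriv f r + κ) * r⁻¹ := by
        field_simp
      rw [this]
      exact mul_nonpos_of_nonpos_of_nonneg (by linarith) (by positivity)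
  have ht : Tendsto (fun r => κ * Real.log r) atTop atTop :=
    Real.tendsto_log_atTop.const_mul_atTop hκ
  obtain ⟨r, hr, har⟩ := ((ht.eventually_gt_atTop (f a + κ * Real.log a - M)).and
    (eventually_ge_atTop a)).exists
  refine ⟨r, har, ?_⟩
  have := hanti (Set.mem_Ici.2 le_rfl) (Set.mem_Ici.2 har) har
  simp only at this
  linarith

lemma steady_deriv_neg (μ₁ : ℝ) (n : ℕ) (hμ : μ₁ < 0) (hn2 : 2 ≤ n)
    (h : ℝ → ℝ) (hsol : IsSteadySol n μ₁ h) :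
    ∀ r, 0 < r → deriv h r < 0 := by
  obtain ⟨h2, h1, hode, h0, hd0⟩ := hsol
  have hm : (1:ℝ) ≤ (n:ℝ) - 1 := by
    have : (2:ℝ) ≤ n := by exact_mod_cast hn2
    linarith
  set g := derivWithin h (Set.Ici 0) with hg
  have hgc : ContinuousOn g (Set.Ici 0) :=
    h1.continuousOn_derivWithin (uniqueDiffOn_Ici 0) le_rfl
  have hgd : ∀ r, 0 < r → g r = deriv h r := fun r hr =>
    derivWithin_of_mem_nhds (Ici_mem_nhds hr)
  by_contra hcon
  push Not at hcon
  obtain ⟨r1, hr1, hr1'⟩ := hcon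
  rw [← hgd r1 hr1] at hr1'
  have hgc1 : ContinuousOn g (Set.Icc 0 r1) := hgc.mono Set.Icc_subset_Ici_self
  have hne : (Set.Icc 0 r1 ∩ g ⁻¹' {0}).Nonempty := by
    obtain ⟨x, hx, hx0⟩ := intermediate_value_Icc hr1.le hgc1 (show (0:ℝ) ∈ _ from
      ⟨by rw [hd0]; exact hμ.le, hr1'⟩)
    exact ⟨x, hx, hx0⟩
  have hcl : IsCompact (Set.Icc 0 r1 ∩ g ⁻¹' {0}) :=
    isCompact_Icc.of_isClosed_subset
      (hgc1.preimage_isClosed_of_isClosed isClosed_Icc isClosed_singleton) Set.inter_subset_left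
  obtain ⟨s, ⟨hs, hs0⟩, hsl⟩ := hcl.exists_isLeast hne
  have hs0' : g s = 0 := hs0
  have hspos : 0 < s := by
    rcases hs.1.eq_or_lt with h' | h'
    · rw [← h', hd0] at hs0'; linarith
    · exact h'
  have hneg : ∀ r, 0 ≤ r → r < s → g r < 0 := by
    intro r hr hrs
    by_contra hc
    push Not at hc
    obtain ⟨x, hx, hx0⟩ := intermediate_value_Icc hr
      (hgc.mono Set.Icc_subset_Ici_self) (show (0:ℝ) ∈ _ from
      ⟨by rw [hd0]; exact hμ.le, hc⟩)
    have := hsl ⟨⟨hx.1, by linarith [hx.2, hs.2]⟩, hx0⟩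
    linarith [hx.2]
  have hanti : StrictAntiOn h (Set.Icc 0 s) := by
    apply strictAntiOn_of_deriv_neg (convex_Icc 0 s)
    · exact h1.continuousOn.mono Set.Icc_subset_Ici_self
    · intro r hr
      rw [interior_Icc] at hr
      rw [← hgd r hr.1]
      exact hneg r hr.1.le hr.2
  have hs1 : h s < 1 := by
    rw [← h0]
    exact hanti (Set.left_mem_Icc.2 hspos.le) (Set.right_mem_Icc.2 hspos.le) hspos
  obtain ⟨hE, hpos⟩ := hode s hspos
  rw [← hgd s hspos, hs0'] at hE
  have hdd : deriv (deriv h) s < 0 := by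
    by_contra hc
    push Not at hc
    have a1 : 0 ≤ 2 * s ^ 2 * h s * deriv (deriv h) s := by positivity
    have a2 : 0 < ((n:ℝ) - 1) * h s * (1 - h s) :=
      mul_pos (mul_pos (by linarith) hpos) (by linarith)
    nlinarith
  have hdiff : DifferentiableAt ℝ (deriv h) s := by
    by_contra hc
    rw [deriv_zero_of_not_differentiableAt hc] at hdd
    exact lt_irrefl _ hdd
  have hsl' := (hasDerivAt_iff_tendsto_slope.1 hdiff.hasDerivAt).eventually_lt_const hdd
  have hsl2 : ∀ᶠ y in 𝓝[<] s, slope (deriv h) s y < 0 :=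
    hsl'.filter_mono (nhdsWithin_mono _ (fun x hx => ne_of_lt hx))
  have hin : ∀ᶠ y in 𝓝[<] s, y ∈ Set.Ioo 0 s := Ioo_mem_nhdsLT hspos
  obtain ⟨y, hy1, hy2⟩ := (hsl2.and hin).exists
  rw [slope_def_field, ← hgd s hspos, hs0', ← hgd y hy2.1] at hy1
  have := hneg y hy2.1.le hy2.2
  have : 0 < (g y - 0) / (y - s) := div_pos_of_neg_of_neg (by linarith) (by linarith [hy2.2])
  linarith

theorem steady_tendsto_zero (μ₁ : ℝ) (n : ℕ) (hμ : μ₁ < 0) (hn2 : 2 ≤ n)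
    (h : ℝ → ℝ) (hsol : IsSteadySol n μ₁ h) :
    Filter.Tendsto h Filter.atTop (nhds 0) := by
  have hneg := steady_deriv_neg μ₁ n hμ hn2 h hsol
  obtain ⟨h2, h1, hode, h0, hd0⟩ := hsol
  have hm : (1:ℝ) ≤ (n:ℝ) - 1 := by
    have : (2:ℝ) ≤ n := by exact_mod_cast hn2
    linarith
  set m : ℝ := (n:ℝ) - 1 with hmdef
  have hanti : StrictAntiOn h (Set.Ici 0) := by
    apply strictAntiOn_of_deriv_neg (convex_Ici 0) h1.continuousOn
    intro r hr
    rw [interior_Ici] at hr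
    exact hneg r hr
  have hdh : ∀ r, 0 < r → DifferentiableAt ℝ h r := fun r hr => by
    by_contra hc
    have := hneg r hr
    rw [deriv_zero_of_not_differentiableAt hc] at this
    exact lt_irrefl _ this
  have hddh : ∀ r, 0 < r → DifferentiableAt ℝ (deriv h) r := fun r hr => by
    have : ContDiffOn ℝ 1 (deriv h) (Set.Ioi 0) :=
      h2.deriv_of_isOpen isOpen_Ioi (by norm_num)
    exact (this.differentiableOn (by norm_num)).differentiableAt (Ioi_mem_nhds hr)
  by_contra hnt
  obtain ⟨ε, hε, hεh⟩ : ∃ ε > 0, ∀ r, 0 < r → ε ≤ h r := by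
    by_contra hc
    push Not at hc
    apply hnt
    rw [Metric.tendsto_atTop]
    intro ε hε
    obtain ⟨R, hR, hRε⟩ := hc ε hε
    refine ⟨R, fun r hr => ?_⟩
    have hr0 : 0 < r := lt_of_lt_of_le hR hr
    rw [Real.dist_eq, sub_zero, abs_of_pos (hode r hr0).2]
    exact lt_of_le_of_lt (hanti.antitoneOn hR.le hr0.le hr) hRε
  have hh1 : h 1 < 1 := by
    conv_rhs => rw [← h0]
    exact hanti (Set.mem_Ici.2 le_rfl) (Set.mem_Ici.2 zero_le_one) zero_lt_one
  have hε1 : ε < 1 := lt_of_le_of_lt (hεh 1 one_pos) hh1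
  obtain ⟨c, hc⟩ : ∃ c, c = 1 - h 1 := ⟨_, rfl⟩
  have hc0 : 0 < c := by linarith
  have hc1 : c < 1 := by linarith [(hode 1 one_pos).2]
  have hle : ∀ r, 1 ≤ r → h r ≤ 1 - c := fun r hr => by
    have := hanti.antitoneOn (Set.mem_Ici.2 zero_le_one)
      (Set.mem_Ici.2 (zero_le_one.trans hr)) hr
    linarith
  obtain ⟨e, he⟩ : ∃ e, e = ε * c := ⟨_, rfl⟩
  have he0 : 0 < e := by rw [he]; positivity
  have he1 : e < 1 := by rw [he]; nlinarith
  obtain ⟨δ, hδ⟩ : ∃ δ, δ = e / 4 := ⟨_, rfl⟩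
  have hδ0 : 0 < δ := by linarith
  let p : ℝ → ℝ := fun r => r * deriv h r
  have hp : ∀ r, 0 < r → HasDerivAt p (1 * deriv h r + r * deriv (deriv h) r) r :=
    fun r hr => (hasDerivAt_id r).mul (hddh r hr).hasDerivAt
  have hp0 : ∀ r, 0 < r → p r < 0 := fun r hr => mul_neg_of_pos_of_neg hr (hneg r hr)
  have key : ∀ r, 1 ≤ r → -δ ≤ p r → r * deriv p r ≤ -(e / 4) := by
    intro r hr hpr
    have hr0 : 0 < r := by linarith
    obtain ⟨hE, hpos⟩ := hode r hr0
    have hpn := hp0 r hr0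
    have hE2 : 2 * h r * (r * deriv p r) =
        m * h r * (h r - 1) + p r ^ 2 + (2 * h r - m) * p r := by
      rw [(hp r hr0).deriv]
      simp only [p]
      linear_combination hE
    have b1 : e ≤ h r * (1 - h r) := by
      rw [he]
      exact mul_le_mul (hεh r hr0) (by linarith [hle r hr]) hc0.le hpos.le
    have b2 : m * e ≤ m * (h r * (1 - h r)) := mul_le_mul_of_nonneg_left b1 (by linarith)
    have b3 : p r ^ 2 ≤ δ := by nlinarith
    have b4 : h r * p r < 0 := mul_neg_of_pos_of_neg hpos hpn
    have b5 : -(m * p r) ≤ m * δ := by nlinarith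
    have b6 : 2 * h r * (r * deriv p r) ≤ -(e / 2) := by
      rw [hE2]
      subst hδ
      nlinarith
    by_contra hcon
    push Not at hcon
    have hh : h r < 1 := by linarith [hle r hr]
    nlinarith
  obtain ⟨R, hR, hpR⟩ : ∃ R, 1 ≤ R ∧ p R ≤ -δ := by
    by_contra hcon
    push Not at hcon
    obtain ⟨r, hr, hr'⟩ := log_unbdd p 1 (e / 4) (-δ) one_pos (by linarith)
      (fun r hr => (hp r (by linarith)).differentiableAt)
      (fun r hr => key r hr (hcon r hr).le)
    linarith [hcon r hr]
  have hbar : ∀ r, R ≤ r → p r ≤ -δ := by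
    intro r hr
    refine image_le_of_deriv_right_lt_deriv_boundary (f := p) (f' := deriv p) (a := R) (b := r)
      (B := fun _ => -δ) (B' := fun _ => 0) ?_ ?_ hpR (fun x => hasDerivAt_const x _) ?_
      (Set.right_mem_Icc.2 hr)
    · intro x hx
      exact (hp x (by linarith [hx.1])).continuousAt.continuousWithinAt
    · intro x hx
      exact (hp x (by linarith [hx.1])).differentiableAt.hasDerivAt.hasDerivWithinAt
    · intro x hx hxe
      have := key x (by linarith [hx.1]) hxe.ge
      have hx0 : 0 < x := by linarith [hx.1]
      by_contra hcon
      push Not at hcon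
      nlinarith [mul_nonneg hx0.le hcon]
  obtain ⟨r, hr, hr'⟩ := log_unbdd h R δ 0 (by linarith) hδ0
    (fun r hr => hdh r (by linarith)) hbar
  linarith [(hode r (by linarith)).2]
end

section
/- Let μ₁ < 0 and let n ≥ 2 be an integer. Suppose h ∈ C²((0,∞)) ∩ C¹([0,∞)) is a solution of the steady equation 2r²h(r)h''(r) = (n-1)h(r)(h(r)-1) + r h'(r)(r h'(r) - (n-1)), h(r) > 0 for r > 0, with h(0) = 1 and h'(0) = μ₁. Then r h'(r)/h(r) → -1 as r → ∞. -/
open Set Filter Topology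

lemma aux_escape (f f' : ℝ → ℝ) (a c : ℝ) (hf : ∀ t, HasDerivAt f (f' t) t)
    (hc : ∀ t, a ≤ t → f' t ≤ -c) : ∀ t, a ≤ t → f t ≤ f a - c * (t - a) := by
  intro t ht
  have h1 : ∀ x, HasDerivAt (fun s => f a - c * (s - a)) (-c) x := by
    intro x
    have := (((hasDerivAt_id x).sub_const a).const_mul c).const_sub (f a)
    simpa using this
  refine image_le_of_deriv_right_le_deriv_boundary (a := a) (b := t) (f := f) (f' := f')
    (B := fun s => f a - c * (s - a)) (B' := fun _ => -c)
    (fun x _ => (hf x).continuousAt.continuousWithinAt)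
    (fun x _ => (hf x).hasDerivWithinAt) (by simp)
    (fun x _ => (h1 x).continuousAt.continuousWithinAt)
    (fun x _ => (h1 x).hasDerivWithinAt) (fun x hx => hc x hx.1) ⟨ht, le_refl t⟩

lemma aux_barrier (f f' : ℝ → ℝ) (a b c : ℝ) (hf : ∀ t, HasDerivAt f (f' t) t) (hab : a ≤ b)
    (h0 : f a ≤ c) (hc : ∀ t, a ≤ t → t < b → f t = c → f' t < 0) : f b ≤ c :=
  image_le_of_deriv_right_lt_deriv_boundary (a := a) (b := b) (f := f) (f' := f')
    (B := fun _ => c) (B' := fun _ => 0)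
    (fun x _ => (hf x).continuousAt.continuousWithinAt)
    (fun x _ => (hf x).hasDerivWithinAt) h0
    (fun x => hasDerivAt_const x c) (fun x hx => hc x hx.1 hx.2) ⟨hab, le_refl b⟩

lemma aux_main (m : ℝ) (hm : 1 ≤ m) (H W : ℝ → ℝ) (hpos : ∀ t, 0 < H t)
    (hH : ∀ t, HasDerivAt H (H t * W t) t)
    (hW : ∀ t, HasDerivAt W ((-(W t)^2 + 2 * W t + m - m / H t * (1 + W t)) / 2) t)
    (a : ℝ) (ha1 : H a < 1) (ha2 : W a < 0) : Tendsto W atTop (𝓝 (-1)) := by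
  obtain ⟨ε, hε, hε1, hε2⟩ : ∃ ε > 0, W a ≤ -ε ∧ H a ≤ 1 - ε :=
    ⟨min (-W a) (1 - H a), lt_min (by linarith) (by linarith),
      by linarith [min_le_left (-W a) (1 - H a)], by linarith [min_le_right (-W a) (1 - H a)]⟩
  have hWc : Continuous W := continuous_iff_continuousAt.2 fun t => (hW t).continuousAt
  have key : ∀ b, a ≤ b → (∀ t, a ≤ t → t < b → W t < 0) → W b ≤ -ε := by
    intro b hab hneg
    refine aux_barrier W _ a b (-ε) hW hab hε1 ?_
    intro t hat htb hWt
    have hHt : H t ≤ H a := by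
      have hanti : AntitoneOn H (Icc a t) := by
        refine antitoneOn_of_deriv_nonpos (convex_Icc a t)
          (fun x _ => (hH x).continuousAt.continuousWithinAt)
          (fun x _ => (hH x).differentiableAt.differentiableWithinAt) ?_
        intro x hx
        rw [interior_Icc] at hx
        rw [(hH x).deriv]
        nlinarith [hpos x, hneg x hx.1.le (hx.2.trans htb)]
      exact hanti ⟨le_refl a, hat⟩ ⟨hat, le_refl t⟩ hat
    have h1 : m ≤ m / H t * (1 - ε) := by
      rw [div_mul_eq_mul_div, le_div_iff₀ (hpos t)]
      nlinarith
    simp only [hWt]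
    nlinarith
  have hWneg : ∀ t, a ≤ t → W t < 0 := by
    by_contra! hcon
    obtain ⟨t1, ht1, hWt1⟩ := hcon
    have hcomp : IsCompact (Icc a t1 ∩ W ⁻¹' (Ici 0)) :=
      isCompact_Icc.inter_right (isClosed_Ici.preimage hWc)
    obtain ⟨s, hs, hmin⟩ := hcomp.exists_isLeast ⟨t1, ⟨ht1, le_refl t1⟩, hWt1⟩
    have hs2 : 0 ≤ W s := hs.2
    have := key s hs.1.1 (fun t hat hts => by
      by_contra! h0
      exact absurd (hmin ⟨⟨hat, hts.le.trans hs.1.2⟩, h0⟩) (not_le.2 hts))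
    linarith
  have hWε : ∀ t, a ≤ t → W t ≤ -ε := fun t ht => key t ht fun s hs _ => hWneg s hs
  have hlog : ∀ t, HasDerivAt (fun s => Real.log (H s)) (W t) t := by
    intro t
    have := (hH t).log (hpos t).ne'
    rwa [mul_div_cancel_left₀ _ (hpos t).ne'] at this
  have hesc : ∀ A B c : ℝ, 0 < c → ∃ t, A ≤ t ∧ B - c * (t - A) < -(1:ℝ) := by
    intro A B c hc
    refine ⟨A + (|B| + 2) / c, by have : 0 ≤ (|B| + 2) / c := by positivity
                                  linarith, ?_⟩
    have : c * (A + (|B| + 2) / c - A) = |B| + 2 := by field_simp; ring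
    rw [this]
    linarith [le_abs_self B]
  have hlin : Tendsto (fun t => Real.log (H a) - ε * (t - a)) atTop atBot := by
    have h1 : Tendsto (fun t : ℝ => -ε * t) atTop atBot :=
      (tendsto_id).const_mul_atTop_of_neg (by linarith)
    have h2 := tendsto_atBot_add_const_right atTop (Real.log (H a) + ε * a) h1
    refine h2.congr fun t => by ring
  have hlogt : Tendsto (fun t => Real.log (H t)) atTop atBot := by
    refine tendsto_atBot_mono' atTop ?_ hlin
    filter_upwards [eventually_ge_atTop a] with t ht
    exact aux_escape _ W a ε hlog hWε t ht
  have hH0 : Tendsto H atTop (𝓝 0) :=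
    (Real.tendsto_exp_atBot.comp hlogt).congr fun t => Real.exp_log (hpos t)
  have hmain : ∀ δ, 0 < δ → δ < 1 → ∃ T, ∀ t, T ≤ t → -1 - δ ≤ W t ∧ W t ≤ -1 + δ := by
    intro δ hδ hδ1
    have hev : ∀ᶠ t in atTop, H t < δ * m / (m + 9) :=
      hH0.eventually (gt_mem_nhds (by positivity))
    obtain ⟨T, hT⟩ := eventually_atTop.1 (hev.and (eventually_ge_atTop a))
    have hbig : ∀ t, T ≤ t → m + 9 ≤ m / H t * δ := by
      intro t ht
      have h1 := (hT t ht).1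
      rw [lt_div_iff₀ (by linarith)] at h1
      rw [div_mul_eq_mul_div, le_div_iff₀ (hpos t)]
      nlinarith
    have hmH : ∀ t, 0 < m / H t := fun t => div_pos (by linarith) (hpos t)
    -- upper
    obtain ⟨t1, ht1, hWt1⟩ : ∃ t, T ≤ t ∧ W t ≤ -1 + δ := by
      by_contra! hcon
      have h1 := aux_escape W _ T 1 hW (fun t ht => by
        have h2 := hcon t ht
        have h3 := hbig t ht
        have h4 := hWneg t (hT t ht).2
        have h5 : m / H t * δ ≤ m / H t * (1 + W t) :=
          mul_le_mul_of_nonneg_left (by linarith) (hmH t).le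
        nlinarith [sq_nonneg (W t)])
      obtain ⟨t, ht, hlt⟩ := hesc T (W T) 1 one_pos
      linarith [h1 t ht, hcon t ht]
    have hup : ∀ t, t1 ≤ t → W t ≤ -1 + δ := fun t ht =>
      aux_barrier W _ t1 t _ hW ht hWt1 (fun s hs _ hWs => by
        have h3 := hbig s (ht1.trans hs)
        simp only [hWs]
        have : m / H s * (1 + (-1 + δ)) = m / H s * δ := by ring
        rw [this]
        nlinarith [sq_nonneg (-1 + δ)])
    obtain ⟨t2, ht2, hWt2⟩ : ∃ t, T ≤ t ∧ -W t ≤ 1 + δ := by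
      by_contra! hcon
      have hQ : ∀ t, HasDerivAt (fun s => -(H s * W s))
          (-(H t * W t * W t + H t *
            ((-(W t)^2 + 2 * W t + m - m / H t * (1 + W t)) / 2))) t :=
        fun t => ((hH t).mul (hW t)).neg
      have h1 := aux_escape _ _ T (m * δ / 2) hQ (fun t ht => by
        have h2 := hcon t ht
        have h6 : H t * (m / H t) = m := mul_div_cancel₀ _ (hpos t).ne'
        have h7 : -(H t * W t * W t + H t *
            ((-(W t)^2 + 2 * W t + m - m / H t * (1 + W t)) / 2))
            = -(H t * ((W t + 1)^2 + (m - 1)) / 2) + H t * (m / H t) * (1 + W t) / 2 := by ring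
        rw [h7, h6]
        have h8 : 0 ≤ H t * ((W t + 1)^2 + (m - 1)) :=
          mul_nonneg (hpos t).le (by nlinarith [sq_nonneg (W t + 1)])
        nlinarith)
      obtain ⟨t, ht, hlt⟩ := hesc T (-(H T * W T)) (m * δ / 2) (by positivity)
      have h9 := h1 t ht
      have h10 := hWneg t (hT t ht).2
      nlinarith [hpos t]
    have hlow : ∀ t, t2 ≤ t → -W t ≤ 1 + δ := fun t ht =>
      aux_barrier (fun s => -W s) _ t2 t _ (fun s => (hW s).neg) ht hWt2 (fun s hs _ hWs => by
        have h3 := hbig s (ht2.trans hs)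
        have hWs' : W s = -1 - δ := by linarith
        simp only [hWs']
        have : m / H s * (1 + (-1 - δ)) = -(m / H s * δ) := by ring
        rw [this]
        nlinarith)
    exact ⟨max t1 t2, fun t ht => ⟨by linarith [hlow t ((le_max_right _ _).trans ht)],
      hup t ((le_max_left _ _).trans ht)⟩⟩
  rw [Metric.tendsto_atTop]
  intro e he
  obtain ⟨T, hT⟩ := hmain (min (e/2) (1/2)) (by positivity)
    (lt_of_le_of_lt (min_le_right _ _) (by norm_num))
  refine ⟨T, fun t ht => ?_⟩
  have := hT t ht
  have h2 := min_le_left (e/2) (1/2)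
  rw [Real.dist_eq, abs_lt]
  constructor <;> linarith [this.1, this.2]

theorem steady_log_derivative_limit (μ₁ : ℝ) (n : ℕ) (hμ : μ₁ < 0) (hn2 : 2 ≤ n)
    (h : ℝ → ℝ) (hsol : IsSteadySol n μ₁ h) :
    Filter.Tendsto (fun r : ℝ => r * deriv h r / h r) Filter.atTop (nhds (-1)) := by
  obtain ⟨hC2, hC1, hode, h0, hd0⟩ := hsol
  have hn : (2:ℝ) ≤ n := by exact_mod_cast hn2
  have hD1 : ∀ r, 0 < r → HasDerivAt h (deriv h r) r := fun r hr =>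
    ((hC2.differentiableOn (by norm_num)).differentiableAt (Ioi_mem_nhds hr)).hasDerivAt
  have hD2 : ∀ r, 0 < r → HasDerivAt (deriv h) (deriv (deriv h) r) r := fun r hr =>
    (((contDiffOn_succ_iff_deriv_of_isOpen (n := 1) isOpen_Ioi).1
      (by simpa [one_add_one_eq_two] using hC2)).2.2.differentiableOn
        (by norm_num) |>.differentiableAt (Ioi_mem_nhds hr)).hasDerivAt
  -- starting point
  obtain ⟨r0, hr0, hr1, hr2⟩ : ∃ r0, 0 < r0 ∧ h r0 < 1 ∧ deriv h r0 < 0 := by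
    have hcd : ContinuousOn (derivWithin h (Ici 0)) (Ici 0) :=
      hC1.continuousOn_derivWithin (uniqueDiffOn_Ici 0) le_rfl
    have hev : ∀ᶠ r in 𝓝[≥] (0:ℝ), derivWithin h (Ici 0) r < 0 :=
      (hcd 0 self_mem_Ici).eventually (gt_mem_nhds (by rw [hd0]; exact hμ))
    obtain ⟨u, hu, hsub⟩ := (mem_nhdsGE_iff_exists_Ico_subset).1 hev
    have hu0 : (0:ℝ) < u := hu
    have hneg : ∀ r, 0 < r → r < u → deriv h r < 0 := by
      intro r hr hru
      have : derivWithin h (Ici 0) r < 0 := hsub ⟨hr.le, hru⟩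
      rwa [derivWithin_of_mem_nhds (Ici_mem_nhds hr)] at this
    refine ⟨u/2, by linarith, ?_, hneg _ (by linarith) (by linarith)⟩
    have hanti : StrictAntiOn h (Icc 0 (u/2)) := by
      refine strictAntiOn_of_deriv_neg (convex_Icc _ _)
        (hC1.continuousOn.mono fun x hx => hx.1) ?_
      intro x hx
      rw [interior_Icc] at hx
      exact hneg x hx.1 (by linarith [hx.2])
    have := hanti ⟨le_refl _, by linarith⟩ ⟨by linarith, le_refl _⟩ (show (0:ℝ) < u/2 by linarith)
    rwa [h0] at this
  have hE := Real.hasDerivAt_exp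
  have hHd : ∀ t, HasDerivAt (fun t => h (Real.exp t)) (deriv h (Real.exp t) * Real.exp t) t :=
    fun t => (hD1 _ (Real.exp_pos t)).comp t (hE t)
  have hH'd : ∀ t, HasDerivAt (fun t => deriv h (Real.exp t))
      (deriv (deriv h) (Real.exp t) * Real.exp t) t :=
    fun t => (hD2 _ (Real.exp_pos t)).comp t (hE t)
  have hpos : ∀ t, 0 < h (Real.exp t) := fun t => (hode _ (Real.exp_pos t)).2
  have hlim := aux_main ((n:ℝ) - 1) (by linarith) (fun t => h (Real.exp t))
    (fun t => Real.exp t * deriv h (Real.exp t) / h (Real.exp t)) hpos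
    (fun t => by
      convert hHd t using 1
      have := (hpos t).ne'
      field_simp)
    (fun t => by
      refine HasDerivAt.congr_deriv (((hE t).mul (hH'd t)).div (hHd t) (hpos t).ne') ?_
      have h1 := (hpos t).ne'
      have h2 := (hode _ (Real.exp_pos t)).1
      simp only [Pi.mul_apply]
      field_simp
      linear_combination h2)
    (Real.log r0) (by simpa [Real.exp_log hr0] using hr1) (by
      simp only [Real.exp_log hr0]
      exact div_neg_of_neg_of_pos (mul_neg_of_pos_of_neg hr0 hr2) (hode _ hr0).2)
  refine (hlim.comp Real.tendsto_log_atTop).congr' ?_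
  filter_upwards [eventually_gt_atTop 0] with r hr
  simp [Real.exp_log hr]
end

section
/- Let μ₁ < 0 and let n ≥ 2 be an integer. Suppose h ∈ C²((0,∞)) ∩ C¹([0,∞)) is a solution of the steady equation 2r²h(r)h''(r) = (n-1)h(r)(h(r)-1) + r h'(r)(r h'(r) - (n-1)), h(r) > 0 for r > 0, with h(0) = 1 and h'(0) = μ₁. Then the limit b₁ := lim_{r→∞} r h(r) exists and lies in [0,∞), with b₁ > 0 when n ≥ 4. Moreover lim_{r→∞} r(r h'(r)/h(r) + 1) = ((n-4)/(n-1)) · b₁. -/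
open Set Filter Topology

lemma barrierA (f f' : ℝ → ℝ) (a δ : ℝ) (hd : ∀ x, a ≤ x → HasDerivAt f (f' x) x)
    (ha : f a ≤ δ)
    (H : ∀ x, a ≤ x → (∀ y, a ≤ y → y ≤ x → f y ≤ δ) → f x = δ → f' x < 0) :
    ∀ x, a ≤ x → f x ≤ δ := by
  by_contra hcon
  push Not at hcon
  obtain ⟨b, hab, hb⟩ := hcon
  set S : Set ℝ := {x | a ≤ x ∧ δ < f x} with hS
  have hbS : b ∈ S := ⟨hab, hb⟩
  have hbdd : BddBelow S := ⟨a, fun x hx => hx.1⟩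
  set c := sInf S with hc
  have hac : a ≤ c := le_csInf ⟨b, hbS⟩ (fun x hx => hx.1)
  have hlt : ∀ y, a ≤ y → y < c → f y ≤ δ := by
    intro y hy hyc
    by_contra h1
    push Not at h1
    exact absurd (csInf_le hbdd (show y ∈ S from ⟨hy, h1⟩)) (not_le.mpr hyc)
  have hcont : ContinuousAt f c := (hd c hac).continuousAt
  have hfc : f c ≤ δ := by
    rcases hac.eq_or_lt with h1 | h1
    · rw [← h1]; exact ha
    · have : Tendsto f (𝓝[<] c) (𝓝 (f c)) := hcont.tendsto.mono_left nhdsWithin_le_nhds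
      refine le_of_tendsto this ?_
      filter_upwards [Ioo_mem_nhdsLT h1] with y hy
      exact hlt y hy.1.le hy.2
  have hcl : c ∈ closure S := csInf_mem_closure ⟨b, hbS⟩ hbdd
  have hfc2 : δ ≤ f c := by
    by_contra h1
    push Not at h1
    have h2 : ∀ᶠ y in 𝓝 c, f y < δ := hcont.eventually (gt_mem_nhds h1)
    obtain ⟨y, hy1, hy2⟩ := mem_closure_iff_nhds.mp hcl _ h2
    exact absurd hy2.2 (not_lt.mpr (le_of_lt hy1))
  have heq : f c = δ := le_antisymm hfc hfc2
  have hneg : f' c < 0 := by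
    apply H c hac _ heq
    intro y hy hyc
    rcases hyc.eq_or_lt with h1 | h1
    · rw [h1]; exact hfc
    · exact hlt y hy h1
  have hslope := (hasDerivAt_iff_tendsto_slope.mp (hd c hac)).eventually (gt_mem_nhds hneg)
  rw [eventually_nhdsWithin_iff] at hslope
  obtain ⟨y, hy1, hy2⟩ := mem_closure_iff_nhds.mp hcl _ hslope
  have hcy : c ≤ y := csInf_le hbdd hy2
  have hne : y ≠ c := by
    rintro rfl
    exact absurd hy2.2 (not_lt.mpr hfc)
  have hcy' : c < y := lt_of_le_of_ne hcy (Ne.symm hne)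
  have h3 : slope f c y < 0 := hy1 hne
  rw [slope_def_field, div_lt_iff₀ (by linarith)] at h3
  have := hy2.2
  linarith

lemma antiD (f D : ℝ → ℝ) (a b : ℝ) (ha : 0 < a) (hab : a ≤ b)
    (hd : ∀ x, a ≤ x → x ≤ b → HasDerivAt f (D x / x) x)
    (hD : ∀ x, a ≤ x → x ≤ b → D x ≤ 0) : f b ≤ f a := by
  have : AntitoneOn f (Icc a b) := by
    apply antitoneOn_of_deriv_nonpos (convex_Icc a b)
    · intro x hx; exact (hd x hx.1 hx.2).continuousAt.continuousWithinAt
    · intro x hx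
      rw [interior_Icc] at hx
      exact (hd x hx.1.le hx.2.le).differentiableAt.differentiableWithinAt
    · intro x hx
      rw [interior_Icc] at hx
      rw [(hd x hx.1.le hx.2.le).deriv]
      exact div_nonpos_of_nonpos_of_nonneg (hD x hx.1.le hx.2.le) (by linarith [hx.1])
  exact this ⟨le_rfl, hab⟩ ⟨hab, le_rfl⟩ hab

lemma trapB (f D : ℝ → ℝ) (δ c : ℝ) (hc : 0 < c)
    (hd : ∀ᶠ x in atTop, HasDerivAt f (D x / x) x)
    (H : ∀ᶠ x in atTop, δ ≤ f x → D x ≤ -c) :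
    ∀ᶠ x in atTop, f x ≤ δ := by
  obtain ⟨R, hR⟩ := eventually_atTop.mp (hd.and (H.and (eventually_gt_atTop (0:ℝ))))
  have hR0 : 0 < R := (hR R le_rfl).2.2
  have hex : ∃ a, R ≤ a ∧ f a ≤ δ := by
    by_contra hcon
    push Not at hcon
    have h1 : ∀ b, R ≤ b → f b + c * Real.log b ≤ f R + c * Real.log R := by
      intro b hb
      refine antiD (fun x => f x + c * Real.log x) (fun x => D x + c) R b hR0 hb ?_ ?_
      · intro x hx _
        have hx0 : 0 < x := by linarith
        have := (hR x hx).1.add ((Real.hasDerivAt_log hx0.ne').const_mul c)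
        refine HasDerivAt.congr_deriv (this) ?_
        ring
      · intro x hx _
        have := (hR x hx).2.1 (hcon x hx).le
        try simp only
        linarith
    have h2 : Tendsto (fun b => c * Real.log b) atTop atTop :=
      Real.tendsto_log_atTop.const_mul_atTop hc
    obtain ⟨b, hb1, hb2⟩ := ((h2.eventually_gt_atTop (f R + c * Real.log R - δ)).and
      (eventually_ge_atTop R)).exists
    have := h1 b hb2
    have := hcon b hb2
    linarith
  obtain ⟨a, hRa, ha⟩ := hex
  filter_upwards [eventually_ge_atTop a] with x hx
  refine barrierA f (fun x => D x / x) a δ (fun x hx => (hR x (hRa.trans hx)).1) ha ?_ x hx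
  intro x hx _ he
  have h1 := (hR x (hRa.trans hx)).2.1 he.ge
  have h2 := (hR x (hRa.trans hx)).2.2
  exact div_neg_of_neg_of_pos (by linarith) h2

lemma trapB' (f D : ℝ → ℝ) (δ c : ℝ) (hc : 0 < c)
    (hd : ∀ᶠ x in atTop, HasDerivAt f (D x / x) x)
    (H : ∀ᶠ x in atTop, f x ≤ δ → c ≤ D x) :
    ∀ᶠ x in atTop, δ ≤ f x := by
  have := trapB (fun x => - f x) (fun x => - D x) (-δ) c hc
    (by filter_upwards [hd] with x hx
        refine HasDerivAt.congr_deriv (hx.neg) ?_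
        ring)
    (by filter_upwards [H] with x hx h1
        have := hx (by linarith)
        linarith)
  filter_upwards [this] with x hx
  linarith

lemma convC (f g D E : ℝ → ℝ) (hg : Tendsto g atTop (𝓝 0))
    (hd : ∀ᶠ x in atTop, HasDerivAt f (D x / x) x)
    (hdg : ∀ᶠ x in atTop, HasDerivAt g (E x / x) x)
    (h1 : ∀ᶠ x in atTop, D x + E x ≤ 0) (h2 : ∀ᶠ x in atTop, 0 ≤ D x - E x)
    (hpos : ∀ᶠ x in atTop, 0 ≤ g x) :
    ∃ L, Tendsto f atTop (𝓝 L) := by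
  obtain ⟨R, hR⟩ := eventually_atTop.mp
    (hd.and (hdg.and (h1.and (h2.and (hpos.and (eventually_gt_atTop (0:ℝ)))))))
  have hR0 : 0 < R := (hR R le_rfl).2.2.2.2.2
  have hA : ∀ a b, R ≤ a → a ≤ b → f b + g b ≤ f a + g a := by
    intro a b ha hab
    refine antiD (fun x => f x + g x) (fun x => D x + E x) a b (by linarith) hab ?_ ?_
    · intro x hx _
      refine HasDerivAt.congr_deriv ((hR x (ha.trans hx)).1.add (hR x (ha.trans hx)).2.1) ?_
      ring
    · intro x hx _
      exact (hR x (ha.trans hx)).2.2.1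
  have hB : ∀ a b, R ≤ a → a ≤ b → -(f b - g b) ≤ -(f a - g a) := by
    intro a b ha hab
    refine antiD (fun x => -(f x - g x)) (fun x => -(D x - E x)) a b (by linarith) hab ?_ ?_
    · intro x hx _
      refine HasDerivAt.congr_deriv (((hR x (ha.trans hx)).1.sub (hR x (ha.trans hx)).2.1).neg) ?_
      ring
    · intro x hx _
      have := (hR x (ha.trans hx)).2.2.2.1
      try simp only
      linarith
  have hanti : Antitone (fun x => f (max R x) + g (max R x)) := by
    intro a b hab
    exact hA _ _ (le_max_left _ _) (max_le_max_left _ hab)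
  have hbd : BddBelow (range (fun x => f (max R x) + g (max R x))) := by
    refine ⟨f R - g R, ?_⟩
    rintro _ ⟨x, rfl⟩
    have := hB R (max R x) le_rfl (le_max_left _ _)
    have := (hR (max R x) (le_max_left _ _)).2.2.2.2.1
    try simp only
    linarith
  have ht := tendsto_atTop_ciInf hanti hbd
  refine ⟨_, (ht.sub hg).congr' ?_⟩
  filter_upwards [eventually_ge_atTop R] with x hx
  simp only [max_eq_right hx]
  ring

set_option maxHeartbeats 4000000 in
theorem steady_rh_limit (μ₁ : ℝ) (n : ℕ) (hμ : μ₁ < 0) (hn2 : 2 ≤ n)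
    (h : ℝ → ℝ) (hsol : IsSteadySol n μ₁ h) :
    ∃ b₁ : ℝ, 0 ≤ b₁ ∧
      Filter.Tendsto (fun r : ℝ => r * h r) Filter.atTop (nhds b₁) ∧
      (4 ≤ n → 0 < b₁) ∧
      Filter.Tendsto (fun r : ℝ => r * (r * deriv h r / h r + 1)) Filter.atTop
        (nhds ((((n : ℝ) - 4) / ((n : ℝ) - 1)) * b₁)) := by
  obtain ⟨hC2, hC1, hode, h0, hd0⟩ := hsol
  have hpos : ∀ r, 0 < r → 0 < h r := fun r hr => (hode r hr).2
  obtain ⟨m, hm⟩ : ∃ m : ℝ, m = (n:ℝ) - 1 := ⟨_, rfl⟩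
  have hm1 : 1 ≤ m := by
    have : (2:ℝ) ≤ n := by exact_mod_cast hn2
    linarith
  have hnm : (n:ℝ) = m + 1 := by linarith
  have hder : ∀ r, 0 < r → HasDerivAt h (deriv h r) r := by
    intro r hr
    exact ((hC2.differentiableOn (by norm_num)).differentiableAt (Ioi_mem_nhds hr)).hasDerivAt
  have hder2 : ∀ r, 0 < r → HasDerivAt (deriv h) (deriv (deriv h) r) r := by
    intro r hr
    have : ContDiffOn ℝ 1 (deriv h) (Ioi 0) := hC2.deriv_of_isOpen isOpen_Ioi (by norm_num)
    exact ((this.differentiableOn (by norm_num)).differentiableAt (Ioi_mem_nhds hr)).hasDerivAt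
  obtain ⟨p, hp⟩ : ∃ p : ℝ → ℝ, p = fun r => r * deriv h r / h r + 1 := ⟨_, rfl⟩
  obtain ⟨Dp, hDp⟩ : ∃ Dp : ℝ → ℝ,
    Dp = fun r => (-(p r)^2 + 4 * p r + (m - 3) - m * (p r / h r)) / 2 := ⟨_, rfl⟩
  have hdh : ∀ r, 0 < r → HasDerivAt h ((p r - 1) * h r / r) r := by
    intro r hr
    refine HasDerivAt.congr_deriv (hder r hr) ?_
    have := hpos r hr
    rw [hp]
    field_simp
    ring
  have hdp : ∀ r, 0 < r → HasDerivAt p (Dp r / r) r := by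
    intro r hr
    have hh := (hpos r hr).ne'
    have h1 := (((hasDerivAt_id r).mul (hder2 r hr)).div (hder r hr) hh).add_const 1
    have h2 := (hode r hr).1
    rw [hnm] at h2
    have h3 : deriv (deriv h) r = ((m + 1 - 1) * h r * (h r - 1) +
        r * deriv h r * (r * deriv h r - (m + 1 - 1))) / (2 * r ^ 2 * h r) := by
      rw [← h2]; field_simp
    rw [hp]
    refine HasDerivAt.congr_deriv (h1) ?_
    simp only [hDp, hp, h3, id, Pi.mul_apply]
    field_simp
    ring
  -- starting point
  obtain ⟨r0, hr0, hh0, hp0⟩ : ∃ r0, 0 < r0 ∧ h r0 < 1 ∧ p r0 < 1 := by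
    have hc : ContinuousOn (derivWithin h (Ici 0)) (Ici 0) :=
      hC1.continuousOn_derivWithin (uniqueDiffOn_Ici 0) (by norm_num)
    have h1 : ∀ᶠ r in 𝓝[≥] (0:ℝ), derivWithin h (Ici 0) r < 0 := by
      have := (hc 0 self_mem_Ici).tendsto
      rw [hd0] at this
      exact this.eventually (gt_mem_nhds hμ)
    obtain ⟨e, he, hes⟩ := (mem_nhdsGE_iff_exists_Icc_subset).mp h1
    have he0 : 0 < e := he
    have h2 : ∀ r, 0 < r → r ≤ e → deriv h r < 0 := by
      intro r hr hre
      have := hes (⟨hr.le, hre⟩ : r ∈ Icc 0 e)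
      simp only [mem_setOf_eq] at this
      rwa [derivWithin_of_mem_nhds (Ici_mem_nhds hr)] at this
    have h3 : StrictAntiOn h (Icc 0 e) := by
      apply strictAntiOn_of_deriv_neg (convex_Icc 0 e)
      · exact hC1.continuousOn.mono Icc_subset_Ici_self
      · intro x hx
        rw [interior_Icc] at hx
        exact h2 x hx.1 hx.2.le
    refine ⟨e, he0, ?_, ?_⟩
    · rw [← h0]; exact h3 ⟨le_rfl, he0.le⟩ ⟨he0.le, le_rfl⟩ he0
    · rw [hp]
      have : e * deriv h e / h e < 0 :=
        div_neg_of_neg_of_pos (mul_neg_of_pos_of_neg he0 (h2 e he0 le_rfl)) (hpos e he0)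
      try simp only
      linarith
  obtain ⟨P, hP⟩ : ∃ P, P = max (h r0) (p r0) := ⟨_, rfl⟩
  have hP1 : P < 1 := by rw [hP]; exact max_lt hh0 hp0
  have hPh : h r0 ≤ P := by rw [hP]; exact le_max_left _ _
  have hpP : ∀ x, r0 ≤ x → p x ≤ P := by
    refine barrierA p (fun x => Dp x / x) r0 P (fun x hx => hdp x (by linarith))
      (by rw [hP]; exact le_max_right _ _) ?_
    intro x hx hprev he
    have hx0 : 0 < x := by linarith
    have hhx : h x ≤ h r0 := by
      refine antiD h (fun x => (p x - 1) * h x) r0 x hr0 hx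
        (fun y hy _ => hdh y (by linarith)) ?_
      intro y hy hyx
      have := hprev y hy hyx
      exact mul_nonpos_of_nonpos_of_nonneg (by linarith) (hpos y (by linarith)).le
    have h1 : 1 ≤ p x / h x := by
      rw [one_le_div (hpos x hx0)]; linarith
    refine div_neg_of_neg_of_pos ?_ hx0
    rw [hDp]
    try simp only
    rw [he] at h1 ⊢
    nlinarith
  have ev0 : ∀ᶠ r in atTop, (0:ℝ) < r := eventually_gt_atTop 0
  have evP : ∀ᶠ r in atTop, p r ≤ P := by
    filter_upwards [eventually_ge_atTop r0] with x hx using hpP x hx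
  have evdh : ∀ᶠ r in atTop, HasDerivAt h ((p r - 1) * h r / r) r := by
    filter_upwards [ev0] with r hr using hdh r hr
  have evdp : ∀ᶠ r in atTop, HasDerivAt p (Dp r / r) r := by
    filter_upwards [ev0] with r hr using hdp r hr
  have evh : ∀ δ, 0 < δ → ∀ᶠ r in atTop, h r ≤ δ := by
    intro δ hδ
    refine trapB h (fun r => (p r - 1) * h r) δ ((1 - P) * δ) (mul_pos (by linarith) hδ) evdh ?_
    filter_upwards [evP] with r hr hle
    nlinarith
  have evu : ∀ K, ∀ᶠ r in atTop, K ≤ 1 / h r := by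
    intro K
    have hK : 0 < |K| + 1 := by positivity
    filter_upwards [evh (1 / (|K| + 1)) (by positivity), ev0] with r hr hr0
    have : |K| + 1 ≤ 1 / h r := by
      rw [le_div_iff₀ (hpos r hr0)]
      rw [le_div_iff₀ hK] at hr
      linarith
    linarith [le_abs_self K]
  have hDp' : ∀ r, Dp r = (-(p r)^2 + 4 * p r + (m - 3) - m * p r * (1 / h r)) / 2 := by
    intro r; rw [hDp]; ring
  have evpu : ∀ δ, 0 < δ → ∀ᶠ r in atTop, p r ≤ δ := by
    intro δ hδ
    refine trapB p Dp δ 1 one_pos evdp ?_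
    filter_upwards [evP, evu ((m + 3) / (m * δ))] with r hr hu hle
    rw [hDp']
    rw [div_le_iff₀ (by positivity)] at hu
    have hu0 : 0 < 1 / h r := by
      by_contra hneg
      push Not at hneg
      have : 0 < m * δ := by positivity
      nlinarith
    have : m * δ * (1 / h r) ≤ m * p r * (1 / h r) := by gcongr
    nlinarith [sq_nonneg (p r)]
  -- sigma = p h
  have evs : ∀ᶠ r in atTop, -(1/4) ≤ p r * h r := by
    refine trapB' (fun r => p r * h r) (fun r => Dp r * h r + p r * ((p r - 1) * h r)) _ 1 one_pos
      ?_ ?_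
    · filter_upwards [evdh, evdp] with r h1 h2
      refine HasDerivAt.congr_deriv (h2.mul h1) ?_
      ring
    · filter_upwards [ev0, evu 16] with r hr hu hle
      have hh := hpos r hr
      have e1 : Dp r * h r + p r * ((p r - 1) * h r)
          = (h r * ((p r)^2 + 2 * p r + (m - 3)) - m * p r) / 2 := by
        rw [hDp]; field_simp; ring
      rw [e1]
      rw [le_div_iff₀ hh] at hu
      have hp4 : p r ≤ -4 := by
        by_contra hneg
        push Not at hneg
        nlinarith
      have : 0 ≤ h r * ((p r)^2 + 2 * p r + (m - 3)) := by
        apply mul_nonneg hh.le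
        nlinarith
      nlinarith
  have evpl : ∀ δ, 0 < δ → ∀ᶠ r in atTop, -δ ≤ p r := by
    intro δ hδ
    refine trapB' p Dp (-δ) 1 one_pos evdp ?_
    filter_upwards [ev0, evs, evu (2 * (4 + 4 / δ))] with r hr hs hu hle
    have hh := hpos r hr
    rw [hDp']
    have hs' : -(1/4) * (1 / h r) ≤ p r := by
      rw [mul_one_div, div_le_iff₀ hh]; exact hs
    have h4 : δ * (4 / δ) = 4 := by field_simp
    obtain ⟨u, hu'⟩ : ∃ u, u = 1 / h r := ⟨_, rfl⟩
    rw [← hu'] at hu hs' ⊢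
    obtain ⟨w, hw⟩ : ∃ w, w = - p r := ⟨_, rfl⟩
    have hpw : p r = -w := by linarith
    rw [hpw] at hle hs' ⊢
    have hw1 : δ ≤ w := by linarith
    have h5 : 0 < 4 / δ := by positivity
    have hu0 : 0 < u := by linarith
    have h6 : w * u ≤ m * (w * u) := le_mul_of_one_le_left (by nlinarith) hm1
    have h7 : w * (4 / δ) ≤ w * (u - w - 4) := by
      apply mul_le_mul_of_nonneg_left _ (by linarith)
      linarith
    have h8 : δ * (4 / δ) ≤ w * (4 / δ) := by gcongr
    nlinarith
  -- z = p / h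
  obtain ⟨z, hz⟩ : ∃ z : ℝ → ℝ, z = fun r => p r / h r := ⟨_, rfl⟩
  obtain ⟨Dz, hDz⟩ : ∃ Dz : ℝ → ℝ,
    Dz = fun r => (1 / h r) * ((m - 3) - m * z r + 3 * p r * (2 - p r)) / 2 := ⟨_, rfl⟩
  have evdz : ∀ᶠ r in atTop, HasDerivAt z (Dz r / r) r := by
    filter_upwards [ev0] with r hr
    have hh := (hpos r hr).ne'
    rw [hz]
    refine HasDerivAt.congr_deriv ((hdp r hr).div (hdh r hr) hh) ?_
    simp only [hDz, hz, hDp]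
    field_simp
    ring
  have evsmall : ∀ δ, 0 < δ → ∀ᶠ r in atTop, |3 * p r * (2 - p r)| ≤ δ := by
    intro δ hδ
    have hδ' : 0 < min 1 (δ / 9) := by positivity
    filter_upwards [evpl _ hδ', evpu _ hδ'] with r h1 h2
    have h3 : |p r| ≤ min 1 (δ / 9) := abs_le.mpr ⟨h1, h2⟩
    have h4 : |p r| ≤ 1 := h3.trans (min_le_left _ _)
    have h5 : |p r| ≤ δ / 9 := h3.trans (min_le_right _ _)
    have h6 : |2 - p r| ≤ 3 := by
      rw [abs_le] at h4 ⊢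
      constructor <;> linarith
    rw [abs_mul, abs_mul, abs_of_pos (by norm_num : (0:ℝ) < 3)]
    nlinarith [abs_nonneg (p r), abs_nonneg (2 - p r)]
  have hm0 : 0 < m := by linarith
  have hmm : m * ((m - 3) / m) = m - 3 := by field_simp
  have evzu : ∀ δ, 0 < δ → ∀ᶠ r in atTop, z r ≤ (m - 3) / m + δ := by
    intro δ hδ
    refine trapB z Dz _ 1 one_pos evdz ?_
    have hmd : 0 < m * δ / 2 := by positivity
    filter_upwards [ev0, evsmall _ hmd, evu (2 / (m * δ / 2))] with r hr hs hu hle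
    rw [hDz]
    rw [div_le_iff₀ hmd] at hu
    have h1 : (m - 3) - m * z r + 3 * p r * (2 - p r) ≤ -(m * δ / 2) := by
      have := (abs_le.mp hs).2
      have h9 := mul_le_mul_of_nonneg_left hle hm0.le
      rw [mul_add, hmm] at h9
      linarith
    have := mul_le_mul_of_nonneg_left h1 (one_div_pos.mpr (hpos r hr)).le
    try simp only
    linarith
  have evzl : ∀ δ, 0 < δ → ∀ᶠ r in atTop, (m - 3) / m - δ ≤ z r := by
    intro δ hδ
    refine trapB' z Dz _ 1 one_pos evdz ?_
    have hmd : 0 < m * δ / 2 := by positivity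
    filter_upwards [ev0, evsmall _ hmd, evu (2 / (m * δ / 2))] with r hr hs hu hle
    rw [hDz]
    rw [div_le_iff₀ hmd] at hu
    have h1 : m * δ / 2 ≤ (m - 3) - m * z r + 3 * p r * (2 - p r) := by
      have := (abs_le.mp hs).1
      have h9 := mul_le_mul_of_nonneg_left hle hm0.le
      rw [mul_sub, hmm] at h9
      linarith
    have := mul_le_mul_of_nonneg_left h1 (one_div_pos.mpr (hpos r hr)).le
    try simp only
    linarith
  have hzlim : Tendsto z atTop (𝓝 ((m - 3) / m)) := by
    rw [Metric.tendsto_nhds]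
    intro e he
    filter_upwards [evzu (e/2) (by linarith), evzl (e/2) (by linarith)] with r h1 h2
    rw [Real.dist_eq, abs_lt]
    constructor <;> linarith
  have hhlim : Tendsto h atTop (𝓝 0) := by
    rw [Metric.tendsto_nhds]
    intro e he
    filter_upwards [evh (e/2) (by linarith), ev0] with r h1 h2
    have := hpos r h2
    rw [Real.dist_eq, abs_lt]
    constructor <;> linarith
  -- log v converges
  obtain ⟨K, hK⟩ : ∃ K, K = |(m - 3) / m| + 1 := ⟨_, rfl⟩
  have hK0 : 0 < K := by rw [hK]; positivity
  obtain ⟨L, hL⟩ := convC (fun r => Real.log (r * h r)) (fun r => 2 * K * h r) p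
    (fun r => 2 * K * ((p r - 1) * h r)) (by simpa using hhlim.const_mul (2 * K))
    (by
      filter_upwards [ev0] with r hr
      have hh := hpos r hr
      refine HasDerivAt.congr_deriv (((hasDerivAt_id r).mul (hdh r hr)).log (by simp only [id, Pi.mul_apply]; positivity)) ?_
      try simp only [id, Pi.mul_apply]
      field_simp
      try ring)
    (by
      filter_upwards [evdh] with r hr
      refine HasDerivAt.congr_deriv (hr.const_mul (2 * K)) ?_
      ring)
    (by
      filter_upwards [ev0, evzu 1 one_pos, evpu (1/2) (by norm_num)] with r hr h1 h2
      have hh := hpos r hr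
      have h3 : p r = z r * h r := by rw [hz]; field_simp
      have h4 : z r ≤ K := by rw [hK]; linarith [le_abs_self ((m - 3) / m)]
      have h5 : p r ≤ K * h r := by rw [h3]; gcongr
      have h6 : 0 < K * h r := by positivity
      nlinarith)
    (by
      filter_upwards [ev0, evzl 1 one_pos, evpu (1/2) (by norm_num)] with r hr h1 h2
      have hh := hpos r hr
      have h3 : p r = z r * h r := by rw [hz]; field_simp
      have h4 : -K ≤ z r := by rw [hK]; linarith [neg_abs_le ((m - 3) / m)]
      have h5 : -K * h r ≤ p r := by rw [h3]; gcongr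
      have h6 : 0 < K * h r := by positivity
      nlinarith)
    (by
      filter_upwards [ev0] with r hr
      have hh := hpos r hr
      positivity)
  have hv : Tendsto (fun r => r * h r) atTop (𝓝 (Real.exp L)) := by
    refine ((Real.continuous_exp.tendsto L).comp hL).congr' ?_
    filter_upwards [ev0] with r hr
    have hh := hpos r hr
    exact Real.exp_log (by positivity)
  refine ⟨Real.exp L, (Real.exp_pos L).le, hv, fun _ => Real.exp_pos L, ?_⟩
  have hfin := hzlim.mul hv
  have e1 : ((n:ℝ) - 4) / ((n:ℝ) - 1) = (m - 3) / m := by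
    rw [hnm]; congr 1 <;> ring
  rw [e1]
  refine hfin.congr' ?_
  filter_upwards [ev0] with r hr
  have hh := hpos r hr
  rw [hz, hp]
  field_simp
end

section
/- Let λ > 0, let n ≥ 2 be an integer, and suppose 0 < μ₁ < λ/n. Suppose h ∈ C²((0,∞)) ∩ C¹([0,∞)) is a solution of 2r²h(r)h''(r) = (n-1)h(r)(h(r)-1) + r h'(r)(r h'(r) - λr - (n-1)), h(r) > 0 for r > 0, with h(0) = 1 and h'(0) = μ₁. Then h'(r) → 0 as r → ∞, the limit lim_{r→∞} h(r) exists and lies in (1,∞), and 1 < h(r) ≤ 1 + μ₁ r for all r > 0. -/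
open Set Filter Topology

/-- `h` is a solution of the initial value problem
`2r²h h'' = (n-1)h(h-1) + r h'(r h' - λr - (n-1))`, `h > 0` on `(0,∞)`,
with `h ∈ C²((0,∞)) ∩ C¹([0,∞))`, `h(0) = 1` and `h'(0) = μ₁`. -/
def IsSol (n : ℕ) (lam μ₁ : ℝ) (h : ℝ → ℝ) : Prop :=
  ContDiffOn ℝ 2 h (Set.Ioi 0) ∧ ContDiffOn ℝ 1 h (Set.Ici 0) ∧
  (∀ r : ℝ, 0 < r →
    2 * r ^ 2 * h r * deriv (deriv h) r =
      ((n : ℝ) - 1) * h r * (h r - 1) +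
        r * deriv h r * (r * deriv h r - lam * r - ((n : ℝ) - 1)) ∧ 0 < h r) ∧
  h 0 = 1 ∧ derivWithin h (Set.Ici 0) 0 = μ₁

lemma aux_left_deriv {f : ℝ → ℝ} {d a x : ℝ} (hd : HasDerivAt f d x) (hax : a < x)
    (hle : ∀ y, a < y → y < x → f y ≤ f x) : 0 ≤ d := by
  have h1 : Tendsto (slope f x) (𝓝[<] x) (𝓝 d) :=
    (hasDerivAt_iff_tendsto_slope.1 hd).mono_left
      (nhdsWithin_mono _ (fun y hy => ne_of_lt hy))
  refine ge_of_tendsto h1 ?_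
  filter_upwards [Ioo_mem_nhdsLT hax] with y hy
  rw [slope_def_field]
  exact div_nonneg_of_nonpos (by linarith [hle y hy.1 hy.2]) (by linarith [hy.2])

lemma aux_barrier_s7 {f f' : ℝ → ℝ} {δ : ℝ} (hδ : 0 < δ)
    (hd : ∀ r, 0 < r → HasDerivAt f (f' r) r)
    (h0 : ∀ r, 0 < r → r < δ → 0 < f r)
    (hz : ∀ r, 0 < r → f r = 0 → (∀ s, 0 < s → s < r → 0 < f s) → 0 < f' r) :
    ∀ r, 0 < r → 0 < f r := by
  by_contra! hcon
  obtain ⟨b, hb, hfb⟩ := hcon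
  have hbδ : δ ≤ b := by
    by_contra! hlt
    linarith [h0 b hb hlt]
  have hc : ContinuousOn f (Icc (δ/2) b) := fun r hr =>
    (hd r (by linarith [hr.1])).continuousAt.continuousWithinAt
  have hcl : IsClosed (Icc (δ/2) b ∩ f ⁻¹' Iic 0) := hc.preimage_isClosed_of_isClosed isClosed_Icc isClosed_Iic
  have hcomp : IsCompact (Icc (δ/2) b ∩ f ⁻¹' Iic 0) :=
    isCompact_Icc.of_isClosed_subset hcl inter_subset_left
  obtain ⟨r0, hr0, hmin⟩ := hcomp.exists_isLeast ⟨b, ⟨by linarith, le_refl b⟩, hfb⟩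
  have hr0p : 0 < r0 := by linarith [hr0.1.1]
  have hpos : ∀ s, 0 < s → s < r0 → 0 < f s := by
    intro s hs hsr
    by_contra! hneg
    by_cases hsd : s < δ
    · linarith [h0 s hs hsd]
    · have := hmin (⟨⟨by linarith, by linarith [hr0.1.2]⟩, hneg⟩ : s ∈ Icc (δ/2) b ∩ f ⁻¹' Iic 0)
      linarith
  have hge : 0 ≤ f r0 := by
    have ht : Tendsto f (𝓝[<] r0) (𝓝 (f r0)) :=
      (hd r0 hr0p).continuousAt.tendsto.mono_left nhdsWithin_le_nhds
    refine ge_of_tendsto ht ?_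
    filter_upwards [Ioo_mem_nhdsLT hr0p] with y hy
    exact (hpos y hy.1 hy.2).le
  have hzero : f r0 = 0 := le_antisymm hr0.2 hge
  have h1 := hz r0 hr0p hzero hpos
  have h2 : 0 ≤ -f' r0 := aux_left_deriv (hd r0 hr0p).neg hr0p (by
    intro y hy hy2
    have := hpos y hy hy2
    simp only [Pi.neg_apply]
    linarith)
  linarith

lemma aux_anti {F F' : ℝ → ℝ} (hd : ∀ r, 0 < r → HasDerivAt F (F' r) r)
    (hle : ∀ r, 1 < r → F' r ≤ 0) : ∀ r, 1 ≤ r → F r ≤ F 1 := by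
  have : AntitoneOn F (Ici 1) := by
    refine antitoneOn_of_deriv_nonpos (convex_Ici 1) ?_ ?_ ?_
    · intro r hr
      exact (hd r (lt_of_lt_of_le one_pos hr)).continuousAt.continuousWithinAt
    · intro r hr
      rw [interior_Ici] at hr
      exact (hd r (one_pos.trans hr)).differentiableAt.differentiableWithinAt
    · intro r hr
      rw [interior_Ici] at hr
      rw [(hd r (one_pos.trans hr)).deriv]
      exact hle r hr
  intro r hr
  exact this (mem_Ici.2 le_rfl) hr hr

theorem expanding_small_slope (lam μ₁ : ℝ) (n : ℕ) (hlam : 0 < lam) (hn2 : 2 ≤ n)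
    (hμ0 : 0 < μ₁) (hμ : μ₁ < lam / n)
    (h : ℝ → ℝ) (hsol : IsSol n lam μ₁ h) :
    Filter.Tendsto (deriv h) Filter.atTop (nhds 0) ∧
    (∃ c : ℝ, 1 < c ∧ Filter.Tendsto h Filter.atTop (nhds c)) ∧
    ∀ r : ℝ, 0 < r → 1 < h r ∧ h r ≤ 1 + μ₁ * r := by
  obtain ⟨hC2, hC1, hode, h0, hd0⟩ := hsol
  have hn : (2:ℝ) ≤ n := by exact_mod_cast hn2
  have hμn : (n:ℝ) * μ₁ < lam := by
    rw [lt_div_iff₀ (by linarith)] at hμ; linarith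
  have hder : ∀ r, 0 < r → HasDerivAt h (deriv h r) r := fun r hr =>
    ((hC2.contDiffAt (Ioi_mem_nhds hr)).differentiableAt (by norm_num)).hasDerivAt
  have hder2 : ∀ r, 0 < r → HasDerivAt (deriv h) (deriv (deriv h) r) r := by
    intro r hr
    have h1 : ContDiffOn ℝ 1 (deriv h) (Ioi 0) :=
      ((contDiffOn_succ_iff_deriv_of_isOpen (n := 1) isOpen_Ioi).1 (by simpa [one_add_one_eq_two] using hC2)).2.2
    exact ((h1.contDiffAt (Ioi_mem_nhds hr)).differentiableAt (by norm_num)).hasDerivAt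
  -- behaviour at zero
  have hcontD : ContinuousOn (derivWithin h (Ici 0)) (Ici 0) :=
    hC1.continuousOn_derivWithin (uniqueDiffOn_Ici 0) le_rfl
  have hDlim : Tendsto (deriv h) (𝓝[>] 0) (𝓝 μ₁) := by
    have h1 : Tendsto (derivWithin h (Ici 0)) (𝓝[>] 0) (𝓝 μ₁) := by
      have := (hcontD 0 self_mem_Ici)
      rw [ContinuousWithinAt, hd0] at this
      exact this.mono_left (nhdsWithin_mono _ Ioi_subset_Ici_self)
    refine h1.congr' ?_
    filter_upwards [self_mem_nhdsWithin] with r hr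
    exact derivWithin_of_mem_nhds (Ici_mem_nhds hr)
  have hhlim : Tendsto h (𝓝[>] 0) (𝓝 1) := by
    have := hC1.continuousOn 0 self_mem_Ici
    rw [ContinuousWithinAt, h0] at this
    exact this.mono_left (nhdsWithin_mono _ Ioi_subset_Ici_self)
  have hslope : Tendsto (fun r => (h r - 1) / r) (𝓝[>] 0) (𝓝 μ₁) := by
    have h1 : HasDerivWithinAt h μ₁ (Ici 0) 0 := by
      rw [← hd0]
      exact (hC1.differentiableOn (by norm_num) 0 self_mem_Ici).hasDerivWithinAt
    have h2 := hasDerivWithinAt_iff_tendsto_slope.1 h1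
    have h3 : Ici (0:ℝ) \ {0} = Ioi 0 := by
      ext x; simp [lt_iff_le_and_ne, eq_comm]
    rw [h3] at h2
    refine h2.congr ?_
    intro r
    rw [slope_def_field, h0, sub_zero]
  have hrlim : Tendsto (fun r : ℝ => r) (𝓝[>] 0) (𝓝 0) := tendsto_id.mono_left nhdsWithin_le_nhds
  have hplim : Tendsto (fun r => r * deriv h r - (h r - 1)) (𝓝[>] 0) (𝓝 0) := by
    have := (hrlim.mul hDlim).sub (hhlim.sub_const 1)
    simpa using this
  -- monotonicity consequence
  have hgt : ∀ r, 0 < r → (∀ s, 0 < s → s < r → 0 < deriv h s) → 1 < h r := by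
    intro r hr hs
    have : StrictMonoOn h (Icc 0 r) := by
      refine strictMonoOn_of_deriv_pos (convex_Icc 0 r) ?_ ?_
      · exact hC1.continuousOn.mono Icc_subset_Ici_self
      · intro x hx
        rw [interior_Icc] at hx
        exact hs x hx.1 hx.2
    have := this (left_mem_Icc.2 hr.le) (right_mem_Icc.2 hr.le) hr
    rwa [h0] at this
  -- Claim 1
  have hDpos : ∀ r, 0 < r → 0 < deriv h r := by
    have hev := hDlim.eventually (lt_mem_nhds hμ0)
    obtain ⟨δ, hδ, hsub⟩ := mem_nhdsGT_iff_exists_Ioo_subset.1 hev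
    refine aux_barrier_s7 (mem_Ioi.1 hδ) hder2 (fun r h1 h2 => hsub ⟨h1, h2⟩) ?_
    intro r hr hz hs
    have h1 := hgt r hr hs
    have h2 := (hode r hr).1
    have h3 := (hode r hr).2
    rw [hz] at h2
    by_contra! hneg
    have h4 : 0 < ((n:ℝ) - 1) * h r * (h r - 1) :=
      mul_pos (mul_pos (by linarith) h3) (by linarith)
    have h5 : 0 < 2 * r^2 * h r := by positivity
    nlinarith
  have hh1 : ∀ r, 0 < r → 1 < h r := fun r hr => hgt r hr (fun s hs _ => hDpos s hs)
  -- p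
  have hpd : ∀ r, 0 < r → HasDerivAt (fun r => r * deriv h r - (h r - 1))
      (r * deriv (deriv h) r) r := by
    intro r hr
    have := ((hasDerivAt_id r).mul (hder2 r hr)).sub ((hder r hr).sub_const 1)
    refine (this.congr_deriv ?_)
    simp
  have hpode : ∀ r, 0 < r → 2 * r * h r * (r * deriv (deriv h) r) =
      (r * deriv h r - (h r - 1)) * (-((n:ℝ)-1) + (r * deriv h r - (h r - 1)) + 2 * (h r - 1) - lam * r)
       + (h r - 1) * (n * (h r - 1) - lam * r) := by
    intro r hr
    linear_combination (hode r hr).1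
  have hpneg : ∀ r, 0 < r → 0 < -(r * deriv h r - (h r - 1)) := by
    have hlim2 : Tendsto (fun r => -((n:ℝ)-1) + (r * deriv h r - (h r - 1)) + 2 * (h r - 1) - lam * r)
        (𝓝[>] 0) (𝓝 (-((n:ℝ)-1))) := by
      have := ((hplim.const_add (-((n:ℝ)-1))).add ((hhlim.sub_const 1).const_mul 2)).sub
        (hrlim.const_mul lam)
      simpa using this
    have hev := (hlim2.eventually (gt_mem_nhds (show -((n:ℝ)-1) < 0 by linarith))).and
      (hslope.eventually (gt_mem_nhds hμ))
    obtain ⟨δ, hδ, hsub⟩ := mem_nhdsGT_iff_exists_Ioo_subset.1 hev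
    refine aux_barrier_s7 (f' := fun r => -(r * deriv (deriv h) r)) (mem_Ioi.1 hδ)
      (fun r hr => (hpd r hr).neg) ?_ ?_
    · intro r1 hr1 hr1δ
      by_contra! hneg
      have hkey : ∀ r, 0 < r → r < δ → 0 ≤ r * deriv h r - (h r - 1) →
          r * deriv (deriv h) r < 0 := by
        intro r hr hrδ hp
        obtain ⟨ha, hb⟩ := hsub (⟨hr, hrδ⟩ : r ∈ Ioo 0 δ)
        have e := hpode r hr
        have hg := hh1 r hr
        rw [div_lt_div_iff₀ hr (by linarith)] at hb
        have e1 : (r * deriv h r - (h r - 1)) * (-((n:ℝ)-1) + (r * deriv h r - (h r - 1)) + 2 * (h r - 1) - lam * r) ≤ 0 :=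
          mul_nonpos_of_nonneg_of_nonpos hp ha.le
        have e2 : (h r - 1) * (n * (h r - 1) - lam * r) < 0 :=
          mul_neg_of_pos_of_neg (by linarith) (by linarith)
        have e3 : 0 < 2 * r * h r := by positivity
        by_contra! hcon
        have := mul_nonneg e3.le hcon
        linarith
      have hcont : ContinuousOn (fun r => r * deriv h r - (h r - 1)) (Icc 0 r1) := by
        intro r hr
        rcases hr.1.eq_or_lt with h' | h'
        · subst h'
          have : ContinuousWithinAt (fun r => r * deriv h r - (h r - 1)) (Ioi 0) 0 := by
            rw [ContinuousWithinAt]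
            simpa [h0] using hplim
          exact (continuousWithinAt_Ioi_iff_Ici.1 this).mono Icc_subset_Ici_self
        · exact (hpd r h').continuousAt.continuousWithinAt
      obtain ⟨x, hx, hmax⟩ := isCompact_Icc.exists_isMaxOn (nonempty_Icc.2 hr1.le) hcont
      have hmax' : ∀ y ∈ Icc 0 r1, y * deriv h y - (h y - 1) ≤ x * deriv h x - (h x - 1) :=
        fun y hy => hmax hy
      have : ∃ z, 0 < z ∧ z ≤ r1 ∧ 0 ≤ z * deriv h z - (h z - 1) ∧
          ∀ y ∈ Icc 0 r1, y * deriv h y - (h y - 1) ≤ z * deriv h z - (h z - 1) := by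
        rcases hx.1.eq_or_lt with h' | h'
        · refine ⟨r1, hr1, le_rfl, by linarith, ?_⟩
          intro y hy
          have := hmax' y hy
          rw [← h', h0] at this
          linarith
        · refine ⟨x, h', hx.2, ?_, hmax'⟩
          have := hmax' r1 (right_mem_Icc.2 hr1.le)
          linarith
      obtain ⟨z, hz, hzr, hz0, hzm⟩ := this
      have c1 := hkey z hz (by linarith) hz0
      have c2 := aux_left_deriv (hpd z hz) hz (fun y hy hyz => hzm y ⟨hy.le, by linarith⟩)
      linarith
    · intro r hr hz hs
      have hw : AntitoneOn (fun r => (h r - 1) / r) (Ioc 0 r) := by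
        have hwd : ∀ s, 0 < s → HasDerivAt (fun r => (h r - 1) / r)
            ((deriv h s * s - (h s - 1) * 1) / s^2) s := fun s hs =>
          ((hder s hs).sub_const 1).div (hasDerivAt_id s) hs.ne'
        refine antitoneOn_of_deriv_nonpos (convex_Ioc 0 r) ?_ ?_ ?_
        · intro s hs
          exact (hwd s hs.1).continuousAt.continuousWithinAt
        · intro s hs
          rw [interior_Ioc] at hs
          exact (hwd s hs.1).differentiableAt.differentiableWithinAt
        · intro s hs'
          rw [interior_Ioc] at hs'
          rw [(hwd s hs'.1).deriv]
          have := hs s hs'.1 hs'.2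
          exact div_nonpos_of_nonpos_of_nonneg (by linarith) (by positivity)
      have hle : (h r - 1) / r ≤ μ₁ := by
        refine ge_of_tendsto hslope ?_
        filter_upwards [Ioo_mem_nhdsGT hr] with s hs'
        exact hw ⟨hs'.1, hs'.2.le⟩ ⟨hr, le_rfl⟩ hs'.2.le
      rw [div_le_iff₀ hr] at hle
      have e := hpode r hr
      have hz' : r * deriv h r - (h r - 1) = 0 := by linarith
      rw [hz'] at e
      have hg := hh1 r hr
      have e2 : (h r - 1) * (n * (h r - 1) - lam * r) < 0 :=
        mul_neg_of_pos_of_neg (by linarith) (by nlinarith)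
      have e3 : 0 < 2 * r * h r := by positivity
      by_contra! hcon
      have := mul_nonneg e3.le (show 0 ≤ r * deriv (deriv h) r by linarith)
      linarith
  have hw : AntitoneOn (fun r => (h r - 1) / r) (Ioi 0) := by
    have hwd : ∀ s, 0 < s → HasDerivAt (fun r => (h r - 1) / r)
        ((deriv h s * s - (h s - 1) * 1) / s^2) s := fun s hs =>
      ((hder s hs).sub_const 1).div (hasDerivAt_id s) hs.ne'
    refine antitoneOn_of_deriv_nonpos (convex_Ioi 0) ?_ ?_ ?_
    · intro s hs
      exact (hwd s hs).continuousAt.continuousWithinAt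
    · intro s hs
      rw [interior_Ioi] at hs
      exact (hwd s hs).differentiableAt.differentiableWithinAt
    · intro s hs'
      rw [interior_Ioi] at hs'
      rw [(hwd s hs').deriv]
      have := hpneg s hs'
      exact div_nonpos_of_nonpos_of_nonneg (by linarith) (by positivity)
  have hlin : ∀ r, 0 < r → h r - 1 ≤ μ₁ * r := by
    intro r hr
    have hle : (h r - 1) / r ≤ μ₁ := by
      refine ge_of_tendsto hslope ?_
      filter_upwards [Ioo_mem_nhdsGT hr] with s hs'
      exact hw hs'.1 hr hs'.2.le
    rwa [div_le_iff₀ hr] at hle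
  have hDle : ∀ r, 0 < r → deriv h r ≤ μ₁ := by
    intro r hr
    have h1 := hpneg r hr
    have h2 := hlin r hr
    have h3 : r * deriv h r ≤ r * μ₁ := by linarith
    exact le_of_mul_le_mul_left h3 hr
  have hLμ : 0 < lam - μ₁ := by nlinarith
  -- the differential inequality
  have hineq : ∀ r, 0 < r → 2 * deriv (deriv h) r + (lam - μ₁) * (deriv h r / h r) ≤
      ((n:ℝ) - 1) * ((h r - 1) / r^2) := by
    intro r hr
    have hp := (hode r hr).2
    have e := (hode r hr).1
    have e1 : 2 * deriv (deriv h) r = ((n:ℝ) - 1) * ((h r - 1) / r^2) +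
        deriv h r * (deriv h r - lam - ((n:ℝ)-1)/r) / h r := by
      field_simp
      linear_combination e
    rw [e1]
    have e2 : deriv h r * (deriv h r - lam - ((n:ℝ)-1)/r) / h r + (lam - μ₁) * (deriv h r / h r) =
      -(deriv h r * (μ₁ - deriv h r + ((n:ℝ)-1)/r) / h r) := by ring
    have e3 : 0 ≤ deriv h r * (μ₁ - deriv h r + ((n:ℝ)-1)/r) / h r := by
      have a1 : 0 ≤ ((n:ℝ)-1)/r := div_nonneg (by linarith) hr.le
      have a2 := hDle r hr
      have a3 := hDpos r hr
      exact div_nonneg (mul_nonneg a3.le (by linarith)) hp.le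
    linarith
  set α : ℝ := ((n:ℝ)-1) * μ₁ / (lam - μ₁) with hα
  have hα1 : α < 1 := by
    rw [hα, div_lt_one hLμ]; linarith
  have hbase : ∀ r, 0 < r → HasDerivAt (fun r => 2 * deriv h r + (lam - μ₁) * Real.log (h r))
      (2 * deriv (deriv h) r + (lam - μ₁) * (deriv h r / h r)) r := fun r hr =>
    ((hder2 r hr).const_mul 2).add (((hder r hr).log (hode r hr).2.ne').const_mul _)
  have hF := aux_anti (F := fun r => (2 * deriv h r + (lam - μ₁) * Real.log (h r))
      - ((n:ℝ)-1) * μ₁ * Real.log r) (F' := fun r =>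
      (2 * deriv (deriv h) r + (lam - μ₁) * (deriv h r / h r)) - ((n:ℝ)-1) * μ₁ * r⁻¹)
      (fun r hr => (hbase r hr).sub ((Real.hasDerivAt_log hr.ne').const_mul _)) (by
        intro r hr1
        have hr : 0 < r := by linarith
        have e := hineq r hr
        have e2 : (h r - 1) / r^2 ≤ μ₁ * r⁻¹ := by
          rw [div_le_iff₀ (by positivity)]
          have : μ₁ * r⁻¹ * r^2 = μ₁ * r := by field_simp
          rw [this]; exact hlin r hr
        have e3 := mul_le_mul_of_nonneg_left e2 (show 0 ≤ (n:ℝ) - 1 by linarith)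
        linarith)
  set F1 : ℝ := 2 * deriv h 1 + (lam - μ₁) * Real.log (h 1) with hF1
  have hpow : ∀ r, 1 ≤ r → h r ≤ Real.exp (F1 / (lam - μ₁)) * r ^ α := by
    intro r hr1
    have hr : 0 < r := by linarith
    have e := hF r hr1
    simp only [Real.log_one, mul_zero, sub_zero] at e
    have a3 := hDpos r hr
    have e1 : Real.log (h r) ≤ F1 / (lam - μ₁) + Real.log r * α := by
      have : F1 / (lam - μ₁) + Real.log r * α = (F1 + ((n:ℝ)-1) * μ₁ * Real.log r) / (lam - μ₁) := by
        rw [hα]; ring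
      rw [this, le_div_iff₀ hLμ]
      linarith
    rw [Real.rpow_def_of_pos hr, ← Real.exp_add, ← Real.log_le_iff_le_exp (hode r hr).2]
    exact e1
  set C : ℝ := Real.exp (F1 / (lam - μ₁)) with hC
  have hG := aux_anti (F := fun r => (2 * deriv h r + (lam - μ₁) * Real.log (h r))
      + (((n:ℝ)-1) * C / (1 - α)) * r ^ (α - 1)) (F' := fun r =>
      (2 * deriv (deriv h) r + (lam - μ₁) * (deriv h r / h r)) +
        (((n:ℝ)-1) * C / (1 - α)) * ((α - 1) * r ^ (α - 1 - 1)))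
      (fun r hr => (hbase r hr).add ((Real.hasDerivAt_rpow_const (Or.inl hr.ne')).const_mul _)) (by
        intro r hr1
        have hr : 0 < r := by linarith
        have e := hineq r hr
        have e2 : (h r - 1) / r^2 ≤ C * r ^ (α - 1 - 1) := by
          rw [div_le_iff₀ (by positivity)]
          have : C * r ^ (α - 1 - 1) * r^2 = C * r ^ α := by
            rw [mul_assoc, ← Real.rpow_natCast, ← Real.rpow_add hr]
            congr 2
            push_cast; ring
          rw [this]; linarith [hpow r hr1.le]
        have e3 := mul_le_mul_of_nonneg_left e2 (show 0 ≤ (n:ℝ) - 1 by linarith)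
        have e4 : (((n:ℝ)-1) * C / (1 - α)) * ((α - 1) * r ^ (α - 1 - 1)) =
            -(((n:ℝ)-1) * (C * r ^ (α - 1 - 1))) := by
          have : 1 - α ≠ 0 := by linarith
          field_simp
          ring
        linarith)
  obtain ⟨B, hB⟩ : ∃ B, ∀ r, 1 ≤ r → h r ≤ B := by
    refine ⟨Real.exp ((F1 + (((n:ℝ)-1) * C / (1 - α))) / (lam - μ₁)), ?_⟩
    intro r hr1
    have hr : 0 < r := by linarith
    have e := hG r hr1
    simp only [Real.one_rpow, mul_one] at e
    have a3 := hDpos r hr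
    have a4 : 0 ≤ (((n:ℝ)-1) * C / (1 - α)) * r ^ (α - 1) := by
      refine mul_nonneg (div_nonneg (mul_nonneg (by linarith) (Real.exp_pos _).le) (by linarith)) (by positivity)
    rw [← Real.log_le_iff_le_exp (hode r hr).2, le_div_iff₀ hLμ]
    linarith
  have hmono : StrictMonoOn h (Ici 0) := by
    refine strictMonoOn_of_deriv_pos (convex_Ici 0) hC1.continuousOn ?_
    intro x hx
    rw [interior_Ici] at hx
    exact hDpos x hx
  refine ⟨?_, ?_, fun r hr => ⟨hh1 r hr, by linarith [hlin r hr]⟩⟩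
  · have hz : Tendsto (fun r : ℝ => B / r) atTop (𝓝 0) := tendsto_const_nhds.div_atTop tendsto_id
    refine tendsto_of_tendsto_of_tendsto_of_le_of_le' tendsto_const_nhds hz ?_ ?_
    · filter_upwards [eventually_gt_atTop 0] with r hr
      exact (hDpos r hr).le
    · filter_upwards [eventually_ge_atTop 1] with r hr
      rw [le_div_iff₀ (by linarith)]
      have := hpneg r (by linarith)
      have := hB r hr
      linarith
  · have hm : Monotone (fun r => h (max r 1)) := by
      intro a b hab
      exact hmono.monotoneOn (mem_Ici.2 (by positivity)) (mem_Ici.2 (by positivity))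
        (max_le_max_right 1 hab)
    have hbdd : BddAbove (range (fun r => h (max r 1))) := by
      refine ⟨B, ?_⟩
      rintro _ ⟨r, rfl⟩
      exact hB _ (le_max_right _ _)
    have ht := tendsto_atTop_ciSup hm hbdd
    refine ⟨_, ?_, ht.congr' ?_⟩
    · have := le_ciSup hbdd 1
      simp only [max_self] at this
      linarith [hh1 1 one_pos]
    · filter_upwards [eventually_ge_atTop 1] with r hr
      rw [max_eq_left hr]
end

section
/- Let λ > 0, let n ≥ 2 be an integer, and suppose μ₁ > λ/n. Suppose h ∈ C²((0,∞)) ∩ C¹([0,∞)) is a solution of 2r²h(r)h''(r) = (n-1)h(r)(h(r)-1) + r h'(r)(r h'(r) - λr - (n-1)), h(r) > 0 for r > 0, with h(0) = 1 and h'(0) = μ₁. Then h'(r) → ∞ and h(r) → ∞ as r → ∞, and h(r) ≥ 1 + μ₁ r for all r > 0. -/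
open Set Filter Topology

/-- No first zero. -/
lemma no_first_zero (a : ℝ) (f f' : ℝ → ℝ)
    (hder : ∀ x, a < x → HasDerivAt f (f' x) x)
    (hev : ∃ e, a < e ∧ ∀ x, a < x → x < e → 0 < f x)
    (hz : ∀ x, a < x → f x = 0 → (∀ y, a < y → y < x → 0 < f y) → 0 < f' x) :
    ∀ x, a < x → 0 < f x := by
  obtain ⟨e, hae, he⟩ := hev
  by_contra! hcon
  obtain ⟨b, hb, hfb⟩ := hcon
  set S := {x | a < x ∧ f x ≤ 0} with hS
  have hne : S.Nonempty := ⟨b, hb, hfb⟩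
  have hlb : ∀ x ∈ S, e ≤ x := by
    intro x hx
    by_contra! hlt
    exact absurd (he x hx.1 hlt) (not_lt.2 hx.2)
  have hbdd : BddBelow S := ⟨e, hlb⟩
  set s := sInf S with hs
  have hes : e ≤ s := le_csInf hne hlb
  have has : a < s := lt_of_lt_of_le hae hes
  have hpos : ∀ y, a < y → y < s → 0 < f y := by
    intro y hy hys
    by_contra! hle
    exact absurd (csInf_le hbdd (show y ∈ S from ⟨hy, hle⟩)) (not_le.2 hys)
  have hcont := (hder s has).continuousAt
  have hle : f s ≤ 0 := by
    by_contra! hlt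
    have h1 : ∀ᶠ y in 𝓝 s, 0 < f y := hcont.eventually (lt_mem_nhds hlt)
    obtain ⟨d, hd, hd'⟩ := Metric.eventually_nhds_iff.1 h1
    obtain ⟨y, hyS, hy⟩ := exists_lt_of_csInf_lt hne (show sInf S < s + d by linarith)
    have h2 : s ≤ y := csInf_le hbdd hyS
    have h3 := hd' (y := y) (by rw [Real.dist_eq, abs_lt]; constructor <;> linarith)
    exact absurd hyS.2 (not_le.2 h3)
  have hleft : ∀ᶠ y in 𝓝[<] s, 0 < f y := by
    filter_upwards [Ioo_mem_nhdsLT has] with y hy using hpos y hy.1 hy.2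
  have hge : 0 ≤ f s :=
    ge_of_tendsto (hcont.tendsto.mono_left nhdsWithin_le_nhds) (hleft.mono fun _ h => h.le)
  have h0 : f s = 0 := le_antisymm hle hge
  have hd := hz s has h0 hpos
  have hsl := (hasDerivAt_iff_tendsto_slope_left_right.1 (hder s has)).1
  have h4 : ∀ᶠ y in 𝓝[<] s, 0 < slope f s y := hsl.eventually (lt_mem_nhds hd)
  obtain ⟨y, ⟨hy1, hy2⟩, hy3⟩ := ((h4.and hleft).and self_mem_nhdsWithin).exists
  have hy3' : y < s := hy3
  rw [slope_def_field, h0, sub_zero] at hy1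
  exact absurd (div_neg_of_pos_of_neg hy2 (by linarith : y - s < 0)) (not_lt.2 hy1.le)

/-- Positivity near the left endpoint. -/
lemma pos_near (e : ℝ) (f f' : ℝ → ℝ) (hc : ContinuousOn f (Ici 0)) (h0 : f 0 = 0)
    (hder : ∀ x, 0 < x → HasDerivAt f (f' x) x)
    (hz : ∀ x, 0 < x → x < e → f x ≤ 0 → 0 < f' x) :
    ∀ x, 0 < x → x < e → 0 < f x := by
  by_contra! hcon
  obtain ⟨b, hb, hbe, hfb⟩ := hcon
  obtain ⟨x, hx, hmin⟩ := isCompact_Icc.exists_isMinOn (nonempty_Icc.2 hb.le)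
    (hc.mono (fun y (hy : y ∈ Icc 0 b) => hy.1))
  have key : ∃ z, 0 < z ∧ z ≤ b ∧ f z ≤ 0 ∧ ∀ y ∈ Icc 0 b, f z ≤ f y := by
    rcases hx.1.eq_or_lt with h | h
    · refine ⟨b, hb, le_rfl, hfb, fun y hy => ?_⟩
      have : f x ≤ f y := hmin hy
      rw [← h, h0] at this
      linarith
    · exact ⟨x, h, hx.2, le_trans (hmin (right_mem_Icc.2 hb.le)) hfb, fun y hy => hmin hy⟩
  obtain ⟨z, hz0, hzb, hfz, hzm⟩ := key
  have hd := hz z hz0 (by linarith) hfz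
  have hsl := (hasDerivAt_iff_tendsto_slope_left_right.1 (hder z hz0)).1
  have h4 : ∀ᶠ y in 𝓝[<] z, 0 < slope f z y := hsl.eventually (lt_mem_nhds hd)
  obtain ⟨y, hy1, hy2⟩ := (h4.and (Ioo_mem_nhdsLT hz0)).exists
  rw [slope_def_field] at hy1
  have h5 := hzm y ⟨hy2.1.le, by linarith [hy2.2]⟩
  exact absurd (div_nonpos_of_nonneg_of_nonpos (by linarith : 0 ≤ f y - f z)
    (by linarith [hy2.2] : y - z ≤ 0)) (not_le.2 hy1)

theorem expanding_large_slope (lam μ₁ : ℝ) (n : ℕ) (hlam : 0 < lam) (hn2 : 2 ≤ n)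
    (hμ : lam / n < μ₁)
    (h : ℝ → ℝ) (hsol : IsSol n lam μ₁ h) :
    Filter.Tendsto (deriv h) Filter.atTop Filter.atTop ∧
    Filter.Tendsto h Filter.atTop Filter.atTop ∧
    ∀ r : ℝ, 0 < r → 1 + μ₁ * r ≤ h r := by
  obtain ⟨hC2, hC1, hode, h0, hp0⟩ := hsol
  have hn : (2 : ℝ) ≤ n := by exact_mod_cast hn2
  generalize (n : ℝ) = N at *
  have hN : 0 < N := by linarith
  have hμ' : lam < N * μ₁ := by rw [div_lt_iff₀ hN] at hμ; linarith
  have hμ0 : 0 < μ₁ := lt_trans (div_pos hlam hN) hμ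
  -- regularity
  have hd1 : ∀ r, 0 < r → HasDerivAt h (deriv h r) r := fun r hr =>
    (((hC2.differentiableOn (by norm_num)) r hr).differentiableAt (Ioi_mem_nhds hr)).hasDerivAt
  have hd2 : ∀ r, 0 < r → HasDerivAt (deriv h) (deriv (deriv h) r) r := by
    intro r hr
    have : ContDiffOn ℝ 1 (deriv h) (Ioi 0) := hC2.deriv_of_isOpen isOpen_Ioi (by norm_num)
    exact (((this.differentiableOn (by norm_num)) r hr).differentiableAt
      (Ioi_mem_nhds hr)).hasDerivAt
  have hdw : ∀ r, 0 < r → derivWithin h (Ici 0) r = deriv h r := fun r hr =>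
    derivWithin_of_mem_nhds (Ici_mem_nhds hr)
  have hPc : ContinuousOn (derivWithin h (Ici 0)) (Ici 0) :=
    hC1.continuousOn_derivWithin (uniqueDiffOn_Ici 0) le_rfl
  have hhc : ContinuousOn h (Ici 0) := hC1.continuousOn
  have hplim : Tendsto (deriv h) (𝓝[>] 0) (𝓝 μ₁) := by
    have h1 : Tendsto (derivWithin h (Ici 0)) (𝓝[>] 0) (𝓝 μ₁) := by
      have := hPc 0 self_mem_Ici
      rw [ContinuousWithinAt, hp0] at this
      exact this.mono_left (nhdsWithin_mono _ Ioi_subset_Ici_self)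
    refine h1.congr' ?_
    filter_upwards [self_mem_nhdsWithin] with r hr using hdw r hr
  have hqlim : Tendsto (fun r => (h r - 1) / r) (𝓝[>] 0) (𝓝 μ₁) := by
    have h1 : HasDerivWithinAt h μ₁ (Ici 0) 0 := by
      rw [← hp0]
      exact ((hC1.differentiableOn (by norm_num)) 0 self_mem_Ici).hasDerivWithinAt
    have h2 := (hasDerivWithinAt_iff_tendsto_slope.1 h1)
    have h3 : Ici (0:ℝ) \ {0} = Ioi 0 := by ext x; simp [lt_iff_le_and_ne, eq_comm]
    rw [h3] at h2
    refine h2.congr fun r => ?_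
    rw [slope_def_field, h0, sub_zero]
  -- u
  set u : ℝ → ℝ := fun r => r * derivWithin h (Ici 0) r - (h r - 1) with hu
  have huv : ∀ r, 0 < r → u r = r * deriv h r - (h r - 1) := by
    intro r hr; simp only [hu]; rw [hdw r hr]
  have huc : ContinuousOn u (Ici 0) :=
    (continuousOn_id.mul hPc).sub (hhc.sub continuousOn_const)
  have hu0 : u 0 = 0 := by simp [hu, h0]
  have hud : ∀ r, 0 < r → HasDerivAt u (r * deriv (deriv h) r) r := by
    intro r hr
    have h1 := ((hasDerivAt_id r).mul (hd2 r hr)).sub ((hd1 r hr).sub_const 1)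
    have h2 : HasDerivAt (fun r => r * deriv h r - (h r - 1)) (r * deriv (deriv h) r) r := by
      refine h1.congr_deriv ?_
      simp
    refine h2.congr_of_eventuallyEq ?_
    filter_upwards [Ioi_mem_nhds hr] with y hy using huv y hy
  have hueq : ∀ r, 0 < r → 2 * h r * (r * deriv (deriv h) r) * r =
      -(N - 1) * u r + (N - 1) * (h r - 1)^2 + (r * deriv h r)^2
        - lam * r * (r * deriv h r) := by
    intro r hr
    rw [huv r hr]
    linear_combination (hode r hr).1
  have hsign : ∀ r, 0 < r → 0 < -(N - 1) * u r + (N - 1) * (h r - 1)^2 + (r * deriv h r)^2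
        - lam * r * (r * deriv h r) → 0 < r * deriv (deriv h) r := by
    intro r hr hh
    rw [← hueq r hr] at hh
    have h1 := (hode r hr).2
    have h2 : 0 < 2 * h r * r := by positivity
    refine (mul_pos_iff_of_pos_left h2).1 ?_
    linarith
  have hnear : ∃ e, 0 < e ∧ ∀ x, 0 < x → x < e → 0 < u x := by
    have hF : Tendsto (fun r => (N - 1) * ((h r - 1) / r)^2 + (deriv h r)^2 - lam * deriv h r)
        (𝓝[>] 0) (𝓝 ((N - 1) * μ₁^2 + μ₁^2 - lam * μ₁)) :=
      (((hqlim.pow 2).const_mul _).add (hplim.pow 2)).sub (hplim.const_mul _)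
    have hFp : 0 < (N - 1) * μ₁^2 + μ₁^2 - lam * μ₁ := by nlinarith
    have hev := hF.eventually (lt_mem_nhds hFp)
    obtain ⟨e, he, hes⟩ := mem_nhdsGT_iff_exists_Ioo_subset.1 hev
    refine ⟨e, he, pos_near e u _ huc hu0 hud fun x hx hxe hux => hsign x hx ?_⟩
    have h1 : 0 < (N - 1) * ((h x - 1) / x)^2 + (deriv h x)^2 - lam * deriv h x := hes ⟨hx, hxe⟩
    have h2 : (N - 1) * (h x - 1)^2 + (x * deriv h x)^2 - lam * x * (x * deriv h x)
      = x^2 * ((N - 1) * ((h x - 1) / x)^2 + (deriv h x)^2 - lam * deriv h x) := by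
      field_simp
    have h3 : 0 < x^2 * ((N - 1) * ((h x - 1) / x)^2 + (deriv h x)^2 - lam * deriv h x) := by
      positivity
    nlinarith
  -- q
  set q : ℝ → ℝ := fun r => (h r - 1) / r with hq
  have hqd : ∀ r, 0 < r → HasDerivAt q (u r / r^2) r := by
    intro r hr
    refine (((hd1 r hr).sub_const 1).div (hasDerivAt_id r) hr.ne').congr_deriv ?_
    rw [huv r hr]; simp; ring
  have hqge : ∀ x, 0 < x → (∀ y, 0 < y → y < x → 0 < u y) → μ₁ ≤ q x := by
    intro x hx hy
    have hmono : MonotoneOn q (Ioc 0 x) := by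
      refine monotoneOn_of_deriv_nonneg (convex_Ioc 0 x)
        (fun y hy => (hqd y hy.1).continuousAt.continuousWithinAt) ?_ ?_
      · rw [interior_Ioc]
        exact fun y hy => (hqd y hy.1).differentiableAt.differentiableWithinAt
      · rw [interior_Ioc]
        intro y hy'
        rw [(hqd y hy'.1).deriv]
        have := hy y hy'.1 hy'.2
        positivity
    refine le_of_tendsto hqlim ?_
    filter_upwards [Ioo_mem_nhdsGT hx] with y hy'
    exact hmono ⟨hy'.1, hy'.2.le⟩ ⟨hx, le_rfl⟩ hy'.2.le
  have hhq : ∀ r, 0 < r → h r - 1 = r * q r := by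
    intro r hr; simp only [hq]; field_simp
  have hupos : ∀ x, 0 < x → 0 < u x := by
    refine no_first_zero 0 u _ hud hnear fun x hx hux hpos => hsign x hx ?_
    have hqx := hqge x hx hpos
    have h1 : x * deriv h x = x * q x := by
      have := huv x hx
      rw [hux, hhq x hx] at this; linarith
    rw [hux, h1, hhq x hx]
    have h2 : 0 < q x := by linarith
    have h3 : 0 < N * q x - lam := by nlinarith
    have h4 : 0 < x^2 * q x * (N * q x - lam) := by positivity
    nlinarith
  have hqμ : ∀ x, 0 < x → μ₁ ≤ q x := fun x hx => hqge x hx fun y hy _ => hupos y hy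
  have hthird : ∀ r : ℝ, 0 < r → 1 + μ₁ * r ≤ h r := by
    intro r hr
    have h1 := hhq r hr
    have h2 := mul_le_mul_of_nonneg_left (hqμ r hr) hr.le
    linarith
  -- growth of d = u / r
  obtain ⟨c, hc0, hcu, hcs⟩ : ∃ c, 0 < c ∧ c < u 1 ∧ c * (lam + N + 1) < μ₁ * (N * μ₁ - lam) := by
    have h1 := hupos 1 one_pos
    have hK : 0 < lam + N + 1 := by linarith
    have hB : 0 < μ₁ * (N * μ₁ - lam) := mul_pos hμ0 (by linarith)
    obtain ⟨c, hc, hc'⟩ := exists_between (lt_min h1 (div_pos hB hK))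
    refine ⟨c, hc, lt_of_lt_of_le hc' (min_le_left _ _), ?_⟩
    exact (lt_div_iff₀ hK).1 (lt_of_lt_of_le hc' (min_le_right _ _))
  have hgd : ∀ r, 0 < r → HasDerivAt (fun r => u r - c * r) (r * deriv (deriv h) r - c) r := by
    intro r hr
    refine ((hud r hr).sub ((hasDerivAt_id r).const_mul c)).congr_deriv ?_
    simp
  have hdc : ∀ r, 1 < r → 0 < u r - c * r := by
    refine no_first_zero 1 _ _ (fun x hx => hgd x (by linarith)) ?_ ?_
    · have h1 := (hgd 1 one_pos).continuousAt.eventually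
        (lt_mem_nhds (show 0 < u 1 - c * 1 by linarith))
      have h2 : ∀ᶠ y in 𝓝[>] (1:ℝ), 0 < u y - c * y := h1.filter_mono nhdsWithin_le_nhds
      obtain ⟨e, he, hes⟩ := mem_nhdsGT_iff_exists_Ioo_subset.1 h2
      exact ⟨e, he, fun x hx hxe => hes ⟨hx, hxe⟩⟩
    · intro x hx hux _
      have hx0 : 0 < x := by linarith
      have hqx := hqμ x hx0
      have h1 : u x = c * x := by linarith
      have h2 : x * deriv h x = x * (q x + c) := by
        have := huv x hx0
        rw [h1, hhq x hx0] at this; linarith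
      have h3 := hueq x hx0
      have hhx : h x = 1 + x * q x := by linarith [hhq x hx0]
      have hhp := (hode x hx0).2
      have h4 : 0 < 2 * h x * x := by positivity
      refine (mul_pos_iff_of_pos_left h4).1 ?_
      have h5 : 2 * h x * x * (x * deriv (deriv h) x - c) =
          x * (x * (q x * (N * q x - lam) - c * lam + c^2) - (N + 1) * c) := by
        rw [h1, h2, hhq x hx0] at h3
        have : 2 * h x * x * (x * deriv (deriv h) x - c) =
          2 * h x * (x * deriv (deriv h) x) * x - 2 * h x * x * c := by ring
        rw [this, h3, hhx]; ring
      rw [h5]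
      have h6 : μ₁ * (N * μ₁ - lam) ≤ q x * (N * q x - lam) := by
        apply mul_le_mul hqx _ (by linarith) (by linarith)
        nlinarith
      have h7 : (N + 1) * c < q x * (N * q x - lam) - c * lam + c^2 := by nlinarith [sq_nonneg c]
      have h8 : 0 < (N + 1) * c := by positivity
      exact mul_pos hx0 (by nlinarith)
  have hqlog : ∀ r, 1 ≤ r → q 1 + c * Real.log r ≤ q r := by
    have hgd' : ∀ r, 0 < r → HasDerivAt (fun r => q r - c * Real.log r) (u r / r^2 - c * r⁻¹) r :=
      fun r hr => (hqd r hr).sub ((Real.hasDerivAt_log hr.ne').const_mul c)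
    have hmono : MonotoneOn (fun r => q r - c * Real.log r) (Ici 1) := by
      refine monotoneOn_of_deriv_nonneg (convex_Ici 1)
        (fun y hy => (hgd' y (lt_of_lt_of_le one_pos hy)).continuousAt.continuousWithinAt) ?_ ?_
      · rw [interior_Ici]
        exact fun y hy => (hgd' y (lt_trans one_pos hy)).differentiableAt.differentiableWithinAt
      · rw [interior_Ici]
        intro y hy
        have hy0 : 0 < y := lt_trans one_pos hy
        rw [(hgd' y hy0).deriv]
        have h1 : u y / y^2 - c * y⁻¹ = (u y - c * y) / y^2 := by field_simp
        rw [h1]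
        have := hdc y hy
        positivity
    intro r hr
    have := hmono self_mem_Ici hr hr
    simp only [Real.log_one, mul_zero, sub_zero] at this
    linarith
  refine ⟨?_, ?_, hthird⟩
  · have h1 : Tendsto (fun r => q 1 + c * Real.log r) atTop atTop :=
      tendsto_atTop_add_const_left _ _ (Real.tendsto_log_atTop.const_mul_atTop hc0)
    refine tendsto_atTop_mono' _ ?_ h1
    filter_upwards [eventually_ge_atTop 1] with r hr
    have hr0 : 0 < r := by linarith
    refine (hqlog r hr).trans ?_
    have h2 := hupos r hr0
    rw [huv r hr0, hhq r hr0] at h2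
    exact (lt_of_mul_lt_mul_left (by linarith : r * q r < r * deriv h r) hr0.le).le
  · have h1 : Tendsto (fun r => 1 + μ₁ * r) atTop atTop :=
      tendsto_atTop_add_const_left _ _ (tendsto_id.const_mul_atTop hμ0)
    refine tendsto_atTop_mono' _ ?_ h1
    filter_upwards [eventually_gt_atTop 0] with r hr using hthird r hr
end

section
/- Let λ > 0, let n ≥ 2 be an integer, and suppose μ₁ < 0. Suppose h ∈ C²((0,∞)) ∩ C¹([0,∞)) is a solution of 2r²h(r)h''(r) = (n-1)h(r)(h(r)-1) + r h'(r)(r h'(r) - λr - (n-1)), h(r) > 0 for r > 0, with h(0) = 1 and h'(0) = μ₁. Then h'(r) → 0 as r → ∞ and the limit lim_{r→∞} h(r) exists and lies in (0,1). -/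
open Set Filter Topology

theorem aux_mono_limit (F : ℝ → ℝ) (B : ℝ) (hF : MonotoneOn F (Set.Ici 1))
    (hB : ∀ r, 1 ≤ r → F r ≤ B) : ∃ L, Tendsto F atTop (𝓝 L) := by
  have hm : Monotone (fun x => F (max 1 x)) := fun x y hxy =>
    hF (mem_Ici.2 (le_max_left _ _)) (mem_Ici.2 (le_max_left _ _)) (max_le_max le_rfl hxy)
  have hb : BddAbove (Set.range (fun x => F (max 1 x))) :=
    ⟨B, by rintro _ ⟨x, rfl⟩; exact hB _ (le_max_left _ _)⟩
  refine ⟨_, (tendsto_atTop_ciSup hm hb).congr' ?_⟩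
  filter_upwards [eventually_ge_atTop 1] with x hx
  simp [max_eq_right hx]

theorem aux_neg (lam μ₁ : ℝ) (n : ℕ) (hn2 : 2 ≤ n)
    (hμ : μ₁ < 0) (h : ℝ → ℝ) (hsol : IsSol n lam μ₁ h)
    (hd2 : ∀ r, 0 < r → HasDerivAt (deriv h) (deriv (deriv h) r) r) :
    ∀ r, 0 < r → deriv h r < 0 := by
  obtain ⟨h2, h1, heq, h0, hd0⟩ := hsol
  have hN : (1:ℝ) ≤ (n:ℝ) - 1 := by
    have : (2:ℝ) ≤ n := by exact_mod_cast hn2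
    linarith
  set g := derivWithin h (Set.Ici 0) with hg
  have hgc : ContinuousOn g (Set.Ici 0) :=
    h1.continuousOn_derivWithin (uniqueDiffOn_Ici 0) le_rfl
  have hge : ∀ r, 0 < r → g r = deriv h r := fun r hr =>
    derivWithin_of_mem_nhds (Ici_mem_nhds hr)
  intro b hb
  by_contra hcon
  push Not at hcon
  have hSc : IsCompact (Set.Icc 0 b ∩ g ⁻¹' (Set.Ici 0)) := by
    refine isCompact_Icc.of_isClosed_subset ?_ inter_subset_left
    exact (hgc.mono Icc_subset_Ici_self).preimage_isClosed_of_isClosed isClosed_Icc isClosed_Ici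
  obtain ⟨r0, ⟨⟨hr0, hr0b⟩, hgr0⟩, hleast⟩ := hSc.exists_isLeast
    ⟨b, ⟨hb.le, le_rfl⟩, by simpa [hge b hb] using hcon⟩
  have hr0p : 0 < r0 := by
    rcases hr0.lt_or_eq with h' | h'
    · exact h'
    · subst h'
      simp only [mem_preimage, mem_Ici] at hgr0
      linarith
  have hlt : ∀ x, 0 < x → x < r0 → deriv h x < 0 := by
    intro x hx hxr
    by_contra hc
    push Not at hc
    have := hleast (show x ∈ _ from ⟨⟨hx.le, by linarith⟩, by simpa [hge x hx] using hc⟩)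
    linarith
  have hnear : ∀ᶠ x in 𝓝[<] r0, deriv h x < 0 := by
    filter_upwards [Ioo_mem_nhdsLT hr0p] with x hx using hlt x hx.1 hx.2
  have hle : deriv h r0 ≤ 0 := by
    have : Tendsto (deriv h) (𝓝[<] r0) (𝓝 (deriv h r0)) :=
      ((hd2 r0 hr0p).continuousAt.tendsto).mono_left nhdsWithin_le_nhds
    exact le_of_tendsto this (hnear.mono fun x hx => hx.le)
  have hz : deriv h r0 = 0 := le_antisymm hle (by simpa [hge r0 hr0p] using hgr0)
  have hanti : StrictAntiOn h (Set.Icc 0 r0) := by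
    apply strictAntiOn_of_deriv_neg (convex_Icc 0 r0)
    · exact h1.continuousOn.mono Icc_subset_Ici_self
    · intro x hx
      rw [interior_Icc] at hx
      exact hlt x hx.1 hx.2
  have hh1 : h r0 < 1 := by
    rw [← h0]
    exact hanti ⟨le_rfl, hr0⟩ ⟨hr0, le_rfl⟩ hr0p
  obtain ⟨e, hp⟩ := heq r0 hr0p
  have hdd : 0 ≤ deriv (deriv h) r0 := by
    have ht := (hasDerivAt_iff_tendsto_slope.1 (hd2 r0 hr0p)).mono_left
      (nhdsWithin_mono r0 (show Set.Iio r0 ⊆ {r0}ᶜ from fun x hx => ne_of_lt hx))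
    refine ge_of_tendsto ht ?_
    filter_upwards [hnear, self_mem_nhdsWithin] with x hx hx'
    rw [slope_def_field, hz, sub_zero]
    exact (div_pos_of_neg_of_neg hx (sub_neg.2 hx')).le
  rw [hz] at e
  have a1 : 0 ≤ 2 * r0 ^ 2 * h r0 * deriv (deriv h) r0 := by positivity
  have a2 : 0 < ((n:ℝ) - 1) * h r0 * (1 - h r0) :=
    mul_pos (mul_pos (by linarith) hp) (by linarith)
  nlinarith

theorem expanding_negative_slope (lam μ₁ : ℝ) (n : ℕ) (hlam : 0 < lam) (hn2 : 2 ≤ n)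
    (hμ : μ₁ < 0)
    (h : ℝ → ℝ) (hsol : IsSol n lam μ₁ h) :
    Filter.Tendsto (deriv h) Filter.atTop (nhds 0) ∧
    ∃ c : ℝ, 0 < c ∧ c < 1 ∧ Filter.Tendsto h Filter.atTop (nhds c) := by
  have hd1 : ∀ r, 0 < r → HasDerivAt h (deriv h r) r := fun r hr =>
    ((hsol.1.differentiableOn (by norm_num)).differentiableAt (Ioi_mem_nhds hr)).hasDerivAt
  have hd2 : ∀ r, 0 < r → HasDerivAt (deriv h) (deriv (deriv h) r) r := fun r hr =>
    (((hsol.1.deriv_of_isOpen (m := 1) isOpen_Ioi (by norm_num)).differentiableOn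
      (by norm_num)).differentiableAt (Ioi_mem_nhds hr)).hasDerivAt
  have hneg := aux_neg lam μ₁ n hn2 hμ h hsol hd2
  obtain ⟨h2, h1, heq, h0, hd0⟩ := hsol
  have hN : (1:ℝ) ≤ (n:ℝ) - 1 := by
    have : (2:ℝ) ≤ n := by exact_mod_cast hn2
    linarith
  set N := (n:ℝ) - 1 with hNdef
  have hanti : StrictAntiOn h (Set.Ici 0) := by
    apply strictAntiOn_of_deriv_neg (convex_Ici 0) h1.continuousOn
    intro x hx
    rw [interior_Ici] at hx
    exact hneg x hx
  -- key inequality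
  have key : ∀ r, 0 < r → 0 ≤ deriv (deriv h) r + N / (2 * r ^ 2)
      + lam / 2 * (deriv h r / h r) := by
    intro r hr
    obtain ⟨e, hp⟩ := heq r hr
    have hn := hneg r hr
    have e2 : deriv (deriv h) r + N / (2 * r ^ 2) + lam / 2 * (deriv h r / h r)
        = (N * h r ^ 2 + (r * deriv h r) ^ 2 + N * r * (- deriv h r)) / (2 * r ^ 2 * h r) := by
      field_simp
      linear_combination e
    rw [e2]
    have : 0 < - deriv h r := by linarith
    positivity
  have hGd : ∀ r, 0 < r → HasDerivAt (fun r => deriv h r - N / 2 * r⁻¹)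
      (deriv (deriv h) r + N / (2 * r ^ 2)) r := by
    intro r hr
    refine ((hd2 r hr).sub ((hasDerivAt_inv hr.ne').const_mul (N / 2))).congr_deriv ?_
    field_simp
    ring
  have hFd : ∀ r, 0 < r → HasDerivAt (fun r => deriv h r - N / 2 * r⁻¹ + lam / 2 * Real.log (h r))
      (deriv (deriv h) r + N / (2 * r ^ 2) + lam / 2 * (deriv h r / h r)) r := by
    intro r hr
    exact (hGd r hr).add (((hd1 r hr).log (heq r hr).2.ne').const_mul (lam / 2))
  have hG : MonotoneOn (fun r => deriv h r - N / 2 * r⁻¹) (Set.Ici 1) := by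
    apply monotoneOn_of_deriv_nonneg (convex_Ici 1)
    · exact fun x hx => (hGd x (lt_of_lt_of_le one_pos hx)).continuousAt.continuousWithinAt
    · intro x hx
      rw [interior_Ici] at hx
      exact (hGd x (one_pos.trans hx)).differentiableAt.differentiableWithinAt
    · intro x hx
      rw [interior_Ici] at hx
      have hx0 : 0 < x := one_pos.trans hx
      rw [(hGd x hx0).deriv]
      have k := key x hx0
      have : deriv h x / h x < 0 := div_neg_of_neg_of_pos (hneg x hx0) (heq x hx0).2
      nlinarith
  have hF : MonotoneOn (fun r => deriv h r - N / 2 * r⁻¹ + lam / 2 * Real.log (h r))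
      (Set.Ici 1) := by
    apply monotoneOn_of_deriv_nonneg (convex_Ici 1)
    · exact fun x hx => (hFd x (lt_of_lt_of_le one_pos hx)).continuousAt.continuousWithinAt
    · intro x hx
      rw [interior_Ici] at hx
      exact (hFd x (one_pos.trans hx)).differentiableAt.differentiableWithinAt
    · intro x hx
      rw [interior_Ici] at hx
      have hx0 : 0 < x := one_pos.trans hx
      rw [(hFd x hx0).deriv]
      exact key x hx0
  obtain ⟨L, hL⟩ := aux_mono_limit _ 0 hG (by
    intro r hr
    have hr0 : 0 < r := one_pos.trans_le hr
    have := hneg r hr0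
    have : 0 < N / 2 * r⁻¹ := by positivity
    linarith)
  have hL' : Tendsto (deriv h) atTop (𝓝 L) := by
    have := hL.add (tendsto_inv_atTop_zero.const_mul (N / 2))
    simpa using this
  obtain ⟨d, hd⟩ := aux_mono_limit (fun r => - h r) 0
    (fun x hx y hy hxy => neg_le_neg (hanti.antitoneOn
      (mem_Ici.2 (zero_le_one.trans (mem_Ici.1 hx)))
      (mem_Ici.2 (zero_le_one.trans (mem_Ici.1 hy))) hxy))
    (fun r hr => by have := (heq r (one_pos.trans_le hr)).2; linarith)
  have hc : Tendsto h atTop (𝓝 (-d)) := by simpa using hd.neg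
  have hL0 : L = 0 := by
    have hmv : ∀ r : ℝ, ∃ ξ, r ≤ ξ ∧ (0 < r → deriv h ξ = h (r + 1) - h r) := by
      intro r
      by_cases hr : 0 < r
      · obtain ⟨ξ, hξ, he⟩ := exists_hasDerivAt_eq_slope h (deriv h) (show r < r + 1 by linarith)
          (fun x hx => (hd1 x (hr.trans_le hx.1)).continuousAt.continuousWithinAt)
          (fun x hx => hd1 x (hr.trans hx.1))
        exact ⟨ξ, hξ.1.le, fun _ => by simpa using he⟩
      · exact ⟨r, le_rfl, fun h => absurd h hr⟩
    choose ξ hξ1 hξ2 using hmv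
    have t1 : Tendsto (fun r => deriv h (ξ r)) atTop (𝓝 L) :=
      hL'.comp (tendsto_atTop_mono hξ1 tendsto_id)
    have t2 : Tendsto (fun r => h (r + 1) - h r) atTop (𝓝 (-d - -d)) :=
      (hc.comp (tendsto_atTop_add_const_right _ 1 tendsto_id)).sub hc
    rw [sub_self] at t2
    refine tendsto_nhds_unique t1 (t2.congr' ?_)
    filter_upwards [eventually_gt_atTop 0] with r hr using (hξ2 r hr).symm
  refine ⟨hL0 ▸ hL', -d, ?_, ?_, hc⟩
  · set A := deriv h 1 - N / 2 * (1:ℝ)⁻¹ + lam / 2 * Real.log (h 1) with hA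
    refine (Real.exp_pos (2 * A / lam)).trans_le (ge_of_tendsto hc ?_)
    filter_upwards [eventually_ge_atTop 1] with r hr
    have hr0 : 0 < r := one_pos.trans_le hr
    have m : A ≤ deriv h r - N / 2 * r⁻¹ + lam / 2 * Real.log (h r) :=
      hF (show (1:ℝ) ∈ Set.Ici 1 from mem_Ici.2 le_rfl) hr hr
    have := hneg r hr0
    have : 0 < N / 2 * r⁻¹ := by positivity
    rw [← Real.le_log_iff_exp_le (heq r hr0).2, div_le_iff₀ hlam]
    linarith
  · have a : h 1 < 1 := by
      have := hanti (show (0:ℝ) ∈ Set.Ici 0 from mem_Ici.2 le_rfl) (show (1:ℝ) ∈ Set.Ici 0 from mem_Ici.2 zero_le_one)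
        one_pos
      linarith
    refine lt_of_le_of_lt (le_of_tendsto hc ?_) a
    filter_upwards [eventually_ge_atTop 1] with r hr
    exact hanti.antitoneOn (show (1:ℝ) ∈ Set.Ici 0 from mem_Ici.2 zero_le_one)
      (show r ∈ Set.Ici 0 from mem_Ici.2 (zero_le_one.trans hr)) hr
end

section
/- Let n ≥ 2 be an integer and μ₁ > 0. Suppose h ∈ C²((0,∞)) ∩ C¹([0,∞)) is a solution of the steady equation 2r²h(r)h''(r) = (n-1)h(r)(h(r)-1) + r h'(r)(r h'(r) - (n-1)), h(r) > 0 for r > 0, with h(0) = 1 and h'(0) = μ₁. Then h'(r) → ∞ and h(r) → ∞ as r → ∞, and h(r) ≥ 1 + μ₁ r for all r > 0. -/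
open Set Filter Topology

lemma aux_left {G : ℝ → ℝ} {g m : ℝ} (hm : 0 < m) (hG : HasDerivAt G g m) (hg : 0 < g)
    (hmin : ∀ x, 0 < x → x < m → G m ≤ G x) : False := by
  have h1 := hG.tendsto_slope
  have h2 : Tendsto (slope G m) (𝓝[<] m) (𝓝 g) :=
    h1.mono_left (nhdsWithin_mono _ (fun x hx => ne_of_lt hx))
  have h3 := h2.eventually (lt_mem_nhds hg)
  have h4 : ∀ᶠ x in 𝓝[<] m, x ∈ Set.Ioo 0 m := Ioo_mem_nhdsLT hm
  obtain ⟨x, hx, hx0, hxm⟩ := (h3.and h4).exists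
  rw [slope_def_field] at hx
  have := div_nonpos_of_nonneg_of_nonpos (sub_nonneg.2 (hmin x hx0 hxm)) (sub_nonpos.2 hxm.le)
  linarith

/-- on an interval where the slope is positive, the second derivative is positive -/
lemma aux_convex {N : ℝ} (hN : 1 ≤ N) {h d q : ℝ → ℝ}
    (hc : ContinuousOn h (Ici 0)) (dc : ContinuousOn d (Ici 0))
    (hd : ∀ r, 0 < r → HasDerivAt h (d r) r) (dd : ∀ r, 0 < r → HasDerivAt d (q r) r)
    (ode : ∀ r, 0 < r → 2 * r ^ 2 * h r * q r = N * h r * (h r - 1) + r * d r * (r * d r - N))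
    (hpos : ∀ r, 0 ≤ r → 0 < h r) (h0 : h 0 = 1) {R : ℝ}
    (hdp : ∀ r, 0 < r → r < R → 0 < d r) : ∀ r, 0 < r → r < R → 0 < q r := by
  intro r1 hr1 hr1R
  set G : ℝ → ℝ := fun r => (N * h r * (h r - 1) + r * d r * (r * d r - N)) / h r with hGdef
  have hGc : ContinuousOn G (Icc 0 r1) := by
    have a1 : ContinuousOn h (Icc 0 r1) := hc.mono (fun x hx => hx.1)
    have a2 : ContinuousOn d (Icc 0 r1) := dc.mono (fun x hx => hx.1)
    refine ContinuousOn.div (by fun_prop) a1 (fun x hx => (hpos x hx.1).ne')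
  have hG0 : G 0 = 0 := by simp [hGdef, h0]
  have hmono : StrictMonoOn h (Icc 0 r1) := by
    refine strictMonoOn_of_deriv_pos (convex_Icc 0 r1) (hc.mono (fun x hx => hx.1)) ?_
    intro x hx
    rw [interior_Icc] at hx
    rw [(hd x hx.1).deriv]
    exact hdp x hx.1 (hx.2.trans hr1R)
  have hGq : ∀ r, 0 < r → G r = 2 * r ^ 2 * q r := by
    intro r hr
    have := (hpos r hr.le).ne'
    simp only [hGdef]
    rw [← ode r hr]
    field_simp
  have key : ∀ m, 0 < m → m ≤ r1 → G m ≤ 0 → (∀ x, 0 < x → x < m → G m ≤ G x) → False := by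
    intro m hm hmr hGm hmin
    have hqm : q m ≤ 0 := by
      rw [hGq m hm] at hGm
      by_contra hcon
      push Not at hcon
      have : 0 < 2 * m ^ 2 * q m := by positivity
      linarith
    have hh := hd m hm
    have hdd := dd m hm
    have hp := hpos m hm.le
    have hdm := hdp m hm (hmr.trans_lt hr1R)
    have hgt : 1 < h m := by
      have := hmono (left_mem_Icc.2 hr1.le) ⟨hm.le, hmr⟩ hm
      rwa [h0] at this
    have hid := hasDerivAt_id' m
    have hF := (((hh.const_mul N).mul (hh.sub_const 1)).add
      ((hid.mul hdd).mul ((hid.mul hdd).sub_const N))).div hh hp.ne'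
    refine aux_left hm hF ?_ hmin
    refine div_pos ?_ (by positivity)
    have e := ode m hm
    have t1 : 0 < h m * (2 * N * d m * (h m - 1) + 2 * m * d m ^ 2) := by
      have : 0 < h m - 1 := by linarith
      positivity
    have t2 : 0 ≤ h m * m * N * (-q m) := by
      have : 0 ≤ -q m := by linarith
      positivity
    simp only [Pi.mul_apply, Pi.add_apply]
    rw [← e]
    nlinarith [t1, t2]
  obtain ⟨m, hmI, hmin⟩ := isCompact_Icc.exists_isMinOn (nonempty_Icc.2 hr1.le) hGc
  have hGr : 0 < G r1 := by
    by_contra hcon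
    push Not at hcon
    rcases hmI.1.eq_or_lt with hm0 | hm0
    · have hall : ∀ x ∈ Icc 0 r1, 0 ≤ G x := by
        intro x hx
        have := hmin hx
        simp only [mem_setOf_eq] at this
        rw [← hm0, hG0] at this
        exact this
      exact key r1 hr1 le_rfl hcon (fun x hx hxr => hcon.trans (hall x ⟨hx.le, hxr.le⟩))
    · exact key m hm0 hmI.2 ((hmin (right_mem_Icc.2 hr1.le)).trans hcon)
        (fun x hx hxm => hmin ⟨hx.le, hxm.le.trans hmI.2⟩)
  rw [hGq r1 hr1] at hGr
  exact pos_of_mul_pos_right hGr (by positivity)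

lemma aux_main_s11 {N μ : ℝ} (hN : 1 ≤ N) (hμ : 0 < μ) {h d q : ℝ → ℝ}
    (hc : ContinuousOn h (Ici 0)) (dc : ContinuousOn d (Ici 0))
    (hd : ∀ r, 0 < r → HasDerivAt h (d r) r) (dd : ∀ r, 0 < r → HasDerivAt d (q r) r)
    (ode : ∀ r, 0 < r → 2 * r ^ 2 * h r * q r = N * h r * (h r - 1) + r * d r * (r * d r - N))
    (hpos : ∀ r, 0 ≤ r → 0 < h r) (h0 : h 0 = 1) (d0 : d 0 = μ) :
    Tendsto d atTop atTop ∧ ∀ r, 0 ≤ r → 1 + μ * r ≤ h r := by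
  have hdpos : ∀ r, 0 < r → 0 < d r := by
    intro r1 hr1
    by_contra hcon
    push Not at hcon
    have hcl : IsCompact (Icc 0 r1 ∩ d ⁻¹' Iic 0) := by
      refine isCompact_Icc.of_isClosed_subset ?_ inter_subset_left
      exact (dc.mono (fun x hx => hx.1)).preimage_isClosed_of_isClosed isClosed_Icc isClosed_Iic
    obtain ⟨R, ⟨hR1, hR2⟩, hleast⟩ := hcl.exists_isLeast ⟨r1, ⟨hr1.le, le_rfl⟩, hcon⟩
    have hR2' : d R ≤ 0 := hR2
    have hR0 : 0 < R := by
      rcases hR1.1.eq_or_lt with hh | hh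
      · rw [← hh, d0] at hR2'; linarith
      · exact hh
    have hlt : ∀ r, 0 < r → r < R → 0 < d r := by
      intro r hr hrR
      by_contra hc2
      push Not at hc2
      have := hleast ⟨⟨hr.le, hrR.le.trans hR1.2⟩, hc2⟩
      linarith
    have hq := aux_convex hN hc dc hd dd ode hpos h0 hlt
    have hmono : StrictMonoOn d (Icc 0 R) := by
      refine strictMonoOn_of_deriv_pos (convex_Icc 0 R) (dc.mono (fun x hx => hx.1)) ?_
      intro x hx
      rw [interior_Icc] at hx
      rw [(dd x hx.1).deriv]
      exact hq x hx.1 hx.2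
    have := hmono (left_mem_Icc.2 hR0.le) (right_mem_Icc.2 hR0.le) hR0
    linarith
  have hq : ∀ r, 0 < r → 0 < q r := fun r hr =>
    aux_convex hN hc dc hd dd ode hpos h0 (R := r + 1) (fun x hx _ => hdpos x hx) r hr (by linarith)
  have dmono : MonotoneOn d (Ici 0) := by
    refine monotoneOn_of_deriv_nonneg (convex_Ici 0) dc ?_ ?_
    · intro x hx
      rw [interior_Ici] at hx
      exact (dd x hx).differentiableAt.differentiableWithinAt
    · intro x hx
      rw [interior_Ici] at hx
      rw [(dd x hx).deriv]
      exact (hq x hx).le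
  have dge : ∀ r, 0 ≤ r → μ ≤ d r := fun r hr => d0 ▸ dmono self_mem_Ici hr hr
  have hge : ∀ r, 0 ≤ r → 1 + μ * r ≤ h r := by
    intro r hr
    have hm : MonotoneOn (fun r => h r - μ * r) (Ici 0) := by
      have hder : ∀ x, 0 < x → HasDerivAt (fun r => h r - μ * r) (d x - μ * 1) x := fun x hx =>
        (hd x hx).sub ((hasDerivAt_id' x).const_mul μ)
      refine monotoneOn_of_deriv_nonneg (convex_Ici 0) (by fun_prop) ?_ ?_
      · intro x hx
        rw [interior_Ici] at hx
        exact (hder x hx).differentiableAt.differentiableWithinAt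
      · intro x hx
        rw [interior_Ici] at hx
        rw [(hder x hx).deriv]
        have := dge x (le_of_lt hx)
        linarith
    have := hm self_mem_Ici hr hr
    simp only [h0] at this
    linarith
  refine ⟨?_, hge⟩
  by_contra hnt
  have hL : ∃ L, ∀ r, 0 ≤ r → d r ≤ L := by
    by_contra hcon
    push Not at hcon
    apply hnt
    rw [tendsto_atTop]
    intro b
    obtain ⟨r, hr, hb⟩ := hcon b
    filter_upwards [eventually_ge_atTop r] with x hx
    exact hb.le.trans (dmono hr (hr.trans hx) hx)
  obtain ⟨L, hL⟩ := hL
  have hLμ : μ ≤ L := d0 ▸ hL 0 le_rfl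
  have hL0 : 0 < L := hμ.trans_le hLμ
  set r0 := 2 * L / μ ^ 2 with hr0
  have hr0p : 0 < r0 := by positivity
  have hqb : ∀ r, r0 ≤ r → μ / 4 / r ≤ q r := by
    intro r hr
    have hrp : 0 < r := hr0p.trans_le hr
    have e := ode r hrp
    have hh := hge r hrp.le
    have hp := hpos r hrp.le
    have hdl := hL r hrp.le
    have hdp := hdpos r hrp
    have hrL : 2 * L ≤ r * μ ^ 2 := by
      rw [hr0, div_le_iff₀ (by positivity)] at hr
      exact hr
    -- r d ≤ r L ≤ h * (μ r / 2)
    have k1 : r * d r ≤ h r * (μ * r / 2) := by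
      have a1 : r * d r ≤ r * L := by gcongr
      have a2 : μ * r * (μ * r / 2) ≤ h r * (μ * r / 2) := by
        apply mul_le_mul_of_nonneg_right _ (by positivity)
        linarith
      nlinarith
    have k2 : h r * (μ * r) ≤ h r * (h r - 1) := by
      apply mul_le_mul_of_nonneg_left _ hp.le
      linarith
    have k3 : h r * (μ * r / 2) ≤ h r * (2 * r ^ 2 * q r) := by
      have k4 : 0 ≤ h r * (h r - 1) - r * d r - h r * (μ * r / 2) := by linarith
      have k5 : 0 ≤ h r * (μ * r / 2) := by positivity
      have k6 := mul_nonneg (by linarith : (0:ℝ) ≤ N) k4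
      have k7 := mul_nonneg (by linarith : (0:ℝ) ≤ N - 1) k5
      nlinarith [sq_nonneg (r * d r)]
    have k8 := le_of_mul_le_mul_left k3 hp
    rw [div_le_iff₀ hrp]
    have k9 : r * (μ / 4) ≤ r * (q r * r) := by nlinarith
    exact le_of_mul_le_mul_left k9 hrp
  have hm : MonotoneOn (fun r => d r - μ / 4 * Real.log r) (Ici r0) := by
    have hder : ∀ x, r0 ≤ x →
        HasDerivAt (fun r => d r - μ / 4 * Real.log r) (q x - μ / 4 * x⁻¹) x := fun x hx =>
      (dd x (hr0p.trans_le hx)).sub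
        ((Real.hasDerivAt_log (hr0p.trans_le hx).ne').const_mul (μ / 4))
    refine monotoneOn_of_deriv_nonneg (convex_Ici r0)
      (fun x hx => (hder x hx).continuousAt.continuousWithinAt) ?_ ?_
    · intro x hx
      rw [interior_Ici] at hx
      exact (hder x (le_of_lt hx)).differentiableAt.differentiableWithinAt
    · intro x hx
      rw [interior_Ici] at hx
      rw [(hder x (le_of_lt hx)).deriv]
      have := hqb x (le_of_lt hx)
      rw [div_eq_mul_inv _ x] at this
      linarith
  apply hnt
  have hlog : Tendsto (fun r => μ / 4 * Real.log r + (d r0 - μ / 4 * Real.log r0)) atTop atTop :=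
    tendsto_atTop_add_const_right _ _ (Real.tendsto_log_atTop.const_mul_atTop (by positivity))
  refine tendsto_atTop_mono' _ ?_ hlog
  filter_upwards [eventually_ge_atTop r0] with x hx
  have := hm self_mem_Ici hx hx
  simp only at this
  linarith

theorem steady_positive_slope (μ₁ : ℝ) (n : ℕ) (hn2 : 2 ≤ n) (hμ : 0 < μ₁)
    (h : ℝ → ℝ) (hsol : IsSteadySol n μ₁ h) :
    Filter.Tendsto (deriv h) Filter.atTop Filter.atTop ∧
    Filter.Tendsto h Filter.atTop Filter.atTop ∧
    ∀ r : ℝ, 0 < r → 1 + μ₁ * r ≤ h r := by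
  obtain ⟨c2, c1, ode, h0, d0⟩ := hsol
  have hN : (1 : ℝ) ≤ (n : ℝ) - 1 := by
    have : (2 : ℝ) ≤ n := by exact_mod_cast hn2
    linarith
  have heq : ∀ r, 0 < r → derivWithin h (Ici 0) r = deriv h r := fun r hr =>
    derivWithin_of_mem_nhds (Ici_mem_nhds hr)
  have hd : ∀ r, 0 < r → HasDerivAt h (derivWithin h (Ici 0) r) r := by
    intro r hr
    rw [heq r hr]
    exact ((c2.differentiableOn (by norm_num)).differentiableAt (Ioi_mem_nhds hr)).hasDerivAt
  have hcd : ContDiffOn ℝ 1 (deriv h) (Ioi 0) := c2.deriv_of_isOpen isOpen_Ioi (by norm_num)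
  have dd : ∀ r, 0 < r → HasDerivAt (derivWithin h (Ici 0)) (deriv (deriv h) r) r := by
    intro r hr
    have := ((hcd.differentiableOn (by norm_num)).differentiableAt (Ioi_mem_nhds hr)).hasDerivAt
    refine this.congr_of_eventuallyEq ?_
    filter_upwards [Ioi_mem_nhds hr] with x hx
    exact heq x hx
  have dc : ContinuousOn (derivWithin h (Ici 0)) (Ici 0) :=
    c1.continuousOn_derivWithin (uniqueDiffOn_Ici 0) le_rfl
  obtain ⟨t, hge⟩ := aux_main_s11 hN hμ c1.continuousOn dc hd dd
    (fun r hr => by rw [heq r hr]; exact (ode r hr).1)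
    (fun r hr => by
      rcases hr.eq_or_lt with e | e
      · rw [← e, h0]; norm_num
      · exact (ode r e).2) h0 d0
  refine ⟨?_, ?_, fun r hr => hge r hr.le⟩
  · refine t.congr' ?_
    filter_upwards [eventually_gt_atTop 0] with x hx
    exact heq x hx
  · have hlin : Tendsto (fun r => 1 + μ₁ * r) atTop atTop :=
      tendsto_atTop_add_const_left _ _ (tendsto_id.const_mul_atTop hμ)
    refine tendsto_atTop_mono' _ ?_ hlin
    filter_upwards [eventually_ge_atTop 0] with x hx
    exact hge x hx
end

section
/- Let λ ∈ ℝ, 0 ≤ a < b, and let n ≥ 2 be an integer. Let h ∈ C²((a,b)) be a solution of 2r²h(r)h''(r) = (n-1)h(r)(h(r)-1) + r h'(r)(r h'(r) - λr - (n-1)) with h(r) > 0 on (a,b). Then: (i) if there exists x₀ ∈ (a,b) such that h'(x₀) ≥ 0 and h(x₀) > 1, then h'(x) > 0 for all x ∈ (x₀,b); (ii) if there exists x₀ ∈ (a,b) such that h'(x₀) ≤ 0 and h(x₀) < 1, then h'(x) < 0 for all x ∈ (x₀,b). -/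
open Set Filter Topology

lemma aux_core (f g : ℝ → ℝ) (x₀ x : ℝ) (hx : x₀ < x)
    (hf : ∀ r ∈ Icc x₀ x, HasDerivAt f (g r) r)
    (hg : ∀ r ∈ Icc x₀ x, DifferentiableAt ℝ g r)
    (hf0 : 0 < f x₀) (hg0 : 0 ≤ g x₀)
    (hz : ∀ r ∈ Icc x₀ x, g r = 0 → 0 < f r → 0 < deriv g r) : 0 < g x := by
  by_contra hneg
  push Not at hneg
  have hc : ContinuousOn f (Icc x₀ x) := fun r hr => (hf r hr).continuousAt.continuousWithinAt
  obtain ⟨y, hy, hmax⟩ := isCompact_Icc.exists_isMaxOn (nonempty_Icc.2 hx.le) hc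
  have hfy : 0 < f y := lt_of_lt_of_le hf0 (hmax (left_mem_Icc.2 hx.le))
  have R : y < x → (∀ᶠ z in 𝓝[>] y, 0 < g z) → False := by
    intro hyx he
    obtain ⟨u, hu, hu2⟩ := (mem_nhdsGT_iff_exists_Ioo_subset' hyx).1 he
    have hu : y < u := hu
    obtain ⟨z, hz1, hz2⟩ := exists_between (lt_min hu hyx)
    have hzu := lt_of_lt_of_le hz2 (min_le_left _ _)
    have hzx := lt_of_lt_of_le hz2 (min_le_right _ _)
    obtain ⟨c, hc1, hc2⟩ := exists_hasDerivAt_eq_slope f g hz1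
      (hc.mono (Icc_subset_Icc hy.1 hzx.le))
      (fun r hr => hf r ⟨hy.1.trans hr.1.le, hr.2.le.trans hzx.le⟩)
    have h1 : 0 < g c := hu2 ⟨hc1.1, hc1.2.trans hzu⟩
    have h2 : f z ≤ f y := hmax ⟨hy.1.trans hz1.le, hzx.le⟩
    rw [hc2] at h1
    have := (div_pos_iff_of_pos_right (sub_pos.2 hz1)).1 h1
    linarith
  have L : x₀ < y → (∀ᶠ z in 𝓝[<] y, g z < 0) → False := by
    intro hyx he
    obtain ⟨u, hu, hu2⟩ := (mem_nhdsLT_iff_exists_Ioo_subset' hyx).1 he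
    have hu : u < y := hu
    obtain ⟨z, hz2, hz1⟩ := exists_between (max_lt hu hyx)
    have hzu := lt_of_le_of_lt (le_max_left _ _) hz2
    have hzx := lt_of_le_of_lt (le_max_right _ _) hz2
    obtain ⟨c, hc1, hc2⟩ := exists_hasDerivAt_eq_slope f g hz1
      (hc.mono (Icc_subset_Icc hzx.le hy.2))
      (fun r hr => hf r ⟨hzx.le.trans hr.1.le, hr.2.le.trans hy.2⟩)
    have h1 : g c < 0 := hu2 ⟨hzu.trans hc1.1, hc1.2⟩
    have h2 : f z ≤ f y := hmax ⟨hzx.le, hz1.le.trans hy.2⟩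
    rw [hc2] at h1
    have : 0 ≤ (f y - f z) / (y - z) := div_nonneg (by linarith) (by linarith)
    linarith
  have hgc := (hg y hy).continuousAt
  have h0 : g y = 0 := by
    rcases lt_trichotomy (g y) 0 with hlt | h | hgt
    · rcases hy.1.eq_or_lt with h | h
      · rw [h] at hg0; linarith
      · exact (L h ((hgc.eventually_lt_const hlt).filter_mono nhdsWithin_le_nhds)).elim
    · exact h
    · rcases hy.2.eq_or_lt with h | h
      · rw [← h] at hneg; linarith
      · exact (R h ((hgc.eventually_const_lt hgt).filter_mono nhdsWithin_le_nhds)).elim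
  have hd := hz y hy h0 hfy
  have hs := (hasDerivAt_iff_tendsto_slope.1 (hg y hy).hasDerivAt).eventually_const_lt hd
  rcases hy.2.eq_or_lt with h | h
  · refine L (h ▸ hx) ?_
    have hs' := hs.filter_mono (nhdsWithin_mono y (fun z (hz : z < y) => hz.ne))
    filter_upwards [hs', self_mem_nhdsWithin] with z h1 h2
    have h2 : z < y := h2
    rw [slope_def_field, h0, sub_zero] at h1
    by_contra h3
    push Not at h3
    exact absurd h1 (not_lt.2 (div_nonpos_of_nonneg_of_nonpos h3 (by linarith)))
  · refine R h ?_
    have hs' := hs.filter_mono (nhdsWithin_mono y (fun z (hz : y < z) => hz.ne'))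
    filter_upwards [hs', self_mem_nhdsWithin] with z h1 h2
    have h2 : y < z := h2
    rw [slope_def_field, h0, sub_zero] at h1
    exact (div_pos_iff_of_pos_right (sub_pos.2 h2)).1 h1

theorem monotonicity_lemma (lam : ℝ) (a b : ℝ) (n : ℕ) (ha : 0 ≤ a) (hab : a < b)
    (hn2 : 2 ≤ n) (h : ℝ → ℝ)
    (hreg : ContDiffOn ℝ 2 h (Set.Ioo a b))
    (hode : ∀ r ∈ Set.Ioo a b,
      2 * r ^ 2 * h r * deriv (deriv h) r =
        ((n : ℝ) - 1) * h r * (h r - 1) +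
          r * deriv h r * (r * deriv h r - lam * r - ((n : ℝ) - 1)))
    (hpos : ∀ r ∈ Set.Ioo a b, 0 < h r) :
    (∀ x₀ ∈ Set.Ioo a b, 0 ≤ deriv h x₀ → 1 < h x₀ →
      ∀ x ∈ Set.Ioo x₀ b, 0 < deriv h x) ∧
    (∀ x₀ ∈ Set.Ioo a b, deriv h x₀ ≤ 0 → h x₀ < 1 →
      ∀ x ∈ Set.Ioo x₀ b, deriv h x < 0) := by
  have hn : (0 : ℝ) < (n : ℝ) - 1 := by
    have : (2 : ℝ) ≤ n := by exact_mod_cast hn2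
    linarith
  have d1 : ∀ r ∈ Ioo a b, HasDerivAt h (deriv h r) r := fun r hr =>
    ((hreg.contDiffAt (isOpen_Ioo.mem_nhds hr)).differentiableAt (by norm_num)).hasDerivAt
  have d2 : ∀ r ∈ Ioo a b, DifferentiableAt ℝ (deriv h) r := fun r hr =>
    ((hreg.deriv_of_isOpen (m := 1) isOpen_Ioo (by norm_num)).contDiffAt
      (isOpen_Ioo.mem_nhds hr)).differentiableAt (by norm_num)
  have key : ∀ r ∈ Ioo a b, deriv h r = 0 →
      2 * r ^ 2 * deriv (deriv h) r = ((n : ℝ) - 1) * (h r - 1) := by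
    intro r hr h0
    have e := hode r hr
    rw [h0] at e
    apply mul_left_cancel₀ (hpos r hr).ne'
    linear_combination e
  constructor
  · intro x₀ hx₀ h1 h2 x hx
    have sub : ∀ r ∈ Icc x₀ x, r ∈ Ioo a b := fun r hr =>
      ⟨hx₀.1.trans_le hr.1, hr.2.trans_lt hx.2⟩
    refine aux_core (fun r => h r - 1) (deriv h) x₀ x hx.1
      (fun r hr => (d1 r (sub r hr)).sub_const 1) (fun r hr => d2 r (sub r hr))
      (sub_pos.2 h2) h1 ?_
    intro r hr h0 hp
    have e := key r (sub r hr) h0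
    have hr0 : 0 < r := ha.trans_lt (sub r hr).1
    have : 0 < 2 * r ^ 2 * deriv (deriv h) r := e ▸ mul_pos hn hp
    exact pos_of_mul_pos_right this (by positivity)
  · intro x₀ hx₀ h1 h2 x hx
    have sub : ∀ r ∈ Icc x₀ x, r ∈ Ioo a b := fun r hr =>
      ⟨hx₀.1.trans_le hr.1, hr.2.trans_lt hx.2⟩
    have := aux_core (fun r => 1 - h r) (fun r => - deriv h r) x₀ x hx.1
      (fun r hr => (d1 r (sub r hr)).const_sub 1) (fun r hr => (d2 r (sub r hr)).neg)
      (sub_pos.2 h2) (by linarith) ?_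
    · linarith
    intro r hr h0 hp
    have e := key r (sub r hr) (by linarith)
    have hr0 : 0 < r := ha.trans_lt (sub r hr).1
    have hp : 0 < 1 - h r := hp
    have hm := mul_pos hn hp
    have : 0 < 2 * r ^ 2 * (- deriv (deriv h) r) := by linarith
    rw [(d2 r (sub r hr)).hasDerivAt.fun_neg.deriv]
    exact pos_of_mul_pos_right this (by positivity)
end
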